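/- arXiv:math/0603636 — 4 statements merged into one kernel-verified Lean document; each statement's English description precedes it below -/
import Mathlib

section
/- Let α ∈ (0,1/2), p ∈ (2, 1/α), and let b ∈ Λ^α_T with representative φ_b ∈ L^p([0,T]). For t ∈ [0,T] let φ_t ∈ L²([0,T]) denote the representative of b·1_{[0,t]} ∈ Λ^α_T. Then for every δ with 0 < δ < min( (p-2)/(2p), α, (1-αp)/p ) there exists a constant C, depending only on α, p, δ and T, such that for every n ≥ 1 and all 0 ≤ s ≤ t ≤ T, ( ∫_{[0,T]^n} | ∏_{i=1}^n φ_t(u_i) − ∏_{i=1}^n φ_s(u_i) |² du_1⋯du_n )^{1/2} ≤ 2^{n-1} C^n ‖φ_b‖_{L^p([0,T])}^n (t-s)^{δ}. -/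
open MeasureTheory Real Set

/-- The right-sided fractional integral of order `α` on `[0,T]`. -/
noncomputable def fracInt (T α : ℝ) (f : ℝ → ℝ) (x : ℝ) : ℝ :=
  (1 / Real.Gamma α) * ∫ u in Set.Ioo x T, f u * (u - x) ^ (α - 1)

/-- `f ∈ Λ^α_T` with representative `φ`. -/
def memLambda (T α : ℝ) (f φ : ℝ → ℝ) : Prop :=
  MemLp φ 2 (volume.restrict (Set.Icc 0 T)) ∧
  ∀ᵐ u ∂(volume.restrict (Set.Icc 0 T)),
    f u = u ^ α * fracInt T α (fun s => s ^ (-α) * φ s) u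

/-
Abel's transform of the equation defining the representative `ψ` of `b * 1_[0, s]`, combined with
Fubini's theorem, shows that `ψ` vanishes on the right of `s` and that on the left it is the
representative `φ` of `b` plus the part of `φ` on `(s, T)` swept to the left by the kernel
`((v - s) / (s - x))^α / (v - x)`, up to a constant and the factor `(x / v)^α ≤ 1`. This kernel is
homogeneous of degree `-1` in `(s - x, v - s)`, so it is bounded on `L^q` for `α < 1 / q`, as in
Hilbert's inequality; hence truncation is bounded on `L^q`, uniformly in `s`.

Since `φ_s` is the truncation at `s` of `φ_t`, which vanishes beyond `t`, the norm of `φ_t - φ_s` in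
`L²` is controlled by that of `φ_t` in `L²(s, t)`, and Hölder's inequality produces the factor
`(t - s)^(1/2 - 1/p)`. Tensor powers follow by telescoping the product and `n ≤ 2^(n - 1)`.
-/

namespace FracTrunc

open ProbabilityTheory (beta beta_pos)

section Beta

theorem lintegral_Ioo_rpow_mul_rpow {a b y u : ℝ} (ha : 0 < a) (hb : 0 < b) (hyu : y < u) :
    ∫⁻ x in Ioo y u, ENNReal.ofReal ((x - y) ^ (a - 1) * (u - x) ^ (b - 1)) =
      ENNReal.ofReal ((u - y) ^ (a + b - 1) * beta a b) := by
  have hd : 0 < u - y := sub_pos.2 hyu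
  have hβ := beta_pos ha hb
  have himage : Ioo y u = (fun x => (u - y) * x + y) '' Ioo 0 1 := by
    rw [image_affine_Ioo hd, mul_zero, zero_add, mul_one, sub_add_cancel]
  have hderiv (x : ℝ) : HasDerivAt (fun x => (u - y) * x + y) (u - y) x := by
    simpa using ((hasDerivAt_id x).const_mul (u - y)).add_const y
  have hmono : Monotone fun x => (u - y) * x + y :=
    (monotone_id.const_mul hd.le).add_const y
  rw [himage, lintegral_image_eq_lintegral_deriv_mul_of_monotoneOn measurableSet_Ioo
    (fun x _ => (hderiv x).hasDerivWithinAt) (hmono.monotoneOn _)]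
  calc ∫⁻ x in Ioo 0 1, ENNReal.ofReal (u - y) * ENNReal.ofReal
          (((u - y) * x + y - y) ^ (a - 1) * (u - ((u - y) * x + y)) ^ (b - 1))
      = ∫⁻ x in Ioo 0 1, ENNReal.ofReal ((u - y) ^ (a + b - 1) * beta a b) *
          ENNReal.ofReal (1 / beta a b * x ^ (a - 1) * (1 - x) ^ (b - 1)) := by
        refine setLIntegral_congr_fun measurableSet_Ioo fun x hx => ?_
        have hx1 : 0 < 1 - x := sub_pos.2 hx.2
        have hpow : (u - y) ^ (a + b - 1) = (u - y) * (u - y) ^ (a - 1) * (u - y) ^ (b - 1) := by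
          rw [show a + b - 1 = 1 + (a - 1) + (b - 1) by ring, rpow_add hd, rpow_add hd, rpow_one]
        rw [← ENNReal.ofReal_mul hd.le, ← ENNReal.ofReal_mul (by positivity), add_sub_cancel_right,
          show u - ((u - y) * x + y) = (u - y) * (1 - x) by ring, mul_rpow hd.le hx.1.le,
          mul_rpow hd.le hx1.le, hpow]
        field_simp
    _ = ENNReal.ofReal ((u - y) ^ (a + b - 1) * beta a b) := by
        rw [lintegral_const_mul' _ _ ENNReal.ofReal_ne_top, ← ProbabilityTheory.lintegral_betaPDF,
          ProbabilityTheory.lintegral_betaPDF_eq_one ha hb, mul_one]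

end Beta

section Kernels

variable {α y s x u v : ℝ}

/-- The kernel `(x - y)^(-α) (u - x)^(α - 1)` on `y < x < u`, which arises when Abel's transform
`∫_y (x - y)^(-α) ⋯ dx` is applied to a fractional integral of order `α`. -/
noncomputable def abelKernel (α y x u : ℝ) : ℝ :=
  if y < x ∧ x < u then (x - y) ^ (-α) * (u - x) ^ (α - 1) else 0

/-- The kernel `((v - s) / (s - x))^α / (v - x)`, for `x < s < v`, through which cutting a function
off at `s` changes its inverse fractional integral on the left of `s`. -/
noncomputable def truncKernel (α s x v : ℝ) : ℝ :=
  ((v - s) / (s - x)) ^ α / (v - x)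

theorem measurable_abelKernel (α y : ℝ) : Measurable (Function.uncurry (abelKernel α y)) :=
  Measurable.ite ((measurableSet_lt measurable_const measurable_fst).inter
    (measurableSet_lt measurable_fst measurable_snd)) (by fun_prop) measurable_const

theorem measurable_truncKernel (α s : ℝ) : Measurable (Function.uncurry (truncKernel α s)) := by
  unfold truncKernel Function.uncurry
  fun_prop

theorem abelKernel_nonneg : 0 ≤ abelKernel α y x u := by
  unfold abelKernel
  split_ifs with h
  · exact mul_nonneg (rpow_nonneg (sub_pos.2 h.1).le _) (rpow_nonneg (sub_pos.2 h.2).le _)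
  · exact le_rfl

theorem truncKernel_nonneg (hx : x ≤ s) (hv : s ≤ v) : 0 ≤ truncKernel α s x v :=
  div_nonneg (rpow_nonneg (div_nonneg (sub_nonneg.2 hv) (sub_nonneg.2 hx)) _)
    (sub_nonneg.2 (hx.trans hv))

theorem support_abelKernel_subset :
    (Function.support fun x => ENNReal.ofReal (abelKernel α y x u)) ⊆ Ioo y u := fun x hx => by
  by_contra hmem
  exact hx (show ENNReal.ofReal (abelKernel α y x u) = 0 by
    rw [abelKernel, if_neg (mt mem_Ioo.2 hmem), ENNReal.ofReal_zero])

theorem lintegral_abelKernel (h0 : 0 < α) (h1 : α < 1) (hyu : y < u) :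
    ∫⁻ x, ENNReal.ofReal (abelKernel α y x u) = ENNReal.ofReal (beta (1 - α) α) := by
  rw [← setLIntegral_eq_of_support_subset support_abelKernel_subset]
  calc ∫⁻ x in Ioo y u, ENNReal.ofReal (abelKernel α y x u)
      = ∫⁻ x in Ioo y u, ENNReal.ofReal ((x - y) ^ (1 - α - 1) * (u - x) ^ (α - 1)) :=
        setLIntegral_congr_fun measurableSet_Ioo fun x hx => by
          simp only [abelKernel, if_pos (mem_Ioo.1 hx), show 1 - α - 1 = -α by ring]
    _ = ENNReal.ofReal (beta (1 - α) α) := by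
        rw [lintegral_Ioo_rpow_mul_rpow (sub_pos.2 h1) h0 hyu, sub_add_cancel, sub_self,
          rpow_zero, one_mul]

theorem lintegral_Ioo_comp_moebius (hys : y < s) (hsv : s < v) (F : ℝ → ENNReal) :
    ∫⁻ x in Ioo y s, F x = ∫⁻ x in Ioo y s,
      ENNReal.ofReal ((v - s) * (v - y) / (v - x) ^ 2) * F (v - (v - s) * (v - y) / (v - x)) := by
  set k := (v - s) * (v - y) with hk
  have hs : 0 < v - s := sub_pos.2 hsv
  have hy : 0 < v - y := sub_pos.2 (hys.trans hsv)
  have hk0 : 0 < k := mul_pos hs hy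
  have hx {x : ℝ} (hx : x ∈ Ioo y s) : 0 < v - x := sub_pos.2 (hx.2.trans hsv)
  have hmaps : MapsTo (fun x => v - k / (v - x)) (Ioo y s) (Ioo y s) := fun x hx' => by
    constructor
    · rw [lt_sub_comm, div_lt_iff₀ (hx hx'), hk, mul_comm]
      exact mul_lt_mul_of_pos_left (by linarith [hx'.2]) hy
    · rw [sub_lt_comm, lt_div_iff₀ (hx hx'), hk]
      exact mul_lt_mul_of_pos_left (by linarith [hx'.1]) hs
  have hinvol : LeftInvOn (fun x => v - k / (v - x)) (fun x => v - k / (v - x)) (Ioo y s) :=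
    fun x _ => by simp only [sub_sub_cancel, div_div_cancel₀ hk0.ne']
  have himage : (fun x => v - k / (v - x)) '' Ioo y s = Ioo y s :=
    hmaps.image_subset.antisymm fun x hx' => ⟨_, hmaps hx', hinvol hx'⟩
  have hderiv (x : ℝ) (hx' : x ∈ Ioo y s) :
      HasDerivAt (fun x => v - k / (v - x)) (-(k / (v - x) ^ 2)) x := by
    simpa using (((hasDerivAt_const x k).div ((hasDerivAt_id' x).const_sub v)
      (hx hx').ne').const_sub v)
  have habs (x : ℝ) : |k / (v - x) ^ 2| = k / (v - x) ^ 2 := abs_of_nonneg (by positivity)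
  conv_lhs => rw [← himage, lintegral_image_eq_lintegral_abs_deriv_mul measurableSet_Ioo
    (fun x hx' => (hderiv x hx').hasDerivWithinAt) hinvol.injOn]
  simp only [abs_neg, habs]

theorem moebius_mul_abelKernel {x : ℝ} (hx : x ∈ Ioo y s) (hsv : s < v) :
    (v - s) * (v - y) / (v - x) ^ 2 * abelKernel α y (v - (v - s) * (v - y) / (v - x)) v =
      truncKernel α s x v := by
  have hs : 0 < v - s := sub_pos.2 hsv
  have hy : 0 < v - y := sub_pos.2 ((hx.1.trans hx.2).trans hsv)
  have hvx : 0 < v - x := sub_pos.2 (hx.2.trans hsv)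
  have hsx : 0 < s - x := sub_pos.2 hx.2
  have hsub : v - (v - s) * (v - y) / (v - x) - y = (v - y) * (s - x) / (v - x) := by
    field_simp
    ring
  have hmem : y < v - (v - s) * (v - y) / (v - x) ∧ v - (v - s) * (v - y) / (v - x) < v :=
    ⟨sub_pos.1 (hsub ▸ by positivity), sub_lt_self _ (by positivity)⟩
  rw [abelKernel, if_pos hmem, hsub, sub_sub_cancel, truncKernel, rpow_sub_one (by positivity),
    rpow_neg (by positivity), div_rpow (by positivity) hvx.le, div_rpow (by positivity) hvx.le,
    mul_rpow hy.le hsx.le, mul_rpow hs.le hy.le, div_rpow hs.le hsx.le]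
  have := (rpow_pos_of_pos hy α).ne'
  have := (rpow_pos_of_pos hvx α).ne'
  field_simp

/- The involution `x ↦ v - (v - s)(v - y) / (v - x)` of `(y, s)`, which exchanges the endpoints,
turns one kernel into the other. -/
theorem lintegral_Ioo_abelKernel_eq_truncKernel (hys : y < s) (hsv : s < v) :
    ∫⁻ x in Ioo y s, ENNReal.ofReal (abelKernel α y x v) =
      ∫⁻ x in Ioo y s, ENNReal.ofReal (truncKernel α s x v) := by
  rw [lintegral_Ioo_comp_moebius hys hsv]
  refine setLIntegral_congr_fun measurableSet_Ioo fun x hx => ?_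
  have hjac : 0 ≤ (v - s) * (v - y) / (v - x) ^ 2 :=
    div_nonneg (mul_pos (sub_pos.2 hsv) (sub_pos.2 (hys.trans hsv))).le (sq_nonneg _)
  simp only [← ENNReal.ofReal_mul hjac, moebius_mul_abelKernel hx hsv]

theorem lintegral_Ioo_abelKernel (h0 : 0 < α) (h1 : α < 1) (hyu : y < u) (hus : u ≤ s) :
    ∫⁻ x in Ioo y s, ENNReal.ofReal (abelKernel α y x u) = ENNReal.ofReal (beta (1 - α) α) := by
  rw [setLIntegral_eq_of_support_subset
    (support_abelKernel_subset.trans (Ioo_subset_Ioo_right hus)), lintegral_abelKernel h0 h1 hyu]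

theorem lintegral_Ioo_truncKernel_le (h0 : 0 < α) (h1 : α < 1) (hys : y < s) (hsv : s < v) :
    ∫⁻ x in Ioo y s, ENNReal.ofReal (truncKernel α s x v) ≤ ENNReal.ofReal (beta (1 - α) α) := by
  rw [← lintegral_Ioo_abelKernel_eq_truncKernel hys hsv,
    ← lintegral_abelKernel h0 h1 (hys.trans hsv)]
  exact setLIntegral_le_lintegral _ _

theorem integral_Ioo_abelKernel (h0 : 0 < α) (h1 : α < 1) (hyu : y < u) (hus : u ≤ s) :
    ∫ x in Ioo y s, abelKernel α y x u = beta (1 - α) α := by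
  rw [integral_eq_lintegral_of_nonneg_ae (.of_forall fun _ => abelKernel_nonneg)
    ((measurable_abelKernel α y).of_uncurry_right.aestronglyMeasurable),
    lintegral_Ioo_abelKernel h0 h1 hyu hus,
    ENNReal.toReal_ofReal (beta_pos (sub_pos.2 h1) h0).le]

theorem integral_Ioo_abelKernel_eq_truncKernel (hys : y < s) (hsv : s < v) :
    ∫ x in Ioo y s, abelKernel α y x v = ∫ x in Ioo y s, truncKernel α s x v := by
  rw [integral_eq_lintegral_of_nonneg_ae (.of_forall fun _ => abelKernel_nonneg)
      (measurable_abelKernel α y).of_uncurry_right.aestronglyMeasurable,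
    integral_eq_lintegral_of_nonneg_ae
      ((ae_restrict_iff' measurableSet_Ioo).2 (.of_forall fun _ hx =>
        truncKernel_nonneg hx.2.le hsv.le))
      (measurable_truncKernel α s).of_uncurry_right.aestronglyMeasurable,
    lintegral_Ioo_abelKernel_eq_truncKernel hys hsv]

end Kernels

section Abel

variable {α a y s T : ℝ} {f g : ℝ → ℝ}

theorem integrable_prod_mul_of_lintegral_le {X Y : Type*} [MeasurableSpace X] [MeasurableSpace Y]
    {μ : Measure X} {ν : Measure Y} [SFinite μ] [SFinite ν] {P : X → Y → ℝ} {f : Y → ℝ}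
    {M : ENNReal} (hP : AEStronglyMeasurable (Function.uncurry P) (μ.prod ν)) (hM : M ≠ ⊤)
    (hcol : ∀ᵐ u ∂ν, ∫⁻ x, ‖P x u‖ₑ ∂μ ≤ M) (hf : Integrable f ν) :
    Integrable (Function.uncurry fun x u => P x u * f u) (μ.prod ν) := by
  have hmeas := hP.mul hf.1.comp_snd
  refine ⟨hmeas, ?_⟩
  calc ∫⁻ z, ‖P z.1 z.2 * f z.2‖ₑ ∂μ.prod ν
      = ∫⁻ u, ∫⁻ x, ‖P x u * f u‖ₑ ∂μ ∂ν := lintegral_prod_symm _ hmeas.enorm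
    _ = ∫⁻ u, (∫⁻ x, ‖P x u‖ₑ ∂μ) * ‖f u‖ₑ ∂ν := by
        simp only [enorm_mul, lintegral_mul_const' _ _ enorm_ne_top]
    _ ≤ ∫⁻ u, M * ‖f u‖ₑ ∂ν := lintegral_mono_ae (hcol.mono fun u hu => by gcongr)
    _ = M * ∫⁻ u, ‖f u‖ₑ ∂ν := lintegral_const_mul' _ _ hM
    _ < ⊤ := ENNReal.mul_lt_top hM.lt_top hf.2

theorem integrable_abelKernel_mul (h0 : 0 < α) (h1 : α < 1) (hf : IntegrableOn f (Ioo y T)) :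
    Integrable (Function.uncurry fun x u => abelKernel α y x u * f u)
      ((volume.restrict (Ioo y s)).prod (volume.restrict (Ioo y T))) := by
  refine integrable_prod_mul_of_lintegral_le (measurable_abelKernel α y).aestronglyMeasurable
    (ENNReal.ofReal_ne_top (r := beta (1 - α) α)) ?_ hf
  filter_upwards [ae_restrict_mem measurableSet_Ioo] with u hu
  simp only [Real.enorm_of_nonneg abelKernel_nonneg, ← lintegral_abelKernel h0 h1 hu.1]
  exact setLIntegral_le_lintegral _ _

theorem integrable_truncKernel_mul (h0 : 0 < α) (h1 : α < 1) (hys : y < s)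
    (hf : IntegrableOn f (Ioo s T)) :
    Integrable (Function.uncurry fun x v => truncKernel α s x v * f v)
      ((volume.restrict (Ioo y s)).prod (volume.restrict (Ioo s T))) := by
  refine integrable_prod_mul_of_lintegral_le (measurable_truncKernel α s).aestronglyMeasurable
    (ENNReal.ofReal_ne_top (r := beta (1 - α) α)) ?_ hf
  filter_upwards [ae_restrict_mem measurableSet_Ioo] with v hv
  refine le_of_eq_of_le ?_ (lintegral_Ioo_truncKernel_le h0 h1 hys hv.1)
  exact setLIntegral_congr_fun measurableSet_Ioo fun x hx =>
    Real.enorm_of_nonneg (truncKernel_nonneg hx.2.le hv.1.le)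

theorem Gamma_mul_rpow_mul_fracInt {x : ℝ} (h0 : 0 < α) (hyx : y < x) :
    Gamma α * ((x - y) ^ (-α) * fracInt T α f x) = ∫ u in Ioo y T, abelKernel α y x u * f u := by
  have hsupport : ∫ u in Ioo y T, abelKernel α y x u * f u =
      ∫ u in Ioo x T, abelKernel α y x u * f u :=
    setIntegral_eq_of_subset_of_forall_sdiff_eq_zero measurableSet_Ioo
      (Ioo_subset_Ioo_left hyx.le) fun u hu => by
        rw [abelKernel, if_neg fun h => hu.2 ⟨h.2, hu.1.2⟩, zero_mul]
  calc Gamma α * ((x - y) ^ (-α) * fracInt T α f x)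
      = (x - y) ^ (-α) * ∫ u in Ioo x T, f u * (u - x) ^ (α - 1) := by
        have := (Gamma_pos_of_pos h0).ne'
        unfold fracInt
        field_simp
    _ = ∫ u in Ioo x T, abelKernel α y x u * f u := by
        rw [← integral_const_mul]
        refine setIntegral_congr_fun measurableSet_Ioo fun u hu => ?_
        simp only [abelKernel, if_pos (And.intro hyx hu.1)]
        ring
    _ = ∫ u in Ioo y T, abelKernel α y x u * f u := hsupport.symm

theorem integral_Ioo_add_integral_Ioo (hys : y < s) (hsT : s ≤ T) (hf : IntegrableOn f (Ioo y T)) :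
    ∫ u in Ioo y T, f u = (∫ u in Ioo y s, f u) + ∫ u in Ioo s T, f u := by
  rw [← integrableOn_Ioc_iff_integrableOn_Ioo] at hf
  simp only [← integral_Ioc_eq_integral_Ioo]
  rw [← Ioc_union_Ioc_eq_Ioc hys.le hsT, setIntegral_union (Ioc_disjoint_Ioc_of_le le_rfl)
    measurableSet_Ioc (hf.mono_set (Ioc_subset_Ioc_right hsT))
    (hf.mono_set (Ioc_subset_Ioc_left hys.le))]

theorem Gamma_mul_integral_rpow_mul_fracInt (h0 : 0 < α) (h1 : α < 1) (hys : y < s) (hsT : s ≤ T)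
    (hf : IntegrableOn f (Ioo y T)) :
    Gamma α * ∫ x in Ioo y s, (x - y) ^ (-α) * fracInt T α f x =
      beta (1 - α) α * (∫ u in Ioo y s, f u) +
        ∫ x in Ioo y s, ∫ v in Ioo s T, truncKernel α s x v * f v := by
  have hint := integrable_abelKernel_mul (s := s) h0 h1 hf
  calc Gamma α * ∫ x in Ioo y s, (x - y) ^ (-α) * fracInt T α f x
      = ∫ x in Ioo y s, ∫ u in Ioo y T, abelKernel α y x u * f u := by
        rw [← integral_const_mul]
        exact setIntegral_congr_fun measurableSet_Ioo fun x hx =>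
          Gamma_mul_rpow_mul_fracInt h0 hx.1
    _ = ∫ u in Ioo y T, ∫ x in Ioo y s, abelKernel α y x u * f u := integral_integral_swap hint
    _ = (∫ u in Ioo y s, ∫ x in Ioo y s, abelKernel α y x u * f u) +
          ∫ v in Ioo s T, ∫ x in Ioo y s, abelKernel α y x v * f v :=
        integral_Ioo_add_integral_Ioo hys hsT hint.integral_prod_right
    _ = (∫ u in Ioo y s, beta (1 - α) α * f u) +
          ∫ v in Ioo s T, ∫ x in Ioo y s, truncKernel α s x v * f v := by
        congr 1
        · refine setIntegral_congr_fun measurableSet_Ioo fun u hu => ?_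
          simp only [integral_mul_const, integral_Ioo_abelKernel h0 h1 hu.1 hu.2.le]
        · refine setIntegral_congr_fun measurableSet_Ioo fun v hv => ?_
          simp only [integral_mul_const, integral_Ioo_abelKernel_eq_truncKernel hys hv.1]
    _ = beta (1 - α) α * (∫ u in Ioo y s, f u) +
          ∫ x in Ioo y s, ∫ v in Ioo s T, truncKernel α s x v * f v := by
        rw [integral_const_mul, integral_integral_swap (integrable_truncKernel_mul h0 h1 hys
          (hf.mono_set (Ioo_subset_Ioo_left hys.le)))]

/-- The function whose fractional integral of order `α` is `1_{x < s} · I^α_{T-}(f)`: a function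
vanishing on the right of `s` has this form for a unique density, and the part of `f` on `(s, T)`
is swept onto the left of `s` by `truncKernel`. -/
noncomputable def fracTrunc (T α s : ℝ) (f : ℝ → ℝ) : ℝ → ℝ :=
  (Iio s).indicator fun x =>
    f x + (beta (1 - α) α)⁻¹ * ∫ v in Ioo s T, truncKernel α s x v * f v

theorem integrableOn_truncKernel_integral (h0 : 0 < α) (h1 : α < 1) (hys : y < s)
    (hf : IntegrableOn f (Ioo y T)) :
    IntegrableOn (fun x => (beta (1 - α) α)⁻¹ * ∫ v in Ioo s T, truncKernel α s x v * f v)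
      (Ioo y s) :=
  (integrable_truncKernel_mul h0 h1 hys
    (hf.mono_set (Ioo_subset_Ioo_left hys.le))).integral_prod_left.const_mul _

theorem integrableOn_fracTrunc (h0 : 0 < α) (h1 : α < 1) (hsT : s ≤ T)
    (hf : IntegrableOn f (Ioo y T)) : IntegrableOn (fracTrunc T α s f) (Ioo y T) := by
  rw [fracTrunc, IntegrableOn, integrable_indicator_iff measurableSet_Iio, IntegrableOn,
    Measure.restrict_restrict measurableSet_Iio, Iio_inter_Ioo, min_eq_left hsT]
  rcases lt_or_ge y s with hys | hsy
  · exact (hf.mono_set (Ioo_subset_Ioo_right hsT)).add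
      (integrableOn_truncKernel_integral h0 h1 hys hf)
  · simp only [Ioo_eq_empty_of_le hsy, Measure.restrict_empty, integrable_zero_measure]

theorem setIntegral_Ioo_indicator_Iio (hsT : s ≤ T) (F : ℝ → ℝ) :
    ∫ x in Ioo y T, (Iio s).indicator F x = ∫ x in Ioo y s, F x := by
  rw [setIntegral_indicator measurableSet_Iio, Ioo_inter_Iio, min_eq_right hsT]

theorem beta_mul_integral_fracTrunc (h0 : 0 < α) (h1 : α < 1) (hsT : s ≤ T)
    (hf : IntegrableOn f (Ioo y T)) :
    beta (1 - α) α * ∫ x in Ioo y T, fracTrunc T α s f x =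
      Gamma α * ∫ x in Ioo y T, (x - y) ^ (-α) * (Iio s).indicator (fracInt T α f) x := by
  have hmul (x : ℝ) : (x - y) ^ (-α) * (Iio s).indicator (fracInt T α f) x =
      (Iio s).indicator (fun x => (x - y) ^ (-α) * fracInt T α f x) x :=
    (indicator_mul_right _ (fun x => (x - y) ^ (-α)) _).symm
  simp only [hmul]
  rw [fracTrunc, setIntegral_Ioo_indicator_Iio hsT, setIntegral_Ioo_indicator_Iio hsT]
  rcases lt_or_ge y s with hys | hsy
  · rw [Gamma_mul_integral_rpow_mul_fracInt h0 h1 hys hsT hf,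
      integral_add (hf.mono_set (Ioo_subset_Ioo_right hsT))
        (integrableOn_truncKernel_integral h0 h1 hys hf), integral_const_mul, mul_add,
      mul_inv_cancel_left₀ (beta_pos (sub_pos.2 h1) h0).ne']
  · simp only [Ioo_eq_empty_of_le hsy, Measure.restrict_empty, integral_zero_measure, mul_zero]

theorem beta_mul_integral (h0 : 0 < α) (h1 : α < 1) (hyT : y < T)
    (hf : IntegrableOn f (Ioo y T)) :
    beta (1 - α) α * ∫ x in Ioo y T, f x =
      Gamma α * ∫ x in Ioo y T, (x - y) ^ (-α) * fracInt T α f x := by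
  rw [Gamma_mul_integral_rpow_mul_fracInt h0 h1 hyT le_rfl hf]
  simp only [Ioo_self, Measure.restrict_empty, integral_zero_measure, integral_zero, add_zero]

theorem ae_eq_zero_of_forall_integral_Ioo_eq_zero (hf : IntegrableOn f (Ioo a T))
    (hzero : ∀ y ∈ Ioo a T, ∫ x in Ioo y T, f x = 0) :
    ∀ᵐ x ∂volume.restrict (Ioo a T), f x = 0 := by
  rcases le_or_gt T a with hTa | haT
  · simp [Ioo_eq_empty_of_le hTa]
  have hii : IntervalIntegrable f volume a T :=
    (intervalIntegrable_iff_integrableOn_Ioo_of_le haT.le).2 hf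
  rw [ae_restrict_iff' measurableSet_Ioo]
  filter_upwards [hii.ae_hasDerivAt_integral] with x hderiv hx
  rw [uIcc_of_le haT.le] at hderiv
  refine (hderiv (Ioo_subset_Icc_self hx) T (right_mem_Icc.2 haT.le)).unique ?_
  refine (hasDerivAt_const x (0 : ℝ)).congr_of_eventuallyEq ?_
  filter_upwards [Ioo_mem_nhds hx.1 hx.2] with y hy
  rw [intervalIntegral.integral_symm, intervalIntegral.integral_of_le hy.2.le,
    integral_Ioc_eq_integral_Ioo, hzero y hy, neg_zero]

theorem ae_eq_fracTrunc (h0 : 0 < α) (h1 : α < 1) (hsT : s ≤ T) (hf : IntegrableOn f (Ioo a T))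
    (hg : IntegrableOn g (Ioo a T))
    (hfg : ∀ᵐ x ∂volume.restrict (Ioo a T),
      fracInt T α g x = (Iio s).indicator (fracInt T α f) x) :
    ∀ᵐ x ∂volume.restrict (Ioo a T), g x = fracTrunc T α s f x := by
  have hzero : ∀ᵐ x ∂volume.restrict (Ioo a T), (g - fracTrunc T α s f) x = 0 := by
    refine ae_eq_zero_of_forall_integral_Ioo_eq_zero
      (hg.sub (integrableOn_fracTrunc h0 h1 hsT hf)) fun y hy => ?_
    have hsub : Ioo y T ⊆ Ioo a T := Ioo_subset_Ioo_left hy.1.le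
    have hfy := hf.mono_set hsub
    have hgy := hg.mono_set hsub
    have hAbel : ∫ x in Ioo y T, (x - y) ^ (-α) * fracInt T α g x =
        ∫ x in Ioo y T, (x - y) ^ (-α) * (Iio s).indicator (fracInt T α f) x :=
      integral_congr_ae ((ae_restrict_of_ae_restrict_of_subset hsub hfg).mono fun x hx => by
        simp only [hx])
    have heq : ∫ x in Ioo y T, g x = ∫ x in Ioo y T, fracTrunc T α s f x := by
      refine mul_left_cancel₀ (beta_pos (sub_pos.2 h1) h0).ne' ?_
      rw [beta_mul_integral h0 h1 hy.2 hgy, hAbel, beta_mul_integral_fracTrunc h0 h1 hsT hfy]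
    rw [integral_sub' hgy (integrableOn_fracTrunc h0 h1 hsT hfy), heq, sub_self]
  exact hzero.mono fun x hx => sub_eq_zero.1 hx

end Abel

section Hilbert

open scoped ENNReal

theorem rpow_lintegral_mul_le {X : Type*} [MeasurableSpace X] {μ : Measure X} {w g : X → ℝ≥0∞}
    (hw : AEMeasurable w μ) (hg : AEMeasurable g μ) {r : ℝ} (hr : 1 ≤ r) :
    (∫⁻ x, w x * g x ∂μ) ^ r ≤ (∫⁻ x, w x ∂μ) ^ (r - 1) * ∫⁻ x, w x * g x ^ r ∂μ := by
  have hr0 : 0 < r := one_pos.trans_le hr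
  have hgw : AEMeasurable g (μ.withDensity w) := hg.mono_ac (withDensity_absolutelyContinuous _ _)
  have hpow := ENNReal.rpow_le_rpow
    (eLpNorm'_le_eLpNorm'_mul_rpow_measure_univ one_pos hr hgw.aestronglyMeasurable) hr0.le
  simp only [eLpNorm', enorm_eq_self, ENNReal.rpow_one, ne_eq, one_ne_zero, not_false_eq_true,
    div_self, withDensity_apply _ MeasurableSet.univ, Measure.restrict_univ,
    lintegral_withDensity_eq_lintegral_mul₀ hw hg,
    lintegral_withDensity_eq_lintegral_mul₀ hw (hg.pow_const r), Pi.mul_apply] at hpow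
  rwa [ENNReal.mul_rpow_of_nonneg _ _ hr0.le, ← ENNReal.rpow_mul, ← ENNReal.rpow_mul,
    one_div_mul_cancel hr0.ne', ENNReal.rpow_one, sub_mul, one_mul, one_div_mul_cancel hr0.ne',
    mul_comm] at hpow

theorem lintegral_Ioi_comp_mul_left {c : ℝ} (hc : 0 < c) (F : ℝ → ℝ≥0∞) :
    ENNReal.ofReal c * ∫⁻ z in Ioi 0, F (c * z) = ∫⁻ z in Ioi 0, F z := by
  have himage : (c * ·) '' Ioi 0 = Ioi 0 := by rw [image_mul_left_Ioi hc, mul_zero]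
  conv_rhs => rw [← himage]
  rw [lintegral_image_eq_lintegral_deriv_mul_of_monotoneOn measurableSet_Ioi
    (fun x _ => (hasDerivAt_const_mul c).hasDerivWithinAt)
    ((monotone_id.const_mul hc.le).monotoneOn _), lintegral_const_mul' _ _ ENNReal.ofReal_ne_top]

/- Hölder's inequality with respect to the weight `k z * z ^ (-1 / r)`. -/
theorem rpow_lintegral_Ioi_mul_le {k g : ℝ → ℝ≥0∞} (hk : Measurable k) (hg : Measurable g) {r : ℝ}
    (hr : 1 ≤ r) :
    (∫⁻ z in Ioi (0 : ℝ), k z * g z) ^ r ≤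
      (∫⁻ z in Ioi (0 : ℝ), k z * ENNReal.ofReal z ^ (-(1 / r))) ^ (r - 1) *
        ∫⁻ z in Ioi (0 : ℝ),
          k z * ENNReal.ofReal z ^ (-(1 / r)) * (ENNReal.ofReal z * g z ^ r) := by
  have hr0 : 0 < r := one_pos.trans_le hr
  have hsplit : ∫⁻ z in Ioi (0 : ℝ), k z * g z = ∫⁻ z in Ioi (0 : ℝ),
      k z * ENNReal.ofReal z ^ (-(1 / r)) * (ENNReal.ofReal z ^ (1 / r) * g z) :=
    setLIntegral_congr_fun measurableSet_Ioi fun z hz => by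
      rw [mul_assoc, ← mul_assoc (_ ^ _),
        ← ENNReal.rpow_add _ _ (ENNReal.ofReal_pos.2 hz).ne' ENNReal.ofReal_ne_top,
        neg_add_cancel, ENNReal.rpow_zero, one_mul]
  rw [hsplit]
  refine (rpow_lintegral_mul_le (by fun_prop) (by fun_prop) hr).trans_eq ?_
  simp only [ENNReal.mul_rpow_of_nonneg _ _ hr0.le, ← ENNReal.rpow_mul,
    one_div_mul_cancel hr0.ne', ENNReal.rpow_one]

theorem lintegral_rpow_lintegral_mul_comp_mul_le {k h : ℝ → ℝ≥0∞} (hk : Measurable k)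
    (hh : Measurable h) {r : ℝ} (hr : 1 ≤ r) :
    ∫⁻ y in Ioi (0 : ℝ), (∫⁻ z in Ioi 0, k z * h (y * z)) ^ r ≤
      (∫⁻ z in Ioi 0, k z * ENNReal.ofReal z ^ (-(1 / r))) ^ r * ∫⁻ z in Ioi 0, h z ^ r := by
  set w : ℝ → ℝ≥0∞ := fun z => k z * ENNReal.ofReal z ^ (-(1 / r))
  have hw : Measurable w := by fun_prop
  have hdil (z : ℝ) (hz : z ∈ Ioi (0 : ℝ)) :
      ∫⁻ y in Ioi 0, w z * (ENNReal.ofReal z * h (y * z) ^ r) =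
        w z * ∫⁻ y in Ioi 0, h y ^ r := by
    rw [lintegral_const_mul _ (by fun_prop), lintegral_const_mul _ (by fun_prop),
      ← lintegral_Ioi_comp_mul_left hz fun y => h y ^ r]
    simp only [mul_comm z]
  have hpow : (∫⁻ z in Ioi 0, w z) ^ (r - 1) * ∫⁻ z in Ioi 0, w z = (∫⁻ z in Ioi 0, w z) ^ r := by
    simpa using (ENNReal.rpow_add_of_nonneg (x := ∫⁻ z in Ioi 0, w z) _ _ (sub_nonneg.2 hr)
      zero_le_one).symm
  calc ∫⁻ y in Ioi (0 : ℝ), (∫⁻ z in Ioi 0, k z * h (y * z)) ^ r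
      ≤ ∫⁻ y in Ioi (0 : ℝ), (∫⁻ z in Ioi 0, w z) ^ (r - 1) *
          ∫⁻ z in Ioi 0, w z * (ENNReal.ofReal z * h (y * z) ^ r) :=
        lintegral_mono fun y => rpow_lintegral_Ioi_mul_le hk (by fun_prop) hr
    _ = (∫⁻ z in Ioi 0, w z) ^ (r - 1) *
          ∫⁻ z in Ioi 0, ∫⁻ y in Ioi (0 : ℝ), w z * (ENNReal.ofReal z * h (y * z) ^ r) := by
        rw [lintegral_const_mul _ (by fun_prop), lintegral_lintegral_swap (by fun_prop)]
    _ = (∫⁻ z in Ioi 0, w z) ^ r * ∫⁻ z in Ioi 0, h z ^ r := by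
        rw [setLIntegral_congr_fun measurableSet_Ioi hdil, lintegral_mul_const _ hw, ← mul_assoc,
          hpow]

/-- The constant `∫_0^∞ z^(β - 1) / (1 + z) dz` (that is, `π / sin (π β)`) of Hilbert's inequality
in weighted form. -/
noncomputable def hilbertConst (β : ℝ) : ℝ≥0∞ :=
  ∫⁻ z in Ioi (0 : ℝ), ENNReal.ofReal (z ^ (β - 1) / (1 + z))

theorem hilbertConst_lt_top {β : ℝ} (h0 : 0 < β) (h1 : β < 1) : hilbertConst β < ⊤ := by
  rw [hilbertConst, ← Ioc_union_Ioi_eq_Ioi (zero_le_one' ℝ)]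
  refine (lintegral_union_le _ _ _).trans_lt (ENNReal.add_lt_top.2 ⟨?_, ?_⟩)
  · have hint : IntegrableOn (fun z : ℝ => z ^ (β - 1)) (Ioc 0 1) :=
      (intervalIntegrable_iff_integrableOn_Ioc_of_le zero_le_one).1
        (intervalIntegral.intervalIntegrable_rpow' (by linarith))
    refine (setLIntegral_mono' measurableSet_Ioc fun z hz => ENNReal.ofReal_le_ofReal ?_).trans_lt
      hint.lintegral_lt_top
    exact div_le_self (rpow_nonneg hz.1.le _) (by linarith [hz.1])
  · have hint : IntegrableOn (fun z : ℝ => z ^ (β - 1 - 1)) (Ioi 1) :=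
      integrableOn_Ioi_rpow_of_lt (by linarith) one_pos
    refine (setLIntegral_mono' measurableSet_Ioi fun z hz => ENNReal.ofReal_le_ofReal ?_).trans_lt
      hint.lintegral_lt_top
    have hz0 : 0 < z := one_pos.trans hz
    rw [rpow_sub_one hz0.ne' (β - 1)]
    gcongr
    linarith

theorem lintegral_Ioi_eq_lintegral_Ioi_zero (s : ℝ) (F : ℝ → ℝ≥0∞) :
    ∫⁻ v in Ioi s, F v = ∫⁻ z in Ioi 0, F (s + z) := by
  rw [← (measurePreserving_add_left volume s).setLIntegral_comp_preimage_emb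
    (measurableEmbedding_addLeft s), preimage_const_add_Ioi, sub_self]

theorem lintegral_Iio_eq_lintegral_Ioi_zero (s : ℝ) (F : ℝ → ℝ≥0∞) :
    ∫⁻ x in Iio s, F x = ∫⁻ y in Ioi 0, F (s - y) := by
  rw [← (Measure.measurePreserving_sub_left volume s).setLIntegral_comp_preimage_emb
    (measurableEmbedding_subLeft s), preimage_const_sub_Iio, sub_self]

/- In the coordinates `y = s - x`, `v = s + y * z` the kernel is `z ^ α / (1 + z) * (1 / y)`. -/
theorem lintegral_Ioi_truncKernel_mul {α s y : ℝ} (hy : 0 < y) (h : ℝ → ℝ≥0∞) :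
    ∫⁻ v in Ioi s, ENNReal.ofReal (truncKernel α s (s - y) v) * h v =
      ∫⁻ z in Ioi 0, ENNReal.ofReal (z ^ α / (1 + z)) * h (s + y * z) := by
  rw [lintegral_Ioi_eq_lintegral_Ioi_zero, ← lintegral_Ioi_comp_mul_left hy,
    ← lintegral_const_mul' _ _ ENNReal.ofReal_ne_top]
  refine setLIntegral_congr_fun measurableSet_Ioi fun z hz => ?_
  have hz : 0 < z := hz
  have hkernel : y * truncKernel α s (s - y) (s + y * z) = z ^ α / (1 + z) := by
    have hadd : s + y * z - (s - y) = y * (1 + z) := by ring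
    rw [truncKernel, add_sub_cancel_left, sub_sub_cancel, mul_div_cancel_left₀ _ hy.ne', hadd]
    field_simp
  rw [← mul_assoc, ← ENNReal.ofReal_mul hy.le, hkernel]

theorem lintegral_rpow_lintegral_truncKernel_mul_le {α s r : ℝ} (hr : 1 ≤ r) {h : ℝ → ℝ≥0∞}
    (hh : Measurable h) :
    ∫⁻ x in Iio s, (∫⁻ v in Ioi s, ENNReal.ofReal (truncKernel α s x v) * h v) ^ r ≤
      hilbertConst (α + 1 - 1 / r) ^ r * ∫⁻ v in Ioi s, h v ^ r := by
  have hconst : hilbertConst (α + 1 - 1 / r) =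
      ∫⁻ z in Ioi 0, ENNReal.ofReal (z ^ α / (1 + z)) * ENNReal.ofReal z ^ (-(1 / r)) := by
    refine setLIntegral_congr_fun measurableSet_Ioi fun z hz => ?_
    have hz : 0 < z := hz
    rw [ENNReal.ofReal_rpow_of_pos hz, ← ENNReal.ofReal_mul (by positivity), div_mul_eq_mul_div,
      ← rpow_add hz]
    ring_nf
  calc ∫⁻ x in Iio s, (∫⁻ v in Ioi s, ENNReal.ofReal (truncKernel α s x v) * h v) ^ r
      = ∫⁻ y in Ioi 0, (∫⁻ z in Ioi 0,
          ENNReal.ofReal (z ^ α / (1 + z)) * h (s + y * z)) ^ r := by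
        rw [lintegral_Iio_eq_lintegral_Ioi_zero]
        exact setLIntegral_congr_fun measurableSet_Ioi fun y hy => by
          rw [lintegral_Ioi_truncKernel_mul hy]
    _ ≤ hilbertConst (α + 1 - 1 / r) ^ r * ∫⁻ z in Ioi 0, h (s + z) ^ r := by
        rw [hconst]
        exact lintegral_rpow_lintegral_mul_comp_mul_le (h := fun z => h (s + z))
          (by fun_prop) (by fun_prop) hr
    _ = hilbertConst (α + 1 - 1 / r) ^ r * ∫⁻ v in Ioi s, h v ^ r := by
        rw [lintegral_Ioi_eq_lintegral_Ioi_zero s]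

theorem eLpNorm_lintegral_truncKernel_mul_le {α s T : ℝ} {q : ℝ≥0∞} (hq : 1 ≤ q) (hq' : q ≠ ⊤)
    {h : ℝ → ℝ≥0∞} (hh : AEMeasurable h (volume.restrict (Ioo s T))) :
    eLpNorm (fun x => ∫⁻ v in Ioo s T, ENNReal.ofReal (truncKernel α s x v) * h v) q
        (volume.restrict (Iio s)) ≤
      hilbertConst (α + 1 - 1 / q.toReal) * eLpNorm h q (volume.restrict (Ioo s T)) := by
  have hr : 1 ≤ q.toReal := by simpa using ENNReal.toReal_mono hq' hq
  have hr0 : 0 < q.toReal := one_pos.trans_le hr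
  set g : ℝ → ℝ≥0∞ := (Iio T).indicator (hh.mk h)
  have hmk (x : ℝ) : ∫⁻ v in Ioo s T, ENNReal.ofReal (truncKernel α s x v) * h v =
      ∫⁻ v in Ioi s, ENNReal.ofReal (truncKernel α s x v) * g v := by
    rw [lintegral_congr fun v => (indicator_mul_right (Iio T)
      (fun v => ENNReal.ofReal (truncKernel α s x v)) (hh.mk h)).symm,
      setLIntegral_indicator measurableSet_Iio, Iio_inter_Ioi]
    exact lintegral_congr_ae (hh.ae_eq_mk.mono fun v hv => by simp only [hv])
  have hnorm : eLpNorm h q (volume.restrict (Ioo s T)) = eLpNorm g q (volume.restrict (Ioi s)) := by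
    rw [eLpNorm_indicator_eq_eLpNorm_restrict measurableSet_Iio,
      Measure.restrict_restrict measurableSet_Iio, Iio_inter_Ioi, eLpNorm_congr_ae hh.ae_eq_mk]
  rw [hnorm]
  simp only [hmk, eLpNorm_eq_lintegral_rpow_enorm_toReal (one_pos.trans_le hq).ne' hq',
    enorm_eq_self]
  refine (ENNReal.rpow_le_rpow (lintegral_rpow_lintegral_truncKernel_mul_le hr
    (hh.measurable_mk.indicator measurableSet_Iio)) (by positivity)).trans_eq ?_
  rw [ENNReal.mul_rpow_of_nonneg _ _ (by positivity), ← ENNReal.rpow_mul,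
    mul_one_div_cancel hr0.ne', ENNReal.rpow_one]

end Hilbert

section Truncation

open scoped ENNReal

variable {α s t T : ℝ} {q : ℝ≥0∞} {b φ ψ : ℝ → ℝ}

theorem aestronglyMeasurable_of_memLambda (hφ : memLambda T α b φ) :
    AEStronglyMeasurable φ (volume.restrict (Ioo 0 T)) := by
  rw [Measure.restrict_congr_set Ioo_ae_eq_Icc]
  exact hφ.1.1

theorem integrableOn_rpow_neg_mul (hα : α < 1 / 2) (hφ : MemLp φ 2 (volume.restrict (Ioo 0 T))) :
    IntegrableOn (fun u => u ^ (-α) * φ u) (Ioo 0 T) := by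
  rcases le_or_gt T 0 with hT | hT
  · simp [Ioo_eq_empty_of_le hT]
  refine MemLp.integrable_mul (p := 2) (q := 2) ?_ hφ
  rw [memLp_two_iff_integrable_sq (by fun_prop)]
  have hint : IntegrableOn (fun u : ℝ => u ^ (-α * 2)) (Ioo 0 T) :=
    (intervalIntegrable_iff_integrableOn_Ioo_of_le hT.le).1
      (intervalIntegral.intervalIntegrable_rpow' (by linarith))
  refine hint.congr_fun (fun u hu => ?_) measurableSet_Ioo
  simp only [rpow_mul hu.1.le, rpow_two]

theorem ae_rpow_neg_mul_eq_fracTrunc (h0 : 0 < α) (hα : α < 1 / 2) (hsT : s ≤ T)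
    (hφ : memLambda T α b φ) (hψ : memLambda T α ((Icc 0 s).indicator b) ψ) :
    ∀ᵐ x ∂volume.restrict (Ioo 0 T),
      x ^ (-α) * ψ x = fracTrunc T α s (fun u => u ^ (-α) * φ u) x := by
  simp only [memLambda, ← Measure.restrict_congr_set Ioo_ae_eq_Icc] at hφ hψ
  have hne : ∀ᵐ x ∂volume.restrict (Ioo 0 T), x ≠ s :=
    ae_restrict_of_ae (Measure.ae_ne volume s)
  refine ae_eq_fracTrunc h0 (by linarith) hsT (integrableOn_rpow_neg_mul hα hφ.1)
    (integrableOn_rpow_neg_mul hα hψ.1) ?_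
  filter_upwards [hφ.2, hψ.2, hne, ae_restrict_mem measurableSet_Ioo] with x hbx hψx hxs hx
  refine mul_left_cancel₀ (rpow_pos_of_pos hx.1 α).ne' ?_
  rw [← hψx]
  rcases hxs.lt_or_gt with hlt | hgt
  · rw [indicator_of_mem (mem_Icc.2 ⟨hx.1.le, hlt.le⟩), indicator_of_mem (mem_Iio.2 hlt), hbx]
  · rw [indicator_of_notMem fun h : x ∈ Icc 0 s => hgt.not_ge h.2,
      indicator_of_notMem (notMem_Iio.2 hgt.le), mul_zero]

theorem ae_eq_indicator_add_integral_truncKernel (h0 : 0 < α) (hα : α < 1 / 2) (hsT : s ≤ T)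
    (hφ : memLambda T α b φ) (hψ : memLambda T α ((Icc 0 s).indicator b) ψ) :
    ∀ᵐ x ∂volume.restrict (Ioo 0 T), ψ x = (Iio s).indicator (fun x => φ x +
      (beta (1 - α) α)⁻¹ * ∫ v in Ioo s T, truncKernel α s x v * ((x / v) ^ α * φ v)) x := by
  filter_upwards [ae_rpow_neg_mul_eq_fracTrunc h0 hα hsT hφ hψ,
    ae_restrict_mem measurableSet_Ioo] with x hx hx0
  refine mul_left_cancel₀ (rpow_pos_of_pos hx0.1 (-α)).ne' ?_
  rw [hx, fracTrunc, ← indicator_mul_right (Iio s) fun x => x ^ (-α)]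
  by_cases hxs : x ∈ Iio s
  swap
  · simp only [indicator_of_notMem hxs]
  rw [indicator_of_mem hxs, indicator_of_mem hxs]
  have hscale (v : ℝ) (hv : v ∈ Ioo s T) : truncKernel α s x v * (v ^ (-α) * φ v) =
      x ^ (-α) * (truncKernel α s x v * ((x / v) ^ α * φ v)) := by
    have hv0 : 0 < v := hx0.1.trans (hxs.trans hv.1)
    rw [div_rpow hx0.1.le hv0.le, rpow_neg hx0.1.le, rpow_neg hv0.le]
    have := (rpow_pos_of_pos hx0.1 α).ne'
    field_simp
  rw [setIntegral_congr_fun measurableSet_Ioo hscale, integral_const_mul]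
  ring

theorem ae_enorm_sub_le (h0 : 0 < α) (hα : α < 1 / 2) (hsT : s ≤ T)
    (hφ : memLambda T α b φ) (hψ : memLambda T α ((Icc 0 s).indicator b) ψ) :
    ∀ᵐ x ∂volume.restrict (Ioo 0 T), ‖φ x - ψ x‖ₑ ≤
      (Ici s).indicator (fun x => ‖φ x‖ₑ) x + (Iio s).indicator
        (fun x => ENNReal.ofReal (beta (1 - α) α)⁻¹ *
          ∫⁻ v in Ioo s T, ENNReal.ofReal (truncKernel α s x v) * ‖φ v‖ₑ) x := by
  filter_upwards [ae_eq_indicator_add_integral_truncKernel h0 hα hsT hφ hψ,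
    ae_restrict_mem measurableSet_Ioo] with x hx hx0
  rcases lt_or_ge x s with hxs | hxs
  · rw [indicator_of_notMem (notMem_Ici.2 hxs), indicator_of_mem (mem_Iio.2 hxs), zero_add, hx,
      indicator_of_mem (mem_Iio.2 hxs), sub_add_cancel_left, enorm_neg, enorm_mul,
      Real.enorm_of_nonneg (inv_nonneg.2 (beta_pos (by linarith) h0).le)]
    gcongr
    refine (enorm_integral_le_lintegral_enorm _).trans
      (setLIntegral_mono' measurableSet_Ioo fun v hv => ?_)
    have hv0 : 0 < v := hx0.1.trans (hxs.trans hv.1)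
    have hratio0 : 0 ≤ (x / v) ^ α := rpow_nonneg (div_nonneg hx0.1.le hv0.le) _
    have hratio : (x / v) ^ α ≤ 1 := rpow_le_one (div_nonneg hx0.1.le hv0.le)
      ((div_le_one hv0).2 (hxs.trans hv.1).le) h0.le
    rw [enorm_mul, enorm_mul, Real.enorm_of_nonneg (truncKernel_nonneg hxs.le hv.1.le),
      Real.enorm_of_nonneg hratio0]
    gcongr
    exact mul_le_of_le_one_left' (ENNReal.ofReal_le_one.2 hratio)
  · rw [indicator_of_mem (mem_Ici.2 hxs), hx, indicator_of_notMem (notMem_Iio.2 hxs), sub_zero]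
    exact le_self_add

/-- The factor by which the part of a representative on `(s, T)`, measured in `L^q`, bounds what
truncation at `s` adds on the left of `s`; it does not depend on `s`. -/
noncomputable def truncConst (α : ℝ) (q : ℝ≥0∞) : ℝ≥0∞ :=
  ENNReal.ofReal (beta (1 - α) α)⁻¹ * hilbertConst (α + 1 - 1 / q.toReal)

theorem aemeasurable_lintegral_truncKernel_mul {μ ν : Measure ℝ} [SFinite ν] {h : ℝ → ℝ≥0∞}
    (hh : AEMeasurable h ν) :
    AEMeasurable (fun x => ∫⁻ v, ENNReal.ofReal (truncKernel α s x v) * h v ∂ν) μ := by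
  have hmk (x : ℝ) : ∫⁻ v, ENNReal.ofReal (truncKernel α s x v) * h v ∂ν =
      ∫⁻ v, ENNReal.ofReal (truncKernel α s x v) * hh.mk h v ∂ν :=
    lintegral_congr_ae (hh.ae_eq_mk.mono fun v hv => by simp only [hv])
  simp only [hmk]
  exact (((measurable_truncKernel α s).ennreal_ofReal.mul
    (hh.measurable_mk.comp measurable_snd)).lintegral_prod_right).aemeasurable

theorem eLpNorm_sub_le_of_memLambda (h0 : 0 < α) (hα : α < 1 / 2) (hs : 0 ≤ s)
    (hsT : s ≤ T) (hq : 1 ≤ q) (hq' : q ≠ ⊤) (hφ : memLambda T α b φ)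
    (hψ : memLambda T α ((Icc 0 s).indicator b) ψ) :
    eLpNorm (φ - ψ) q (volume.restrict (Ioo 0 T)) ≤
      (1 + truncConst α q) * eLpNorm φ q (volume.restrict (Ioo s T)) := by
  have hsub : Ioo s T ⊆ Ioo 0 T := Ioo_subset_Ioo_left hs
  have hφm := aestronglyMeasurable_of_memLambda hφ
  have hh := (hφm.mono_measure (Measure.restrict_mono_set volume hsub)).enorm
  set W : ℝ → ℝ≥0∞ := fun x =>
    ∫⁻ v in Ioo s T, ENNReal.ofReal (truncKernel α s x v) * ‖φ v‖ₑ
  set β := ENNReal.ofReal (beta (1 - α) α)⁻¹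
  have hW (μ : Measure ℝ) : AEMeasurable W μ := aemeasurable_lintegral_truncKernel_mul hh
  have hright : eLpNorm ((Ici s).indicator fun x => ‖φ x‖ₑ) q (volume.restrict (Ioo 0 T)) ≤
      eLpNorm φ q (volume.restrict (Ioo s T)) := by
    rw [eLpNorm_indicator_eq_eLpNorm_restrict measurableSet_Ici,
      Measure.restrict_restrict measurableSet_Ici, eLpNorm_enorm,
      Measure.restrict_congr_set (μ := volume) (Ioo_ae_eq_Ico (a := s))]
    exact eLpNorm_mono_measure _ (Measure.restrict_mono_set _ fun x hx => ⟨hx.1, hx.2.2⟩)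
  have hleft : eLpNorm ((Iio s).indicator fun x => β * W x) q (volume.restrict (Ioo 0 T)) ≤
      truncConst α q * eLpNorm φ q (volume.restrict (Ioo s T)) := by
    rw [eLpNorm_indicator_eq_eLpNorm_restrict measurableSet_Iio,
      Measure.restrict_restrict measurableSet_Iio, truncConst, mul_assoc, ← eLpNorm_enorm φ]
    exact (eLpNorm_mono_measure _ (Measure.restrict_mono_set _ inter_subset_left)).trans
      ((eLpNorm_le_mul_eLpNorm_of_ae_le_mul'' q (hW _).aestronglyMeasurable
        (.of_forall fun x => le_rfl)).trans
          (mul_le_mul_right (eLpNorm_lintegral_truncKernel_mul_le hq hq' hh) β))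
  calc eLpNorm (φ - ψ) q (volume.restrict (Ioo 0 T))
      ≤ eLpNorm (((Ici s).indicator fun x => ‖φ x‖ₑ) + (Iio s).indicator fun x => β * W x) q
          (volume.restrict (Ioo 0 T)) :=
        eLpNorm_mono_enorm_ae ((ae_enorm_sub_le h0 hα hsT hφ hψ).mono fun x hx => by
          simpa using hx)
    _ ≤ _ := eLpNorm_add_le (hφm.enorm.indicator measurableSet_Ici).aestronglyMeasurable
        (((hW _).const_mul β).indicator measurableSet_Iio).aestronglyMeasurable hq
    _ ≤ _ := add_le_add hright hleft
    _ = _ := by rw [add_mul, one_mul]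

theorem truncConst_lt_top (h0 : 0 < α) (hq : 1 ≤ q) (hαq : α < 1 / q.toReal) :
    truncConst α q < ⊤ := by
  have hq1 : 1 / q.toReal ≤ 1 := by
    rw [one_div, ← ENNReal.toReal_inv, ← ENNReal.toReal_one]
    exact ENNReal.toReal_mono ENNReal.one_ne_top (ENNReal.inv_le_one.2 hq)
  exact ENNReal.mul_lt_top ENNReal.ofReal_lt_top (hilbertConst_lt_top (by linarith) (by linarith))

theorem eLpNorm_le_of_memLambda (h0 : 0 < α) (hα : α < 1 / 2) (hs : 0 ≤ s) (hsT : s ≤ T)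
    (hq : 1 ≤ q) (hq' : q ≠ ⊤) (hφ : memLambda T α b φ)
    (hψ : memLambda T α ((Icc 0 s).indicator b) ψ) :
    eLpNorm ψ q (volume.restrict (Ioo 0 T)) ≤
      (2 + truncConst α q) * eLpNorm φ q (volume.restrict (Ioo 0 T)) := by
  have hφm := aestronglyMeasurable_of_memLambda hφ
  have hψm := aestronglyMeasurable_of_memLambda hψ
  calc eLpNorm ψ q (volume.restrict (Ioo 0 T))
      = eLpNorm (φ - (φ - ψ)) q (volume.restrict (Ioo 0 T)) := by rw [sub_sub_cancel]
    _ ≤ eLpNorm φ q (volume.restrict (Ioo 0 T)) + eLpNorm (φ - ψ) q (volume.restrict (Ioo 0 T)) :=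
        eLpNorm_sub_le hφm (hφm.sub hψm) hq
    _ ≤ eLpNorm φ q (volume.restrict (Ioo 0 T)) +
          (1 + truncConst α q) * eLpNorm φ q (volume.restrict (Ioo 0 T)) := by
        refine add_le_add le_rfl ((eLpNorm_sub_le_of_memLambda h0 hα hs hsT hq hq' hφ hψ).trans ?_)
        gcongr
    _ = (2 + truncConst α q) * eLpNorm φ q (volume.restrict (Ioo 0 T)) := by ring

theorem eLpNorm_sub_indicator_le_of_memLambda {φs φt : ℝ → ℝ} {r : ℝ≥0∞} (h0 : 0 < α)
    (hα : α < 1 / 2) (hs : 0 ≤ s) (hst : s ≤ t) (htT : t ≤ T) (hr : 1 ≤ r) (hrq : r ≤ q)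
    (hq : q ≠ ⊤) (hφ : memLambda T α b φ) (hφs : memLambda T α ((Icc 0 s).indicator b) φs)
    (hφt : memLambda T α ((Icc 0 t).indicator b) φt) :
    eLpNorm (φt - φs) r (volume.restrict (Ioo 0 T)) ≤
      (1 + truncConst α r) * (2 + truncConst α q) * eLpNorm φ q (volume.restrict (Ioo 0 T)) *
        ENNReal.ofReal (t - s) ^ (1 / r.toReal - 1 / q.toReal) := by
  have hsT := hst.trans htT
  have hsub : Ioo s t ⊆ Ioo 0 T := Ioo_subset_Ioo hs htT
  have hindicator : (Icc 0 s).indicator ((Icc 0 t).indicator b) = (Icc 0 s).indicator b := by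
    rw [indicator_indicator, inter_eq_left.2 (Icc_subset_Icc_right hst)]
  have hsupport : φt =ᵐ[volume.restrict (Ioo s T)] (Iio t).indicator φt := by
    refine ae_restrict_of_ae_restrict_of_subset (Ioo_subset_Ioo_left hs) ?_
    filter_upwards [ae_eq_indicator_add_integral_truncKernel h0 hα htT hφ hφt] with x hx
    by_cases hxt : x ∈ Iio t
    · rw [indicator_of_mem hxt]
    · rw [hx, indicator_of_notMem hxt, indicator_of_notMem hxt]
  calc eLpNorm (φt - φs) r (volume.restrict (Ioo 0 T))
      ≤ (1 + truncConst α r) * eLpNorm φt r (volume.restrict (Ioo s T)) :=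
        eLpNorm_sub_le_of_memLambda h0 hα hs hsT hr (ne_top_of_le_ne_top hq hrq) hφt
          (hindicator ▸ hφs)
    _ = (1 + truncConst α r) * eLpNorm φt r (volume.restrict (Ioo s t)) := by
        rw [eLpNorm_congr_ae hsupport, eLpNorm_indicator_eq_eLpNorm_restrict measurableSet_Iio,
          Measure.restrict_restrict measurableSet_Iio, Iio_inter_Ioo, min_eq_left htT]
    _ ≤ (1 + truncConst α r) * (eLpNorm φt q (volume.restrict (Ioo s t)) *
          volume.restrict (Ioo s t) univ ^ (1 / r.toReal - 1 / q.toReal)) := by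
        gcongr
        exact eLpNorm_le_eLpNorm_mul_rpow_measure_univ hrq
          ((aestronglyMeasurable_of_memLambda hφt).mono_measure
            (Measure.restrict_mono_set _ hsub))
    _ ≤ (1 + truncConst α r) * ((2 + truncConst α q) *
          eLpNorm φ q (volume.restrict (Ioo 0 T)) *
          ENNReal.ofReal (t - s) ^ (1 / r.toReal - 1 / q.toReal)) := by
        rw [Measure.restrict_apply_univ, Real.volume_Ioo]
        gcongr
        exact (eLpNorm_mono_measure _ (Measure.restrict_mono_set _ hsub)).trans
          (eLpNorm_le_of_memLambda h0 hα (hs.trans hst) htT (hr.trans hrq) hq hφ hφt)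
    _ = _ := by ring

theorem eLpNorm_le_mul_rpow_of_memLambda {r : ℝ≥0∞} (h0 : 0 < α) (hα : α < 1 / 2) (hs : 0 ≤ s)
    (hsT : s ≤ T) (hr : 1 ≤ r) (hrq : r ≤ q) (hr' : r ≠ ⊤) (hφ : memLambda T α b φ)
    (hψ : memLambda T α ((Icc 0 s).indicator b) ψ) :
    eLpNorm ψ r (volume.restrict (Ioo 0 T)) ≤
      (2 + truncConst α r) * (eLpNorm φ q (volume.restrict (Ioo 0 T)) *
        ENNReal.ofReal T ^ (1 / r.toReal - 1 / q.toReal)) := by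
  refine (eLpNorm_le_of_memLambda h0 hα hs hsT hr hr' hφ hψ).trans (mul_le_mul_right ?_ _)
  refine (eLpNorm_le_eLpNorm_mul_rpow_measure_univ hrq
    (aestronglyMeasurable_of_memLambda hφ)).trans_eq ?_
  rw [Measure.restrict_apply_univ, Real.volume_Ioo, sub_zero]

theorem ofReal_rpow_le_mul_ofReal_rpow {x γ δ : ℝ} (hx : 0 ≤ x) (hxT : x ≤ T) (hδ : 0 ≤ δ)
    (hδγ : δ ≤ γ) :
    ENNReal.ofReal x ^ γ ≤ ENNReal.ofReal T ^ (γ - δ) * ENNReal.ofReal (x ^ δ) := by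
  rw [← ENNReal.ofReal_rpow_of_nonneg hx hδ]
  calc ENNReal.ofReal x ^ γ = ENNReal.ofReal x ^ (γ - δ) * ENNReal.ofReal x ^ δ := by
        rw [← ENNReal.rpow_add_of_nonneg _ _ (sub_nonneg.2 hδγ) hδ, sub_add_cancel]
    _ ≤ ENNReal.ofReal T ^ (γ - δ) * ENNReal.ofReal x ^ δ := by
        gcongr

/-- The constant `C` of the Hölder estimate for `n = 1`, with `q` in the role of `p`. The first
power of `T` serves the `L²` norm of one representative, the second that of a difference. -/
noncomputable def repConst (T α : ℝ) (q : ℝ≥0∞) (δ : ℝ) : ℝ≥0∞ :=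
  (2 + truncConst α 2) * (2 + truncConst α q) *
    (ENNReal.ofReal T ^ (1 / 2 - 1 / q.toReal) + ENNReal.ofReal T ^ (1 / 2 - 1 / q.toReal - δ))

theorem repConst_lt_top (T : ℝ) {δ : ℝ} (h0 : 0 < α) (hq : 2 ≤ q) (hαq : α < 1 / q.toReal)
    (hδ0 : 0 ≤ δ) (hδ : δ ≤ 1 / 2 - 1 / q.toReal) : repConst T α q δ < ⊤ := by
  have hα : α < 1 / 2 := by linarith
  have h2 : truncConst α 2 < ⊤ := truncConst_lt_top h0 one_le_two (by simpa using hα)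
  have hq : truncConst α q < ⊤ := truncConst_lt_top h0 (one_le_two.trans hq) hαq
  have hγ : 0 ≤ 1 / 2 - 1 / q.toReal := hδ0.trans hδ
  have hγδ : 0 ≤ 1 / 2 - 1 / q.toReal - δ := sub_nonneg.2 hδ
  unfold repConst
  finiteness

theorem eLpNorm_two_le_repConst_mul (δ : ℝ) (h0 : 0 < α) (hα : α < 1 / 2) (hs : 0 ≤ s)
    (hsT : s ≤ T) (hq : 2 ≤ q) (hφ : memLambda T α b φ)
    (hψ : memLambda T α ((Icc 0 s).indicator b) ψ) :
    eLpNorm ψ 2 (volume.restrict (Ioo 0 T)) ≤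
      repConst T α q δ * eLpNorm φ q (volume.restrict (Ioo 0 T)) := by
  set N := eLpNorm φ q (volume.restrict (Ioo 0 T))
  set γ := 1 / 2 - 1 / q.toReal with hγ
  calc eLpNorm ψ 2 (volume.restrict (Ioo 0 T))
      ≤ (2 + truncConst α 2) * (N * ENNReal.ofReal T ^ γ) := by
        simpa [hγ] using eLpNorm_le_mul_rpow_of_memLambda h0 hα hs hsT one_le_two hq
          ENNReal.ofNat_ne_top hφ hψ
    _ = (2 + truncConst α 2) * 1 * ENNReal.ofReal T ^ γ * N := by ring
    _ ≤ repConst T α q δ * N := by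
        unfold repConst
        gcongr
        · exact one_le_two.trans le_self_add
        · exact le_self_add

theorem eLpNorm_two_sub_le_repConst_mul {φs φt : ℝ → ℝ} {δ : ℝ} (h0 : 0 < α) (hα : α < 1 / 2)
    (hs : 0 ≤ s) (hst : s ≤ t) (htT : t ≤ T) (hq : 2 ≤ q) (hq' : q ≠ ⊤) (hδ0 : 0 ≤ δ)
    (hδ : δ ≤ 1 / 2 - 1 / q.toReal) (hφ : memLambda T α b φ)
    (hφs : memLambda T α ((Icc 0 s).indicator b) φs)
    (hφt : memLambda T α ((Icc 0 t).indicator b) φt) :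
    eLpNorm (φt - φs) 2 (volume.restrict (Ioo 0 T)) ≤
      repConst T α q δ * eLpNorm φ q (volume.restrict (Ioo 0 T)) *
        ENNReal.ofReal ((t - s) ^ δ) := by
  set N := eLpNorm φ q (volume.restrict (Ioo 0 T))
  set γ := 1 / 2 - 1 / q.toReal with hγ
  calc eLpNorm (φt - φs) 2 (volume.restrict (Ioo 0 T))
      ≤ (1 + truncConst α 2) * (2 + truncConst α q) * N * ENNReal.ofReal (t - s) ^ γ := by
        simpa [hγ] using eLpNorm_sub_indicator_le_of_memLambda h0 hα hs hst htT one_le_two hq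
          hq' hφ hφs hφt
    _ ≤ (1 + truncConst α 2) * (2 + truncConst α q) * N *
          (ENNReal.ofReal T ^ (γ - δ) * ENNReal.ofReal ((t - s) ^ δ)) := by
        gcongr
        exact ofReal_rpow_le_mul_ofReal_rpow (sub_nonneg.2 hst) (by linarith) hδ0 hδ
    _ = (1 + truncConst α 2) * (2 + truncConst α q) * ENNReal.ofReal T ^ (γ - δ) * N *
          ENNReal.ofReal ((t - s) ^ δ) := by ring
    _ ≤ repConst T α q δ * N * ENNReal.ofReal ((t - s) ^ δ) := by
        unfold repConst
        gcongr
        · exact one_le_two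
        · exact le_add_self

end Truncation

section TensorPower

open scoped ENNReal

variable {X 𝕜 : Type*} [MeasurableSpace X] {μ : Measure X} [NormedField 𝕜] {p : ℝ≥0∞}
  {f g : X → 𝕜}

theorem eLpNorm_prod_mul {Y : Type*} [MeasurableSpace Y] {ν : Measure Y} [SFinite ν] {h : Y → 𝕜}
    (hp : p ≠ ⊤) (hf : AEStronglyMeasurable f μ) (hh : AEStronglyMeasurable h ν) :
    eLpNorm (fun z : X × Y => f z.1 * h z.2) p (μ.prod ν) = eLpNorm f p μ * eLpNorm h p ν := by
  rcases eq_or_ne p 0 with rfl | hp0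
  · simp only [eLpNorm_exponent_zero, mul_zero]
  simp only [eLpNorm_eq_lintegral_rpow_enorm_toReal hp0 hp, enorm_mul,
    ENNReal.mul_rpow_of_nonneg _ _ ENNReal.toReal_nonneg]
  rw [lintegral_prod_mul (hf.enorm.pow_const _) (hh.enorm.pow_const _),
    ENNReal.mul_rpow_of_nonneg _ _ (by positivity)]

variable [SigmaFinite μ]

variable (μ) in
theorem measurePreserving_zero_succ (n : ℕ) :
    MeasurePreserving (fun u : Fin (n + 1) → X => (u 0, fun i : Fin n => u i.succ))
      (Measure.pi fun _ => μ) (μ.prod (Measure.pi fun _ => μ)) :=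
  measurePreserving_piFinSuccAbove (fun _ => μ) 0

theorem aestronglyMeasurable_pi_succ_mul {n : ℕ} {h : (Fin n → X) → 𝕜}
    (hf : AEStronglyMeasurable f μ) (hh : AEStronglyMeasurable h (Measure.pi fun _ => μ)) :
    AEStronglyMeasurable (fun u : Fin (n + 1) → X => f (u 0) * h fun i => u i.succ)
      (Measure.pi fun _ => μ) :=
  (hf.comp_fst.mul hh.comp_snd).comp_measurePreserving (measurePreserving_zero_succ μ n)

theorem eLpNorm_pi_succ_mul {n : ℕ} {h : (Fin n → X) → 𝕜} (hp : p ≠ ⊤)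
    (hf : AEStronglyMeasurable f μ) (hh : AEStronglyMeasurable h (Measure.pi fun _ => μ)) :
    eLpNorm (fun u : Fin (n + 1) → X => f (u 0) * h fun i => u i.succ) p
        (Measure.pi fun _ => μ) = eLpNorm f p μ * eLpNorm h p (Measure.pi fun _ => μ) := by
  have hcomp := eLpNorm_comp_measurePreserving (p := p) (hf.comp_fst.mul hh.comp_snd)
    (measurePreserving_zero_succ μ n)
  rw [← eLpNorm_prod_mul hp hf hh]
  exact hcomp

theorem aestronglyMeasurable_pi_prod (n : ℕ) (hf : AEStronglyMeasurable f μ) :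
    AEStronglyMeasurable (fun u : Fin n → X => ∏ i, f (u i)) (Measure.pi fun _ => μ) :=
  Finset.aestronglyMeasurable_fun_prod _ fun i _ =>
    hf.comp_quasiMeasurePreserving (Measure.quasiMeasurePreserving_eval _ i)

theorem eLpNorm_pi_prod (n : ℕ) (hp0 : p ≠ 0) (hp : p ≠ ⊤) (hf : AEStronglyMeasurable f μ) :
    eLpNorm (fun u : Fin n → X => ∏ i, f (u i)) p (Measure.pi fun _ => μ) =
      eLpNorm f p μ ^ n := by
  induction n with
  | zero => simp [eLpNorm_const' (1 : 𝕜) hp0 hp]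
  | succ n ih =>
    simp only [Fin.prod_univ_succ]
    rw [eLpNorm_pi_succ_mul hp hf (aestronglyMeasurable_pi_prod n hf), ih, pow_succ']

theorem eLpNorm_pi_prod_sub_prod_le (n : ℕ) (hp1 : 1 ≤ p) (hp : p ≠ ⊤)
    (hf : AEStronglyMeasurable f μ) (hg : AEStronglyMeasurable g μ) {A : ℝ≥0∞}
    (hfA : eLpNorm f p μ ≤ A) (hgA : eLpNorm g p μ ≤ A) :
    eLpNorm (fun u : Fin n → X => (∏ i, f (u i)) - ∏ i, g (u i)) p (Measure.pi fun _ => μ) ≤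
      n * eLpNorm (f - g) p μ * A ^ (n - 1) := by
  induction n with
  | zero => simp
  | succ n ih =>
    have hfn := aestronglyMeasurable_pi_prod n hf
    have hgn := aestronglyMeasurable_pi_prod n hg
    have htelescope : (fun u : Fin (n + 1) → X => (∏ i, f (u i)) - ∏ i, g (u i)) =
        (fun u => (f - g) (u 0) * ∏ i : Fin n, f (u i.succ)) +
          fun u => g (u 0) * ((∏ i : Fin n, f (u i.succ)) - ∏ i : Fin n, g (u i.succ)) := by
      ext u
      simp only [Fin.prod_univ_succ, Pi.add_apply, Pi.sub_apply]
      ring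
    rw [htelescope]
    refine (eLpNorm_add_le (aestronglyMeasurable_pi_succ_mul (hf.sub hg) hfn)
      (aestronglyMeasurable_pi_succ_mul (h := fun u => (∏ i, f (u i)) - ∏ i, g (u i)) hg
        (hfn.sub hgn)) hp1).trans ?_
    rw [eLpNorm_pi_succ_mul hp (hf.sub hg) hfn,
      eLpNorm_pi_succ_mul (h := fun u => (∏ i, f (u i)) - ∏ i, g (u i)) hp hg (hfn.sub hgn),
      eLpNorm_pi_prod n (one_pos.trans_le hp1).ne' hp hf]
    calc eLpNorm (f - g) p μ * eLpNorm f p μ ^ n + eLpNorm g p μ * _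
        ≤ eLpNorm (f - g) p μ * A ^ n + A * (n * eLpNorm (f - g) p μ * A ^ (n - 1)) := by gcongr
      _ = (n + 1 : ℕ) * eLpNorm (f - g) p μ * A ^ (n + 1 - 1) := by
        rcases n with _ | n
        · simp
        · push_cast
          ring

theorem eLpNorm_pi_prod_sub_prod_le_two_pow (n : ℕ) (hp1 : 1 ≤ p) (hp : p ≠ ⊤)
    (hf : AEStronglyMeasurable f μ) (hg : AEStronglyMeasurable g μ) {A d : ℝ≥0∞}
    (hfA : eLpNorm f p μ ≤ A) (hgA : eLpNorm g p μ ≤ A) (hfg : eLpNorm (f - g) p μ ≤ A * d) :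
    eLpNorm (fun u : Fin n → X => (∏ i, f (u i)) - ∏ i, g (u i)) p (Measure.pi fun _ => μ) ≤
      2 ^ (n - 1) * A ^ n * d := by
  refine (eLpNorm_pi_prod_sub_prod_le n hp1 hp hf hg hfA hgA).trans ?_
  rcases n with _ | n
  · simp
  have hn : ((n + 1 : ℕ) : ℝ≥0∞) ≤ 2 ^ n := mod_cast n.lt_two_pow_self
  calc ((n + 1 : ℕ) : ℝ≥0∞) * eLpNorm (f - g) p μ * A ^ n ≤ 2 ^ n * (A * d) * A ^ n := by gcongr
    _ = 2 ^ n * A ^ (n + 1) * d := by ring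

end TensorPower

end FracTrunc

open FracTrunc in
theorem rep_tensor_holder_bound_general (T : ℝ) {α p δ : ℝ} (hα : 0 < α)
    (hp : p ∈ Set.Ico 2 (1 / α)) (hδ0 : 0 ≤ δ) (hδ : δ ≤ (p - 2) / (2 * p)) :
    ∃ C : ℝ, 0 < C ∧ ∀ b φb : ℝ → ℝ, memLambda T α b φb →
      MemLp φb (ENNReal.ofReal p) (volume.restrict (Set.Icc 0 T)) →
      ∀ n : ℕ, ∀ s t : ℝ, 0 ≤ s → s ≤ t → t ≤ T →
      ∀ φs φt : ℝ → ℝ,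
        memLambda T α (Set.indicator (Set.Icc 0 s) b) φs →
        memLambda T α (Set.indicator (Set.Icc 0 t) b) φt →
        eLpNorm (fun u : Fin n → ℝ => (∏ i, φt (u i)) - ∏ i, φs (u i)) 2
            (Measure.pi fun _ : Fin n => volume.restrict (Set.Icc 0 T)) ≤
          ENNReal.ofReal ((2 : ℝ) ^ (n - 1) * C ^ n *
            (eLpNorm φb (ENNReal.ofReal p) (volume.restrict (Set.Icc 0 T))).toReal ^ n *
            (t - s) ^ δ) := by
  have hp0 : 0 < p := two_pos.trans_le hp.1
  have hq : 2 ≤ ENNReal.ofReal p := by simpa using ENNReal.ofReal_le_ofReal hp.1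
  have hqr : (ENNReal.ofReal p).toReal = p := ENNReal.toReal_ofReal hp0.le
  have hαp : α < 1 / p := (lt_one_div hp0 hα).1 hp.2
  have hα2 : α < 1 / 2 := hαp.trans_le (one_div_le_one_div_of_le two_pos hp.1)
  have hδγ : δ ≤ 1 / 2 - 1 / (ENNReal.ofReal p).toReal := by
    rw [hqr]
    exact hδ.trans_eq (by field_simp)
  obtain ⟨C, -, hC, -⟩ := ENNReal.lt_iff_exists_real_btwn.1
    (repConst_lt_top T hα hq (by rwa [hqr]) hδ0 hδγ)
  have hC0 : 0 < C := ENNReal.ofReal_pos.1 (pos_of_gt hC)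
  refine ⟨C, hC0, fun b φb hb hφb n s t hs hst htT φs φt hφs hφt => ?_⟩
  simp only [← Measure.restrict_congr_set Ioo_ae_eq_Icc] at hφb ⊢
  set μ : Measure ℝ := volume.restrict (Ioo 0 T)
  set N := eLpNorm φb (ENNReal.ofReal p) μ
  have hφsC : eLpNorm φs 2 μ ≤ ENNReal.ofReal C * N :=
    (eLpNorm_two_le_repConst_mul δ hα hα2 hs (hst.trans htT) hq hb hφs).trans
      (mul_le_mul_left hC.le _)
  have hφtC : eLpNorm φt 2 μ ≤ ENNReal.ofReal C * N :=
    (eLpNorm_two_le_repConst_mul δ hα hα2 (hs.trans hst) htT hq hb hφt).trans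
      (mul_le_mul_left hC.le _)
  have hsubC : eLpNorm (φt - φs) 2 μ ≤ ENNReal.ofReal C * N * ENNReal.ofReal ((t - s) ^ δ) :=
    (eLpNorm_two_sub_le_repConst_mul hα hα2 hs hst htT hq ENNReal.ofReal_ne_top hδ0 hδγ hb hφs
      hφt).trans (mul_le_mul_left (mul_le_mul_left hC.le _) _)
  refine (eLpNorm_pi_prod_sub_prod_le_two_pow n one_le_two ENNReal.ofNat_ne_top
    (aestronglyMeasurable_of_memLambda hφt) (aestronglyMeasurable_of_memLambda hφs)
    hφtC hφsC hsubC).trans_eq ?_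
  rw [mul_pow, ← mul_assoc, ENNReal.ofReal_mul (by positivity), ENNReal.ofReal_mul (by positivity),
    ENNReal.ofReal_mul (by positivity), ENNReal.ofReal_pow hC0.le,
    ENNReal.ofReal_pow ENNReal.toReal_nonneg, ENNReal.ofReal_toReal hφb.eLpNorm_ne_top,
    ENNReal.ofReal_pow zero_le_two, ENNReal.ofReal_ofNat]

/-- Lemma 4.9.1: Hölder estimate for tensor powers of the representatives of
`b·1_{[0,t]}`: `‖φ_t^{⊗n} − φ_s^{⊗n}‖_{L²([0,T]^n)} ≤ 2^{n-1} C^n ‖φ_b‖_{L^p}^n (t-s)^δ`. -/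
theorem rep_tensor_holder_bound (T α p : ℝ) (hT : 0 < T) (hα : α ∈ Set.Ioo (0 : ℝ) (1 / 2))
    (hp : p ∈ Set.Ioo 2 (1 / α)) (δ : ℝ) (hδ0 : 0 < δ)
    (hδ : δ < min (min ((p - 2) / (2 * p)) α) ((1 - α * p) / p)) :
    ∃ C : ℝ, 0 < C ∧ ∀ b φb : ℝ → ℝ, memLambda T α b φb →
      MemLp φb (ENNReal.ofReal p) (volume.restrict (Set.Icc 0 T)) →
      ∀ n : ℕ, 1 ≤ n → ∀ s t : ℝ, 0 ≤ s → s ≤ t → t ≤ T →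
      ∀ φs φt : ℝ → ℝ,
        memLambda T α (Set.indicator (Set.Icc 0 s) b) φs →
        memLambda T α (Set.indicator (Set.Icc 0 t) b) φt →
        eLpNorm (fun u : Fin n → ℝ => (∏ i, φt (u i)) - ∏ i, φs (u i)) 2
            (Measure.pi fun _ : Fin n => volume.restrict (Set.Icc 0 T)) ≤
          ENNReal.ofReal ((2 : ℝ) ^ (n - 1) * C ^ n *
            (eLpNorm φb (ENNReal.ofReal p) (volume.restrict (Set.Icc 0 T))).toReal ^ n *
            (t - s) ^ δ) := by
  obtain ⟨C, hC, hbound⟩ := rep_tensor_holder_bound_general T hα.1 (Ioo_subset_Ico_self hp) hδ0.le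
    (hδ.le.trans ((min_le_left _ _).trans (min_le_left _ _)))
  exact ⟨C, hC, fun b φb hb hφb n _ => hbound b φb hb hφb n⟩
end

section
/- Let α ∈ (0,1/2) and p ∈ (2, 1/α). There exists a constant C, depending only on α, p and T, such that for every φ ∈ L^p([0,T]) and all 0 ≤ s ≤ t ≤ T, ( ∫_s^t (t-r)^{-2α} ( ∫_r^T |φ(u)| (u-r)^{α-1} du )² dr )^{1/2} ≤ C ‖φ‖_{L^p([0,T])} (t-s)^{(p-2)/(2p)}. -/
open MeasureTheory Real Set
open scoped ENNReal NNReal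

/-!
For `r < t` the substitution `u = r + (t - r) x` in the fractional integral produces the factor
`(t - r) ^ α`, which cancels the singular weight exactly:
`(t - r) ^ (-α) * ∫_r^∞ g(u) (u - r) ^ (α - 1) du = ∫_0^∞ x ^ (α - 1) g(t x + (1 - x) r) dx`.
By Minkowski's integral inequality the `L^q` norm in `r ∈ (s, t)` passes under the integral in `x`.
For fixed `x` the argument of `g` is affine in `r` with slope `1 - x`, so Hölder's inequality on
`(s, t)` and scaling bound the norm by `|1 - x| ^ (-1 / p) * ‖g‖_p * (t - s) ^ (1 / q - 1 / p)`.
What remains is `∫_0^∞ x ^ (α - 1) |1 - x| ^ (-1 / p) dx`, finite because `0 < α < 1 / p < 1`.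
-/

section Minkowski

variable {X Y : Type*} [MeasurableSpace X] [MeasurableSpace Y] {μ : Measure X} {ν : Measure Y}
  {p q : ℝ}

lemma eLpNorm'_le_of_forall_lintegral_mul_le [SigmaFinite μ] (hpq : p.HolderConjugate q)
    {f : X → ℝ≥0∞} {M : ℝ≥0∞}
    (h : ∀ k : X → ℝ≥0∞, Measurable k → ∫⁻ x, f x * k x ∂μ ≤ M * eLpNorm' k q μ) :
    eLpNorm' f p μ ≤ M := by
  rw [eLpNorm', one_div, ENNReal.rpow_inv_le_iff hpq.pos]
  refine le_of_forall_lt fun L hL => ?_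
  simp_rw [enorm_eq_self] at hL
  rw [lintegral_eq_nnreal] at hL
  simp only [lt_iSup_iff] at hL
  obtain ⟨φ, hφf, hLφ⟩ := hL
  rw [← SimpleFunc.lintegral_eq_lintegral] at hLφ
  obtain ⟨g, hgφ, hg_top, hLg⟩ := SimpleFunc.exists_lt_lintegral_simpleFunc_of_lt_lintegral hLφ
  -- Test against `g ^ (1 / q)`; as `I` is positive and finite, `I ^ (1 / q)` then cancels.
  set I := ∫⁻ x, (g x : ℝ≥0∞) ∂μ
  have hgf (x : X) : (g x : ℝ≥0∞) ^ (1 / p) ≤ f x := by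
    rw [one_div, ENNReal.rpow_inv_le_iff hpq.pos]
    exact (ENNReal.coe_le_coe.2 (hgφ x)).trans (hφf x)
  have hadd : 1 / p + 1 / q = 1 := by simpa using hpq.inv_add_inv_eq_one
  have hI : I ^ (1 / p) * I ^ (1 / q) ≤ M * I ^ (1 / q) :=
    calc I ^ (1 / p) * I ^ (1 / q)
        = ∫⁻ x, (g x : ℝ≥0∞) ^ (1 / p) * (g x : ℝ≥0∞) ^ (1 / q) ∂μ := by
          simp_rw [← ENNReal.rpow_add_of_nonneg _ _ hpq.one_div_nonneg hpq.symm.one_div_nonneg,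
            hadd, ENNReal.rpow_one, I]
      _ ≤ ∫⁻ x, f x * (g x : ℝ≥0∞) ^ (1 / q) ∂μ := by gcongr with x; exact hgf x
      _ ≤ M * eLpNorm' (fun x => (g x : ℝ≥0∞) ^ (1 / q)) q μ :=
          h _ (g.measurable.coe_nnreal_ennreal.pow_const _)
      _ = M * I ^ (1 / q) := by
          simp [eLpNorm', ← ENNReal.rpow_mul, inv_mul_cancel₀ hpq.symm.ne_zero, I]
  rw [ENNReal.mul_le_mul_iff_left ((ENNReal.rpow_pos hLg.bot_lt hg_top.ne).ne')
    (ENNReal.rpow_ne_top_of_nonneg hpq.symm.one_div_nonneg hg_top.ne), one_div,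
    ENNReal.rpow_inv_le_iff hpq.pos] at hI
  exact hLg.trans_le hI

theorem eLpNorm'_lintegral_le [SigmaFinite μ] [SFinite ν] (hp : 1 ≤ p) {F : X → Y → ℝ≥0∞}
    (hF : Measurable (Function.uncurry F)) :
    eLpNorm' (fun x => ∫⁻ y, F x y ∂ν) p μ ≤ ∫⁻ y, eLpNorm' (fun x => F x y) p μ ∂ν := by
  rcases hp.eq_or_lt with rfl | hp
  · simpa [eLpNorm'] using (lintegral_lintegral_swap hF.aemeasurable).le
  have hpq := Real.HolderConjugate.conjExponent hp
  refine eLpNorm'_le_of_forall_lintegral_mul_le hpq fun k hk => ?_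
  calc ∫⁻ x, (∫⁻ y, F x y ∂ν) * k x ∂μ
      = ∫⁻ x, ∫⁻ y, F x y * k x ∂ν ∂μ :=
        lintegral_congr fun x => (lintegral_mul_const _ hF.of_uncurry_left).symm
    _ = ∫⁻ y, ∫⁻ x, F x y * k x ∂μ ∂ν :=
        lintegral_lintegral_swap (hF.mul (hk.comp measurable_fst)).aemeasurable
    _ ≤ ∫⁻ y, eLpNorm' (fun x => F x y) p μ * eLpNorm' k p.conjExponent μ ∂ν :=
        lintegral_mono fun y => ENNReal.lintegral_mul_le_Lp_mul_Lq μ hpq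
          hF.of_uncurry_right.aemeasurable hk.aemeasurable
    _ = (∫⁻ y, eLpNorm' (fun x => F x y) p μ ∂ν) * eLpNorm' k p.conjExponent μ :=
        lintegral_mul_const _ ((hF.pow_const p).lintegral_prod_left'.pow_const _)

end Minkowski

section Affine

variable {b c : ℝ} {s : Set ℝ}

lemma setLIntegral_image_add_mul (hs : MeasurableSet s) (hc : c ≠ 0) (g : ℝ → ℝ≥0∞) :
    ∫⁻ y in (fun x => b + c * x) '' s, g y = ENNReal.ofReal |c| * ∫⁻ x in s, g (b + c * x) := by
  rw [lintegral_image_eq_lintegral_abs_deriv_mul hs (f' := fun _ => c), lintegral_const_mul']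
  · exact ENNReal.ofReal_ne_top
  · exact fun x _ => by simpa using (((hasDerivAt_id x).const_mul c).const_add b).hasDerivWithinAt
  · exact fun x _ y _ h => by simpa [hc] using h

lemma eLpNorm'_comp_add_mul_le {p : ℝ} (hp : 0 < p) (hs : MeasurableSet s) (hc : c ≠ 0)
    (g : ℝ → ℝ≥0∞) :
    eLpNorm' (fun x => g (b + c * x)) p (volume.restrict s) ≤
      ENNReal.ofReal (|c| ^ (-(1 / p))) * eLpNorm' g p volume := by
  have hc' : ENNReal.ofReal |c| ≠ 0 := by simpa using hc
  have key : ∫⁻ x in s, g (b + c * x) ^ p ≤ (ENNReal.ofReal |c|)⁻¹ * ∫⁻ y, g y ^ p := by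
    rw [← ENNReal.mul_le_iff_le_inv hc' ENNReal.ofReal_ne_top,
      ← setLIntegral_image_add_mul hs hc fun y => g y ^ p]
    exact setLIntegral_le_lintegral _ _
  calc (∫⁻ x in s, g (b + c * x) ^ p) ^ (1 / p)
      ≤ ((ENNReal.ofReal |c|)⁻¹ * ∫⁻ y, g y ^ p) ^ (1 / p) := by gcongr
    _ = ENNReal.ofReal (|c| ^ (-(1 / p))) * (∫⁻ y, g y ^ p) ^ (1 / p) := by
      rw [ENNReal.mul_rpow_of_nonneg _ _ (by positivity), ENNReal.inv_rpow, ← ENNReal.rpow_neg,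
        ENNReal.ofReal_rpow_of_pos (abs_pos.2 hc)]

lemma eLpNorm'_Ioo_comp_add_mul_le {p q s t : ℝ} (hq : 0 < q) (hqp : q ≤ p) (hst : s ≤ t)
    (hc : c ≠ 0) {g : ℝ → ℝ≥0∞} (hg : Measurable g) :
    eLpNorm' (fun x => g (b + c * x)) q (volume.restrict (Ioo s t)) ≤
      ENNReal.ofReal (|c| ^ (-(1 / p))) *
        (eLpNorm' g p volume * ENNReal.ofReal ((t - s) ^ (1 / q - 1 / p))) := by
  have hg' : Measurable fun x => g (b + c * x) := by fun_prop
  have hexp : 0 ≤ 1 / q - 1 / p := sub_nonneg.2 (one_div_le_one_div_of_le hq hqp)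
  refine (eLpNorm'_le_eLpNorm'_mul_rpow_measure_univ hq hqp
    hg'.aestronglyMeasurable).trans ?_
  rw [Measure.restrict_apply_univ, Real.volume_Ioo,
    ENNReal.ofReal_rpow_of_nonneg (sub_nonneg.2 hst) hexp, ← mul_assoc]
  gcongr
  exact eLpNorm'_comp_add_mul_le (hq.trans_le hqp) measurableSet_Ioo hc g

end Affine

section Constant

/-- The Mellin transform at `α` of `x ↦ |1 - x| ^ (-θ)`. For `θ = 1 / p` it is the constant in the
weighted `L^p` bound for the right-sided fractional integral of order `α`. -/
noncomputable def rightFracConst (α θ : ℝ) : ℝ≥0∞ :=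
  ∫⁻ x in Ioi (0 : ℝ), ENNReal.ofReal (x ^ (α - 1) * |1 - x| ^ (-θ))

lemma locallyIntegrable_abs_const_sub_rpow {r : ℝ} (hr : -1 < r) (a : ℝ) :
    LocallyIntegrable fun x : ℝ => |a - x| ^ r := by
  have h : LocallyIntegrable fun y : ℝ => |y| ^ r :=
    locallyIntegrable_of_norm_le_rpow (α := -r) (C := 1) (by simp)
      (by simpa using neg_lt.1 hr) (ae_of_all _ fun y => by simp [abs_rpow_of_nonneg])
      (Measurable.aestronglyMeasurable (by fun_prop))
  rw [← (Measure.measurePreserving_sub_left volume a).map_eq] at h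
  exact (locallyIntegrable_map_homeomorph (Homeomorph.subLeft a)).1 h

lemma rightFracConst_lt_top {α θ : ℝ} (hα : 0 < α) (hαθ : α < θ) (hθ : θ < 1) :
    rightFracConst α θ < ∞ := by
  have htop : (fun x : ℝ => |1 - x| ^ (-θ)) =O[Filter.atTop] (· ^ (-θ)) := by
    refine .of_bound ((1 / 2) ^ (-θ)) ?_
    filter_upwards [Filter.eventually_ge_atTop 2] with x hx
    have hx' : 1 / 2 * x ≤ |1 - x| := by rw [abs_of_neg] <;> linarith
    rw [norm_of_nonneg (by positivity), norm_of_nonneg (by positivity),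
      ← mul_rpow (by positivity) (by positivity)]
    exact rpow_le_rpow_of_nonpos (by positivity) hx' (by linarith)
  have hzero : (fun x : ℝ => |1 - x| ^ (-θ)) =O[nhdsWithin 0 (Ioi 0)] (· ^ (-0 : ℝ)) := by
    have hcont : ContinuousAt (fun x : ℝ => |1 - x| ^ (-θ)) 0 :=
      ContinuousAt.rpow_const (by fun_prop) (by simp)
    simpa using (hcont.tendsto.mono_left nhdsWithin_le_nhds).isBigO_one ℝ
  exact (mellin_convergent_of_isBigO_scalar
    ((locallyIntegrable_abs_const_sub_rpow (by linarith) 1).locallyIntegrableOn _)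
    htop hαθ hzero hα).lintegral_lt_top

end Constant

/-- The right-sided (Weyl) fractional integral of order `α` of a nonnegative function, taken over
the whole half-line `(r, ∞)` and without the normalising factor `1 / Γ(α)`. -/
noncomputable def rightFracLIntegral (α : ℝ) (g : ℝ → ℝ≥0∞) (r : ℝ) : ℝ≥0∞ :=
  ∫⁻ u in Ioi r, ENNReal.ofReal ((u - r) ^ (α - 1)) * g u

section RightFracLIntegral

variable {E : Type*} [NormedAddCommGroup E] {α : ℝ} {g : ℝ → ℝ≥0∞}

lemma rightFracLIntegral_congr_ae {f : ℝ → ℝ≥0∞} (h : f =ᵐ[volume] g) :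
    rightFracLIntegral α f = rightFracLIntegral α g := by
  funext r
  exact lintegral_congr_ae (ae_restrict_of_ae (h.mono fun u hu => by simp only [hu]))

lemma rpow_neg_mul_rightFracLIntegral {r t : ℝ} (hrt : r < t) :
    ENNReal.ofReal ((t - r) ^ (-α)) * rightFracLIntegral α g r =
      ∫⁻ x in Ioi (0 : ℝ), ENNReal.ofReal (x ^ (α - 1)) * g (t * x + (1 - x) * r) := by
  have hd : 0 < t - r := sub_pos.2 hrt
  have himage : (fun x => r + (t - r) * x) '' Ioi 0 = Ioi r := by
    rw [← image_image (r + ·) ((t - r) * ·), image_mul_left_Ioi hd, image_const_add_Ioi,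
      mul_zero, add_zero]
  rw [rightFracLIntegral, ← himage, setLIntegral_image_add_mul measurableSet_Ioi hd.ne',
    abs_of_pos hd, ← mul_assoc, ← lintegral_const_mul' _ _ (by finiteness)]
  refine setLIntegral_congr_fun measurableSet_Ioi fun x (hx : 0 < x) => ?_
  have hpow : (t - r) ^ (-α) * (t - r) * ((t - r) * x) ^ (α - 1) = x ^ (α - 1) := by
    rw [mul_rpow hd.le hx.le, ← mul_assoc, ← rpow_add_one hd.ne', ← rpow_add hd]
    simp
  simp only [add_sub_cancel_left]
  rw [← mul_assoc, ← ENNReal.ofReal_mul (by positivity), ← ENNReal.ofReal_mul (by positivity),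
    hpow, show r + (t - r) * x = t * x + (1 - x) * r by ring]

theorem eLpNorm'_rpow_neg_mul_rightFracLIntegral_le {p q s t : ℝ} (hq : 1 ≤ q) (hqp : q ≤ p)
    (hst : s ≤ t) (hg : AEMeasurable g) :
    eLpNorm' (fun r => ENNReal.ofReal ((t - r) ^ (-α)) * rightFracLIntegral α g r) q
        (volume.restrict (Ioo s t)) ≤
      rightFracConst α (1 / p) *
        (eLpNorm' g p volume * ENNReal.ofReal ((t - s) ^ (1 / q - 1 / p))) := by
  wlog hg' : Measurable g generalizing g
  · rw [rightFracLIntegral_congr_ae hg.ae_eq_mk, eLpNorm'_congr_ae hg.ae_eq_mk]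
    exact this hg.measurable_mk.aemeasurable hg.measurable_mk
  set B := eLpNorm' g p volume * ENNReal.ofReal ((t - s) ^ (1 / q - 1 / p))
  calc eLpNorm' (fun r => ENNReal.ofReal ((t - r) ^ (-α)) * rightFracLIntegral α g r) q
          (volume.restrict (Ioo s t))
      = eLpNorm' (fun r => ∫⁻ x in Ioi (0 : ℝ),
          ENNReal.ofReal (x ^ (α - 1)) * g (t * x + (1 - x) * r)) q
          (volume.restrict (Ioo s t)) := by
        refine eLpNorm'_congr_ae ?_
        filter_upwards [ae_restrict_mem measurableSet_Ioo] with r hr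
        exact rpow_neg_mul_rightFracLIntegral hr.2
    _ ≤ ∫⁻ x in Ioi (0 : ℝ), eLpNorm' (fun r =>
          ENNReal.ofReal (x ^ (α - 1)) * g (t * x + (1 - x) * r)) q (volume.restrict (Ioo s t)) :=
        eLpNorm'_lintegral_le hq (by unfold Function.uncurry; fun_prop)
    _ ≤ ∫⁻ x in Ioi (0 : ℝ), ENNReal.ofReal (x ^ (α - 1) * |1 - x| ^ (-(1 / p))) * B := by
        refine lintegral_mono_ae ?_
        filter_upwards [ae_restrict_mem measurableSet_Ioi,
          ae_restrict_of_ae (Measure.ae_ne volume 1)] with x (hx : 0 < x) hx1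
        rw [ENNReal.ofReal_mul (by positivity), mul_assoc]
        refine (eLpNorm'_le_nnreal_smul_eLpNorm'_of_ae_le_mul'
          (c := (x ^ (α - 1)).toNNReal) (g := fun r => g (t * x + (1 - x) * r))
          (ae_of_all _ fun r => by simp [ENNReal.ofReal]) (by positivity)).trans ?_
        exact mul_right_mono (eLpNorm'_Ioo_comp_add_mul_le (by positivity) hqp hst
          (sub_ne_zero.2 hx1.symm) hg')
    _ = rightFracConst α (1 / p) * B := lintegral_mul_const _ (by fun_prop)

lemma setLIntegral_Ioo_le_rightFracLIntegral {a b r : ℝ} (har : a ≤ r) (φ : ℝ → E) :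
    ∫⁻ u in Ioo r b, ENNReal.ofReal (‖φ u‖ * (u - r) ^ (α - 1)) ≤
      rightFracLIntegral α (fun u => ‖(Icc a b).indicator φ u‖ₑ) r := by
  refine (setLIntegral_mono_ae' measurableSet_Ioo (ae_of_all _ fun u hu => ?_)).trans
    (lintegral_mono_set Ioo_subset_Ioi_self)
  have hu' : u ∈ Icc a b := ⟨har.trans hu.1.le, hu.2.le⟩
  simp [hu', mul_comm, ENNReal.ofReal_mul]

theorem lintegral_rpow_neg_mul_lintegral_rpow_le {p q a b s t : ℝ} (hq : 1 ≤ q) (hqp : q ≤ p)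
    (has : a ≤ s) (hst : s ≤ t) {φ : ℝ → E}
    (hφ : AEStronglyMeasurable φ (volume.restrict (Icc a b))) :
    (∫⁻ r in Ioo s t, ENNReal.ofReal ((t - r) ^ (-(q * α))) *
        (∫⁻ u in Ioo r b, ENNReal.ofReal (‖φ u‖ * (u - r) ^ (α - 1))) ^ q) ^ (1 / q) ≤
      rightFracConst α (1 / p) *
        (eLpNorm φ (ENNReal.ofReal p) (volume.restrict (Icc a b)) *
          ENNReal.ofReal ((t - s) ^ (1 / q - 1 / p))) := by
  have hp : 0 < p := by linarith
  set g : ℝ → ℝ≥0∞ := fun u => ‖(Icc a b).indicator φ u‖ₑ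
  have hg : AEMeasurable g := ((aestronglyMeasurable_indicator_iff measurableSet_Icc).2 hφ).enorm
  have hnorm : eLpNorm φ (ENNReal.ofReal p) (volume.restrict (Icc a b)) = eLpNorm' g p volume := by
    rw [← eLpNorm_indicator_eq_eLpNorm_restrict measurableSet_Icc, ← eLpNorm_enorm,
      eLpNorm_eq_eLpNorm' (by simpa) (by simp), ENNReal.toReal_ofReal hp.le]
  rw [hnorm]
  refine le_trans ?_ (eLpNorm'_rpow_neg_mul_rightFracLIntegral_le hq hqp hst hg)
  rw [eLpNorm'_eq_lintegral_enorm]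
  gcongr ?_ ^ (1 / q)
  refine setLIntegral_mono' measurableSet_Ioo fun r hr => ?_
  have hd : 0 < t - r := sub_pos.2 hr.2
  rw [enorm_eq_self, ENNReal.mul_rpow_of_nonneg _ _ (by positivity),
    ENNReal.ofReal_rpow_of_nonneg (by positivity) (by positivity), ← rpow_mul hd.le,
    neg_mul, mul_comm α]
  gcongr
  exact setLIntegral_Ioo_le_rightFracLIntegral (has.trans hr.1.le) φ

end RightFracLIntegral

theorem I3_bound_general {E : Type*} [NormedAddCommGroup E] {α p q : ℝ} (hα : 0 < α) (hq : 1 ≤ q)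
    (hqp : q ≤ p) (hp : 1 < p) (hpα : p < 1 / α) :
    ∃ C : ℝ, 0 < C ∧ ∀ (a b : ℝ) (φ : ℝ → E),
      MemLp φ (ENNReal.ofReal p) (volume.restrict (Icc a b)) →
      ∀ s t : ℝ, a ≤ s → s ≤ t →
      (∫⁻ r in Ioo s t, ENNReal.ofReal ((t - r) ^ (-(q * α))) *
          (∫⁻ u in Ioo r b, ENNReal.ofReal (‖φ u‖ * (u - r) ^ (α - 1))) ^ q) ^ (1 / q) ≤
        ENNReal.ofReal (C *
          (eLpNorm φ (ENNReal.ofReal p) (volume.restrict (Icc a b))).toReal *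
          (t - s) ^ ((p - q) / (q * p))) := by
  have hp0 : 0 < p := one_pos.trans hp
  have hK : rightFracConst α (1 / p) < ∞ :=
    rightFracConst_lt_top hα ((lt_one_div hα hp0).2 hpα) ((div_lt_one hp0).2 hp)
  have hexp : (p - q) / (q * p) = 1 / q - 1 / p := by field_simp
  refine ⟨(rightFracConst α (1 / p)).toReal + 1, by positivity, fun a b φ hφ s t has hst => ?_⟩
  refine (lintegral_rpow_neg_mul_lintegral_rpow_le hq hqp has hst hφ.1).trans ?_
  rw [hexp, ENNReal.ofReal_mul (by positivity), ENNReal.ofReal_mul (by positivity),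
    ENNReal.ofReal_toReal hφ.2.ne, mul_assoc]
  gcongr
  exact ENNReal.le_ofReal_iff_toReal_le hK.ne (by positivity) |>.2 (by simp)

/-- Estimate of the term `I₃` in the proof of Lemma 4.9.1: there is `C = C(α,p,T)` with
`(∫_s^t (t-r)^{-2α} (∫_r^T |φ(u)|(u-r)^{α-1} du)² dr)^{1/2}
  ≤ C ‖φ‖_{L^p([0,T])} (t-s)^{(p-2)/(2p)}`. -/
theorem I3_bound (T α p : ℝ) (hT : 0 < T) (hα : α ∈ Set.Ioo (0 : ℝ) (1 / 2))
    (hp : p ∈ Set.Ioo 2 (1 / α)) :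
    ∃ C : ℝ, 0 < C ∧ ∀ φ : ℝ → ℝ,
      MemLp φ (ENNReal.ofReal p) (volume.restrict (Set.Icc 0 T)) →
      ∀ s t : ℝ, 0 ≤ s → s ≤ t → t ≤ T →
      (∫⁻ r in Set.Ioo s t, ENNReal.ofReal ((t - r) ^ (-(2 * α))) *
          (∫⁻ u in Set.Ioo r T, ENNReal.ofReal (|φ u| * (u - r) ^ (α - 1))) ^ 2) ^ (1 / 2 : ℝ) ≤
        ENNReal.ofReal (C *
          (eLpNorm φ (ENNReal.ofReal p) (volume.restrict (Set.Icc 0 T))).toReal *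
          (t - s) ^ ((p - 2) / (2 * p))) := by
  obtain ⟨C, hC, h⟩ := I3_bound_general (E := ℝ) (q := 2) hα.1 one_le_two hp.1.le
    (one_lt_two.trans hp.1) hp.2
  exact ⟨C, hC, fun φ hφ s t hs hst _ => by
    simpa only [ENNReal.rpow_two, norm_eq_abs] using h 0 T φ hφ s t hs hst⟩
end

section
/- Let α ∈ (0,1/2), let f ∈ Λ^α_T with representative φ_f, let δ ∈ (0, α), and let 0 ≤ r < s < t ≤ T. Then r^α ∫_s^t |f(u)| u^{-α} (u-r)^{-1-α} du ≤ ( (t-s)^{δ} / (α Γ(α)) ) (s-r)^{-α} ∫_s^t |φ_f(θ)| (θ-r)^{(α-δ)-1} dθ + (1/Γ(α)) (s-r)^{-α-δ} ∫_s^t (u-r)^{δ-1} ( ∫_t^T |φ_f(θ)| (θ-u)^{α-1} dθ ) du. -/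
open MeasureTheory Real Set

/-!
For `r ≤ u < θ` one has `r^α θ^{-α} ≤ 1`, so `r^α u^{-α} |f(u)|` is at most `1/Γ(α)` times
the potential `∫_u^T |φ(θ)| (θ-u)^{α-1} dθ`, which is split at `t`. On the near part `θ < t`,
Tonelli's theorem leaves the kernel integral
`∫_s^θ (u-r)^{-1-α} (θ-u)^{α-1} du = ((θ-s)/(s-r))^α / (α (θ-r))`, and
`(θ-s)^α ≤ (t-s)^δ (θ-r)^{α-δ}`. On the far part `θ > t`,
`(u-r)^{-1-α} ≤ (s-r)^{-α-δ} (u-r)^{δ-1}`.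
-/

open scoped ENNReal

/-- The potential `∫_S |φ(θ)| (θ - u)^{α-1} dθ`, which controls fractional integrals of order `α`.
It takes values in `[0, ∞]`, so a divergent potential is `∞` rather than the junk value `0`. -/
noncomputable def fracPotential (α : ℝ) (φ : ℝ → ℝ) (S : Set ℝ) (u : ℝ) : ℝ≥0∞ :=
  ∫⁻ θ in S, ENNReal.ofReal (|φ θ| * (θ - u) ^ (α - 1))

section General

theorem lintegral_Ioo_ofReal_eq_sub_of_hasDerivAt_of_nonneg {F F' : ℝ → ℝ} {a b : ℝ}
    (hab : a ≤ b) (hcont : ContinuousOn F (Icc a b))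
    (hderiv : ∀ x ∈ Ioo a b, HasDerivAt F (F' x) x) (hnonneg : ∀ x ∈ Ioo a b, 0 ≤ F' x) :
    ∫⁻ x in Ioo a b, ENNReal.ofReal (F' x) = ENNReal.ofReal (F b - F a) := by
  have hint : IntegrableOn F' (Ioc a b) :=
    intervalIntegral.integrableOn_deriv_of_nonneg hcont hderiv hnonneg
  have hnonneg_ae : 0 ≤ᵐ[volume.restrict (Ioo a b)] F' :=
    (ae_restrict_mem measurableSet_Ioo).mono hnonneg
  rw [← ofReal_integral_eq_lintegral_ofReal (hint.mono_set Ioo_subset_Ioc_self) hnonneg_ae,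
    ← integral_Ioc_eq_integral_Ioo, ← intervalIntegral.integral_of_le hab,
    intervalIntegral.integral_eq_sub_of_hasDerivAt_of_le hab hcont hderiv
      ((intervalIntegrable_iff_integrableOn_Ioc_of_le hab).2 hint)]

variable {X : Type*} [LinearOrder X] [TopologicalSpace X] [OrderClosedTopology X]
  [SecondCountableTopology X] [MeasurableSpace X] [BorelSpace X]

theorem lintegral_Ioo_lintegral_Ioo_swap {μ ν : Measure X} [SFinite μ] [SFinite ν] {a b : X}
    {F : X → X → ℝ≥0∞}
    (hF : AEMeasurable (Function.uncurry F) ((μ.restrict (Ioo a b)).prod (ν.restrict (Ioo a b)))) :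
    ∫⁻ x in Ioo a b, ∫⁻ y in Ioo x b, F x y ∂ν ∂μ =
      ∫⁻ y in Ioo a b, ∫⁻ x in Ioo a y, F x y ∂μ ∂ν := by
  have hind : AEMeasurable (Function.uncurry fun x y ↦ (Ioi x).indicator (F x) y)
      ((μ.restrict (Ioo a b)).prod (ν.restrict (Ioo a b))) :=
    hF.indicator (measurableSet_lt measurable_fst measurable_snd)
  calc ∫⁻ x in Ioo a b, ∫⁻ y in Ioo x b, F x y ∂ν ∂μ
      = ∫⁻ x in Ioo a b, ∫⁻ y in Ioo a b, (Ioi x).indicator (F x) y ∂ν ∂μ := by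
        refine setLIntegral_congr_fun measurableSet_Ioo fun x hx ↦ ?_
        have hset : Ioi x ∩ Ioo a b = Ioo x b := by
          ext y; exact ⟨fun h ↦ ⟨h.1, h.2.2⟩, fun h ↦ ⟨h.1, hx.1.trans h.1, h.2⟩⟩
        simp only [setLIntegral_indicator measurableSet_Ioi, hset]
    _ = ∫⁻ y in Ioo a b, ∫⁻ x in Ioo a b, (Ioi x).indicator (F x) y ∂μ ∂ν :=
        lintegral_lintegral_swap hind
    _ = ∫⁻ y in Ioo a b, ∫⁻ x in Ioo a y, F x y ∂μ ∂ν := by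
        refine setLIntegral_congr_fun measurableSet_Ioo fun y hy ↦ ?_
        have hset : Iio y ∩ Ioo a b = Ioo a y := by
          ext x; exact ⟨fun h ↦ ⟨h.2.1, h.1⟩, fun h ↦ ⟨h.2, h.1, h.2.trans hy.2⟩⟩
        have hswap (x : X) :
            (Ioi x).indicator (F x) y = (Iio y).indicator (fun x ↦ F x y) x := rfl
        simp only [hswap, setLIntegral_indicator measurableSet_Iio, hset]

end General

section Kernel

variable {α δ r s t u θ : ℝ}

theorem hasDerivAt_neg_div_rpow_div (hα : α ≠ 0) (hru : r < u) (huθ : u < θ) :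
    HasDerivAt (fun v ↦ -(((θ - v) / (v - r)) ^ α / (α * (θ - r))))
      ((u - r) ^ (-1 - α) * (θ - u) ^ (α - 1)) u := by
  have hur : 0 < u - r := sub_pos.2 hru
  have hθu : 0 < θ - u := sub_pos.2 huθ
  have hθr : 0 < θ - r := sub_pos.2 (hru.trans huθ)
  have hquot : HasDerivAt (fun v ↦ (θ - v) / (v - r))
      (((-1) * (u - r) - (θ - u) * 1) / (u - r) ^ 2) u :=
    ((hasDerivAt_id u).const_sub θ).div ((hasDerivAt_id u).sub_const r) hur.ne'
  have hexp : (u - r) ^ (-1 - α) = ((u - r) ^ (α - 1))⁻¹ * ((u - r) ^ 2)⁻¹ := by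
    rw [← rpow_neg hur.le, ← rpow_natCast, ← rpow_neg hur.le, ← rpow_add hur]
    congr 1; push_cast; ring
  refine (((hquot.rpow_const (p := α) (Or.inl (div_pos hθu hur).ne')).div_const
    (α * (θ - r))).neg).congr_deriv ?_
  rw [div_rpow hθu.le hur.le, hexp]
  field_simp
  ring

theorem lintegral_Ioo_rpow_mul_rpow (hα : 0 < α) (hrs : r < s) (hsθ : s ≤ θ) :
    ∫⁻ u in Ioo s θ, ENNReal.ofReal ((u - r) ^ (-1 - α) * (θ - u) ^ (α - 1)) =
      ENNReal.ofReal (((θ - s) / (s - r)) ^ α / (α * (θ - r))) := by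
  have hcont : ContinuousOn (fun v ↦ -(((θ - v) / (v - r)) ^ α / (α * (θ - r)))) (Icc s θ) := by
    have hquot : ContinuousOn (fun v ↦ (θ - v) / (v - r)) (Icc s θ) :=
      ContinuousOn.div (by fun_prop) (by fun_prop) fun v hv ↦
        (sub_pos.2 (hrs.trans_le hv.1)).ne'
    exact ((hquot.rpow_const fun _ _ ↦ Or.inr hα.le).div_const _).neg
  rw [lintegral_Ioo_ofReal_eq_sub_of_hasDerivAt_of_nonneg hsθ hcont
    (fun u hu ↦ hasDerivAt_neg_div_rpow_div hα.ne' (hrs.trans hu.1) hu.2)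
    (fun u hu ↦ mul_nonneg (rpow_nonneg (sub_pos.2 (hrs.trans hu.1)).le _)
      (rpow_nonneg (sub_pos.2 hu.2).le _))]
  simp [zero_rpow hα.ne']

theorem div_rpow_div_le (hα : 0 < α) (hδ : δ ∈ Icc 0 α) (hrs : r < s) (hsθ : s < θ)
    (hθt : θ ≤ t) :
    ((θ - s) / (s - r)) ^ α / (α * (θ - r)) ≤
      (t - s) ^ δ / α * (s - r) ^ (-α) * (θ - r) ^ (α - δ - 1) := by
  have hsr : 0 < s - r := sub_pos.2 hrs
  have hθs : 0 < θ - s := sub_pos.2 hsθ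
  have hθr : 0 < θ - r := by linarith
  have hsplit : (θ - s) ^ α ≤ (t - s) ^ δ * (θ - r) ^ (α - δ) := by
    calc (θ - s) ^ α = (θ - s) ^ δ * (θ - s) ^ (α - δ) := by
          rw [← rpow_add hθs, add_sub_cancel]
      _ ≤ (t - s) ^ δ * (θ - r) ^ (α - δ) := by
          have hts : 0 ≤ t - s := by linarith
          have hδ0 : 0 ≤ δ := hδ.1
          have hαδ : 0 ≤ α - δ := sub_nonneg.2 hδ.2
          gcongr
  calc ((θ - s) / (s - r)) ^ α / (α * (θ - r))
      = (θ - s) ^ α / ((s - r) ^ α * (α * (θ - r))) := by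
        rw [div_rpow hθs.le hsr.le, div_div]
    _ ≤ (t - s) ^ δ * (θ - r) ^ (α - δ) / ((s - r) ^ α * (α * (θ - r))) := by gcongr
    _ = (t - s) ^ δ / α * (s - r) ^ (-α) * (θ - r) ^ (α - δ - 1) := by
        rw [rpow_neg hsr.le, rpow_sub_one hθr.ne']
        field_simp

theorem rpow_neg_one_sub_le_mul_rpow (hαδ : 0 ≤ α + δ) (hrs : r < s) (hsu : s ≤ u) :
    (u - r) ^ (-1 - α) ≤ (s - r) ^ (-α - δ) * (u - r) ^ (δ - 1) := by
  have hsr : 0 < s - r := sub_pos.2 hrs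
  have hur : 0 < u - r := by linarith
  calc (u - r) ^ (-1 - α) = (u - r) ^ (-α - δ) * (u - r) ^ (δ - 1) := by
        rw [← rpow_add hur]; ring_nf
    _ ≤ (s - r) ^ (-α - δ) * (u - r) ^ (δ - 1) := by
        gcongr ?_ * _
        exact rpow_le_rpow_of_nonpos hsr (by linarith) (by linarith)

end Kernel

section FractionalIntegral

variable {T α r u : ℝ}

theorem ofReal_abs_fracInt_le (hα : 0 < α) (g : ℝ → ℝ) :
    ENNReal.ofReal |fracInt T α g u| ≤
      ENNReal.ofReal (1 / Gamma α) * fracPotential α g (Ioo u T) u := by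
  have hΓ : 0 < 1 / Gamma α := one_div_pos.2 (Gamma_pos_of_pos hα)
  rw [fracInt, abs_mul, abs_of_pos hΓ, ENNReal.ofReal_mul hΓ.le, ← enorm_eq_ofReal_abs]
  gcongr
  refine (enorm_integral_le_lintegral_enorm _).trans
    (setLIntegral_mono' measurableSet_Ioo fun θ hθ ↦ ?_)
  rw [enorm_eq_ofReal_abs, abs_mul, abs_of_nonneg (rpow_nonneg (sub_pos.2 hθ.1).le _)]

theorem ofReal_rpow_mul_abs_fracInt_le (hα : 0 < α) (hr : 0 ≤ r) (hru : r ≤ u) (φ : ℝ → ℝ) :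
    ENNReal.ofReal (r ^ α * |fracInt T α (fun θ ↦ θ ^ (-α) * φ θ) u|) ≤
      ENNReal.ofReal (1 / Gamma α) * fracPotential α φ (Ioo u T) u := by
  rw [ENNReal.ofReal_mul (by positivity)]
  refine (mul_le_mul_right (ofReal_abs_fracInt_le hα _) _).trans ?_
  rw [mul_left_comm, fracPotential, ← lintegral_const_mul' _ _ ENNReal.ofReal_ne_top]
  gcongr
  refine setLIntegral_mono' measurableSet_Ioo fun θ hθ ↦ ?_
  have hθ0 : 0 < θ := (hr.trans hru).trans_lt hθ.1
  have hθu : 0 ≤ (θ - u) ^ (α - 1) := rpow_nonneg (sub_pos.2 hθ.1).le _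
  have hweight : r ^ α * θ ^ (-α) ≤ 1 := by
    rw [rpow_neg hθ0.le, ← div_eq_mul_inv, div_le_one (by positivity)]
    exact rpow_le_rpow hr (hru.trans hθ.1.le) hα.le
  rw [← ENNReal.ofReal_mul (by positivity)]
  refine ENNReal.ofReal_le_ofReal ?_
  calc r ^ α * (|θ ^ (-α) * φ θ| * (θ - u) ^ (α - 1))
      = r ^ α * θ ^ (-α) * (|φ θ| * (θ - u) ^ (α - 1)) := by
        rw [abs_mul, abs_of_pos (rpow_pos_of_pos hθ0 _)]; ring
    _ ≤ |φ θ| * (θ - u) ^ (α - 1) := mul_le_of_le_one_left (by positivity) hweight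

variable {s t : ℝ} {f φ : ℝ → ℝ}

theorem ofReal_mul_lintegral_le_lintegral_mul_fracPotential (hα : 0 < α) (hr : 0 ≤ r)
    (hrs : r ≤ s)
    (hf : ∀ᵐ u ∂volume.restrict (Ioo s t),
      f u = u ^ α * fracInt T α (fun θ ↦ θ ^ (-α) * φ θ) u) :
    ENNReal.ofReal (r ^ α) *
        ∫⁻ u in Ioo s t, ENNReal.ofReal (|f u| * u ^ (-α) * (u - r) ^ (-1 - α)) ≤
      ENNReal.ofReal (1 / Gamma α) *
        ∫⁻ u in Ioo s t, ENNReal.ofReal ((u - r) ^ (-1 - α)) *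
          fracPotential α φ (Ioo u T) u := by
  simp only [← lintegral_const_mul' _ _ ENNReal.ofReal_ne_top]
  refine lintegral_mono_ae ?_
  filter_upwards [hf, ae_restrict_mem measurableSet_Ioo] with u hfu hu
  have hru : r < u := hrs.trans_lt hu.1
  have hu0 : 0 < u := hr.trans_lt hru
  have hur : 0 < u - r := sub_pos.2 hru
  have hcancel : r ^ α * (|f u| * u ^ (-α) * (u - r) ^ (-1 - α)) =
      (u - r) ^ (-1 - α) * (r ^ α * |fracInt T α (fun θ ↦ θ ^ (-α) * φ θ) u|) := by
    rw [hfu, abs_mul, abs_of_pos (rpow_pos_of_pos hu0 α), rpow_neg hu0.le]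
    field_simp
  rw [← ENNReal.ofReal_mul (by positivity), hcancel, ENNReal.ofReal_mul (by positivity),
    mul_left_comm (ENNReal.ofReal (1 / _))]
  gcongr
  exact ofReal_rpow_mul_abs_fracInt_le hα hr hru.le φ

end FractionalIntegral

section Potential

variable {T α δ r s t : ℝ} {φ : ℝ → ℝ}

theorem fracPotential_Ioo_le_add (a b c u : ℝ) :
    fracPotential α φ (Ioo a c) u ≤
      fracPotential α φ (Ioo a b) u + fracPotential α φ (Ioo b c) u := by
  unfold fracPotential
  rw [setLIntegral_congr (Ioo_ae_eq_Ico (a := b) (b := c))]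
  exact (lintegral_mono_set Ioo_subset_Ioo_union_Ico).trans (lintegral_union_le _ _ _)

theorem aemeasurable_fracPotential {S : Set ℝ} {μ : Measure ℝ} [SFinite μ]
    (hφ : AEMeasurable φ (volume.restrict S)) : AEMeasurable (fracPotential α φ S) μ := by
  have hker : AEMeasurable (fun p : ℝ × ℝ ↦ (p.2 - p.1) ^ (α - 1))
      (μ.prod (volume.restrict S)) := by fun_prop
  exact (hφ.comp_snd.abs.mul hker).ennreal_ofReal.lintegral_prod_right'

theorem lintegral_mul_fracPotential_Ioo_le_add {w : ℝ → ℝ≥0∞}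
    (hw : AEMeasurable w (volume.restrict (Ioo s t)))
    (hφ : AEMeasurable φ (volume.restrict (Ioo t T))) :
    ∫⁻ u in Ioo s t, w u * fracPotential α φ (Ioo u T) u ≤
      (∫⁻ u in Ioo s t, w u * fracPotential α φ (Ioo u t) u) +
        ∫⁻ u in Ioo s t, w u * fracPotential α φ (Ioo t T) u := by
  have hfar : AEMeasurable (fun u ↦ w u * fracPotential α φ (Ioo t T) u)
      (volume.restrict (Ioo s t)) := hw.mul (aemeasurable_fracPotential hφ)
  rw [← lintegral_add_right' _ hfar]
  simp only [← mul_add]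
  gcongr
  exact fracPotential_Ioo_le_add _ _ _ _

theorem lintegral_mul_fracPotential_Ioo_eq (hα : 0 < α) (hrs : r < s)
    (hφ : AEMeasurable φ (volume.restrict (Ioo s t))) :
    ∫⁻ u in Ioo s t, ENNReal.ofReal ((u - r) ^ (-1 - α)) * fracPotential α φ (Ioo u t) u =
      ∫⁻ θ in Ioo s t,
        ENNReal.ofReal |φ θ| * ENNReal.ofReal (((θ - s) / (s - r)) ^ α / (α * (θ - r))) := by
  calc ∫⁻ u in Ioo s t, ENNReal.ofReal ((u - r) ^ (-1 - α)) * fracPotential α φ (Ioo u t) u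
      = ∫⁻ u in Ioo s t, ∫⁻ θ in Ioo u t, ENNReal.ofReal |φ θ| *
          ENNReal.ofReal ((u - r) ^ (-1 - α) * (θ - u) ^ (α - 1)) := by
        refine setLIntegral_congr_fun measurableSet_Ioo fun u hu ↦ ?_
        have hur : 0 ≤ (u - r) ^ (-1 - α) := rpow_nonneg (sub_pos.2 (hrs.trans hu.1)).le _
        simp only [fracPotential, ← lintegral_const_mul' _ _ ENNReal.ofReal_ne_top,
          ← ENNReal.ofReal_mul hur, ← ENNReal.ofReal_mul (abs_nonneg _), mul_left_comm]
    _ = ∫⁻ θ in Ioo s t, ∫⁻ u in Ioo s θ, ENNReal.ofReal |φ θ| *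
          ENNReal.ofReal ((u - r) ^ (-1 - α) * (θ - u) ^ (α - 1)) := by
        have hker : Measurable fun p : ℝ × ℝ ↦
            ENNReal.ofReal ((p.1 - r) ^ (-1 - α) * (p.2 - p.1) ^ (α - 1)) := by fun_prop
        exact lintegral_Ioo_lintegral_Ioo_swap
          (hφ.comp_snd.abs.ennreal_ofReal.mul hker.aemeasurable)
    _ = ∫⁻ θ in Ioo s t, ENNReal.ofReal |φ θ| *
          ENNReal.ofReal (((θ - s) / (s - r)) ^ α / (α * (θ - r))) := by
        refine setLIntegral_congr_fun measurableSet_Ioo fun θ hθ ↦ ?_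
        simp only [lintegral_const_mul' _ _ ENNReal.ofReal_ne_top,
          lintegral_Ioo_rpow_mul_rpow hα hrs hθ.1.le]

theorem lintegral_mul_fracPotential_Ioo_le (hα : 0 < α) (hδ : δ ∈ Icc 0 α) (hrs : r < s)
    (hφ : AEMeasurable φ (volume.restrict (Ioo s t))) :
    ∫⁻ u in Ioo s t, ENNReal.ofReal ((u - r) ^ (-1 - α)) * fracPotential α φ (Ioo u t) u ≤
      ENNReal.ofReal ((t - s) ^ δ / α * (s - r) ^ (-α)) *
        ∫⁻ θ in Ioo s t, ENNReal.ofReal (|φ θ| * (θ - r) ^ (α - δ - 1)) := by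
  rw [lintegral_mul_fracPotential_Ioo_eq hα hrs hφ,
    ← lintegral_const_mul' _ _ ENNReal.ofReal_ne_top]
  refine setLIntegral_mono' measurableSet_Ioo fun θ hθ ↦ ?_
  have hconst : 0 ≤ (t - s) ^ δ / α * (s - r) ^ (-α) :=
    mul_nonneg (div_nonneg (rpow_nonneg (sub_pos.2 (hθ.1.trans hθ.2)).le _) hα.le)
      (rpow_nonneg (sub_pos.2 hrs).le _)
  rw [← ENNReal.ofReal_mul (abs_nonneg _), ← ENNReal.ofReal_mul hconst, mul_left_comm]
  gcongr
  exact div_rpow_div_le hα hδ hrs hθ.1 hθ.2.le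

theorem lintegral_rpow_mul_le_mul_lintegral (hαδ : 0 ≤ α + δ) (hrs : r < s) (H : ℝ → ℝ≥0∞) :
    ∫⁻ u in Ioo s t, ENNReal.ofReal ((u - r) ^ (-1 - α)) * H u ≤
      ENNReal.ofReal ((s - r) ^ (-α - δ)) *
        ∫⁻ u in Ioo s t, ENNReal.ofReal ((u - r) ^ (δ - 1)) * H u := by
  rw [← lintegral_const_mul' _ _ ENNReal.ofReal_ne_top]
  refine setLIntegral_mono' measurableSet_Ioo fun u hu ↦ ?_
  rw [← mul_assoc, ← ENNReal.ofReal_mul (rpow_nonneg (sub_pos.2 hrs).le _)]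
  gcongr
  exact rpow_neg_one_sub_le_mul_rpow hαδ hrs hu.1.le

end Potential

theorem pointwise_tail_bound_general {T α δ r s t : ℝ} {f φ : ℝ → ℝ} (hα : 0 < α)
    (hδ : δ ∈ Icc 0 α) (hr : 0 ≤ r) (hrs : r < s) (hst : s ≤ t) (htT : t ≤ T)
    (hφ : IntegrableOn φ (Ioo s T))
    (hf : ∀ᵐ u ∂volume.restrict (Ioo s t),
      f u = u ^ α * fracInt T α (fun θ ↦ θ ^ (-α) * φ θ) u) :
    ENNReal.ofReal (r ^ α) *
        ∫⁻ u in Ioo s t, ENNReal.ofReal (|f u| * u ^ (-α) * (u - r) ^ (-1 - α)) ≤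
      ENNReal.ofReal ((t - s) ^ δ / (α * Gamma α) * (s - r) ^ (-α)) *
          (∫⁻ θ in Ioo s t, ENNReal.ofReal (|φ θ| * (θ - r) ^ (α - δ - 1))) +
        ENNReal.ofReal (1 / Gamma α * (s - r) ^ (-α - δ)) *
          ∫⁻ u in Ioo s t, ENNReal.ofReal ((u - r) ^ (δ - 1)) *
            ∫⁻ θ in Ioo t T, ENNReal.ofReal (|φ θ| * (θ - u) ^ (α - 1)) := by
  have hΓ : 0 ≤ 1 / Gamma α := (one_div_pos.2 (Gamma_pos_of_pos hα)).le
  have hφ_near : AEMeasurable φ (volume.restrict (Ioo s t)) :=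
    (hφ.mono_set (Ioo_subset_Ioo_right htT)).aemeasurable
  have hφ_far : AEMeasurable φ (volume.restrict (Ioo t T)) :=
    (hφ.mono_set (Ioo_subset_Ioo_left hst)).aemeasurable
  have hconst : ENNReal.ofReal (1 / Gamma α) * ENNReal.ofReal ((t - s) ^ δ / α * (s - r) ^ (-α)) =
      ENNReal.ofReal ((t - s) ^ δ / (α * Gamma α) * (s - r) ^ (-α)) := by
    rw [← ENNReal.ofReal_mul hΓ]
    congr 1
    field_simp
  refine (ofReal_mul_lintegral_le_lintegral_mul_fracPotential hα hr hrs.le hf).trans ?_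
  rw [← hconst, ENNReal.ofReal_mul hΓ, mul_assoc, mul_assoc, ← mul_add]
  gcongr
  calc ∫⁻ u in Ioo s t, ENNReal.ofReal ((u - r) ^ (-1 - α)) * fracPotential α φ (Ioo u T) u
      ≤ (∫⁻ u in Ioo s t, ENNReal.ofReal ((u - r) ^ (-1 - α)) * fracPotential α φ (Ioo u t) u) +
          ∫⁻ u in Ioo s t, ENNReal.ofReal ((u - r) ^ (-1 - α)) * fracPotential α φ (Ioo t T) u :=
        lintegral_mul_fracPotential_Ioo_le_add (by fun_prop) hφ_far
    _ ≤ _ := add_le_add (lintegral_mul_fracPotential_Ioo_le hα hδ hrs hφ_near)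
        (lintegral_rpow_mul_le_mul_lintegral (add_nonneg hα.le hδ.1) hrs _)

/-- Estimate (4.11.1): for `f ∈ Λ^α_T`, `δ ∈ (0,α)` and `0 ≤ r < s < t ≤ T`,
`r^α ∫_s^t |f(u)| u^{-α} (u-r)^{-1-α} du
  ≤ ((t-s)^δ/(αΓ(α))) (s-r)^{-α} ∫_s^t |φ_f(θ)| (θ-r)^{(α-δ)-1} dθ
    + (1/Γ(α)) (s-r)^{-α-δ} ∫_s^t (u-r)^{δ-1} (∫_t^T |φ_f(θ)| (θ-u)^{α-1} dθ) du`. -/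
theorem pointwise_tail_bound (T α : ℝ) (hT : 0 < T) (hα : α ∈ Set.Ioo (0 : ℝ) (1 / 2))
    (f φf : ℝ → ℝ) (hf : memLambda T α f φf)
    (δ : ℝ) (hδ : δ ∈ Set.Ioo 0 α)
    (r s t : ℝ) (hr : 0 ≤ r) (hrs : r < s) (hst : s < t) (htT : t ≤ T) :
    ENNReal.ofReal (r ^ α) *
        ∫⁻ u in Set.Ioo s t, ENNReal.ofReal (|f u| * u ^ (-α) * (u - r) ^ (-1 - α)) ≤
      ENNReal.ofReal ((t - s) ^ δ / (α * Real.Gamma α) * (s - r) ^ (-α)) *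
          (∫⁻ θ in Set.Ioo s t, ENNReal.ofReal (|φf θ| * (θ - r) ^ ((α - δ) - 1))) +
        ENNReal.ofReal (1 / Real.Gamma α * (s - r) ^ (-α - δ)) *
          ∫⁻ u in Set.Ioo s t, ENNReal.ofReal ((u - r) ^ (δ - 1)) *
            ∫⁻ θ in Set.Ioo t T, ENNReal.ofReal (|φf θ| * (θ - u) ^ (α - 1)) := by
  have hsub : Ioo s T ⊆ Icc 0 T := fun _ hu ↦ ⟨(hr.trans_lt (hrs.trans hu.1)).le, hu.2.le⟩
  exact pointwise_tail_bound_general hα.1 (Ioo_subset_Icc_self hδ) hr hrs hst.le htT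
    (IntegrableOn.mono_set (hf.1.integrable one_le_two) hsub)
    (ae_restrict_of_ae_restrict_of_subset ((Ioo_subset_Ioo_right htT).trans hsub) hf.2)
end

section
/- Let α ∈ (0,1/2), let f ∈ Λ^α_T, let a ∈ L²([0,T]) and set e(t) = exp(∫_0^t a(s) ds). For every n ≥ 1 the function g : [0,T]^n → ℝ, g(t_1,…,t_n) = (∏_{i=1}^n f(t_i)) · e(t_1 ∨ ⋯ ∨ t_n), belongs to the n-fold tensor space of Λ^α_T; that is, there exists Φ ∈ L²([0,T]^n) such that for almost every (t_1,…,t_n) ∈ [0,T]^n, g(t_1,…,t_n) = (∏_{i=1}^n t_i^α) · Γ(α)^{-n} ∫_{t_1}^T ⋯ ∫_{t_n}^T ∏_{i=1}^n (s_i - t_i)^{α-1} · (∏_{i=1}^n s_i^{-α}) · Φ(s_1,…,s_n) ds_n ⋯ ds_1. -/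
/-!
Write `m = maxᵢ tᵢ`. Since `e` is absolutely continuous,
`e(m) = e(T) - ∫ v in 0..T, e'(v) ∏ᵢ 1_{tᵢ < v}`, so everything reduces to the truncations
`f · 1_{[0, v)}`. These stay in `Λ^α_T`: a Stieltjes-type integral computes a balayage kernel that
moves the mass of `φ` beyond `v` onto `(0, v)` without changing the fractional integral at the
points `t < v`. The swept density is bounded in `L²` uniformly in `v`, by the Schur test with
weights `|r - v|^(-1/2)`, whose constants are finite for `|α| < 1/2`. A representative of
`(∏ᵢ f(tᵢ)) e(m)` is thus `e(T) φ^{⊗n} - ∫ v in 0..T, e'(v) φ_v^{⊗n}`, with `φ_v` the representative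
of `f · 1_{[0, v)}`.
-/

open MeasureTheory Real Set

open Function
open scoped ENNReal

section IntegralKernel

variable {X Y V : Type*} [MeasurableSpace X] [MeasurableSpace Y] [MeasurableSpace V]
  {μ : Measure X} {ν : Measure Y} {κ : Measure V}

lemma memLp_two_iff_lintegral_enorm_sq_lt_top {E : Type*} [NormedAddCommGroup E] {g : X → E}
    (hg : AEStronglyMeasurable g μ) : MemLp g 2 μ ↔ ∫⁻ x, ‖g x‖ₑ ^ 2 ∂μ < ∞ := by
  simp [MemLp, hg, eLpNorm_lt_top_iff_lintegral_rpow_enorm_lt_top]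

lemma sq_lintegral_le_lintegral_mul_lintegral {A B h : X → ℝ≥0∞} (hA : AEMeasurable A μ)
    (hB : AEMeasurable B μ) (hh : ∀ᵐ x ∂μ, h x ^ 2 ≤ A x * B x) :
    (∫⁻ x, h x ∂μ) ^ 2 ≤ (∫⁻ x, A x ∂μ) * ∫⁻ x, B x ∂μ := by
  have sq_rpow_half (z : ℝ≥0∞) : (z ^ 2) ^ (1 / 2 : ℝ) = z := by
    rw [← ENNReal.rpow_natCast, ← ENNReal.rpow_mul]; norm_num
  have h_le : ∀ᵐ x ∂μ, h x ≤ A x ^ (1 / 2 : ℝ) * B x ^ (1 / 2 : ℝ) := by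
    filter_upwards [hh] with x hx
    rw [← ENNReal.mul_rpow_of_nonneg _ _ (by norm_num), ← sq_rpow_half (h x)]
    gcongr
  have hölder := (lintegral_mono_ae h_le).trans <|
    ENNReal.lintegral_mul_norm_pow_le hA hB (by norm_num) (by norm_num) (add_halves 1)
  rw [← ENNReal.mul_rpow_of_nonneg _ _ (by norm_num)] at hölder
  calc (∫⁻ x, h x ∂μ) ^ 2
      ≤ (((∫⁻ x, A x ∂μ) * ∫⁻ x, B x ∂μ) ^ (1 / 2 : ℝ)) ^ 2 := by gcongr
    _ = (∫⁻ x, A x ∂μ) * ∫⁻ x, B x ∂μ := by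
      rw [← ENNReal.rpow_natCast, ← ENNReal.rpow_mul]; norm_num

lemma sq_lintegral_mul_le_of_lintegral_mul_le {k q h : Y → ℝ≥0∞} (hk : Measurable k)
    (hq : Measurable q) (hh : Measurable h) (hq₀ : ∀ᵐ y ∂ν, q y ≠ 0) (hq_top : ∀ᵐ y ∂ν, q y ≠ ∞)
    {C : ℝ≥0∞} (hC : ∫⁻ y, k y * q y ∂ν ≤ C) :
    (∫⁻ y, k y * h y ∂ν) ^ 2 ≤ C * ∫⁻ y, k y * (h y ^ 2 * (q y)⁻¹) ∂ν := by
  calc (∫⁻ y, k y * h y ∂ν) ^ 2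
      ≤ (∫⁻ y, k y * q y ∂ν) * ∫⁻ y, k y * (h y ^ 2 * (q y)⁻¹) ∂ν := by
        refine sq_lintegral_le_lintegral_mul_lintegral (by fun_prop) (by fun_prop) ?_
        filter_upwards [hq₀, hq_top] with y hy₀ hy_top
        calc (k y * h y) ^ 2 = k y * k y * h y ^ 2 * (q y * (q y)⁻¹) := by
              rw [ENNReal.mul_inv_cancel hy₀ hy_top]; ring
          _ ≤ k y * q y * (k y * (h y ^ 2 * (q y)⁻¹)) := le_of_eq (by ring)
    _ ≤ C * ∫⁻ y, k y * (h y ^ 2 * (q y)⁻¹) ∂ν := by gcongr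

theorem lintegral_sq_lintegral_mul_le_of_schur [SFinite μ] [SFinite ν] {K : X → Y → ℝ≥0∞}
    (hK : Measurable (uncurry K)) {p : X → ℝ≥0∞} (hp : Measurable p) {q : Y → ℝ≥0∞}
    (hq : Measurable q) (hq₀ : ∀ᵐ y ∂ν, q y ≠ 0) (hq_top : ∀ᵐ y ∂ν, q y ≠ ∞) {A B : ℝ≥0∞}
    (hA : ∀ᵐ x ∂μ, ∫⁻ y, K x y * q y ∂ν ≤ A * p x) (hB : ∀ᵐ y ∂ν, ∫⁻ x, K x y * p x ∂μ ≤ B * q y)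
    {h : Y → ℝ≥0∞} (hh : Measurable h) :
    ∫⁻ x, (∫⁻ y, K x y * h y ∂ν) ^ 2 ∂μ ≤ A * B * ∫⁻ y, h y ^ 2 ∂ν := by
  have cauchy_schwarz : ∀ᵐ x ∂μ, (∫⁻ y, K x y * h y ∂ν) ^ 2 ≤
      A * ∫⁻ y, p x * (K x y * (h y ^ 2 * (q y)⁻¹)) ∂ν := by
    filter_upwards [hA] with x hx
    rw [lintegral_const_mul _ (by fun_prop), ← mul_assoc]
    exact sq_lintegral_mul_le_of_lintegral_mul_le hK.of_uncurry_left hq hh hq₀ hq_top hx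
  have hF : Measurable (uncurry fun x y => p x * (K x y * (h y ^ 2 * (q y)⁻¹))) := by
    unfold uncurry at *; fun_prop
  calc ∫⁻ x, (∫⁻ y, K x y * h y ∂ν) ^ 2 ∂μ
      ≤ ∫⁻ x, A * ∫⁻ y, p x * (K x y * (h y ^ 2 * (q y)⁻¹)) ∂ν ∂μ :=
        lintegral_mono_ae cauchy_schwarz
    _ = A * ∫⁻ y, (∫⁻ x, K x y * p x ∂μ) * (h y ^ 2 * (q y)⁻¹) ∂ν := by
        rw [lintegral_const_mul _ hF.lintegral_prod_right, lintegral_lintegral_swap hF.aemeasurable]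
        congr! 3 with y
        rw [← lintegral_mul_const _ (by fun_prop)]
        congr! 2 with x
        ring
    _ ≤ A * ∫⁻ y, B * h y ^ 2 ∂ν := by
        gcongr 1
        refine lintegral_mono_ae ?_
        filter_upwards [hB, hq₀, hq_top] with y hy hy₀ hy_top
        calc (∫⁻ x, K x y * p x ∂μ) * (h y ^ 2 * (q y)⁻¹)
            ≤ B * q y * (h y ^ 2 * (q y)⁻¹) := by gcongr
          _ = B * h y ^ 2 * (q y * (q y)⁻¹) := by ring
          _ = B * h y ^ 2 := by rw [ENNReal.mul_inv_cancel hy₀ hy_top, mul_one]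
    _ = A * B * ∫⁻ y, h y ^ 2 ∂ν := by rw [lintegral_const_mul _ (by fun_prop), mul_assoc]

lemma integrable_prod_kernel_mul [SFinite μ] [SFinite ν] {K : X → Y → ℝ}
    (hK : Measurable (uncurry K)) {g : Y → ℝ} (hg : AEStronglyMeasurable g ν)
    (hKg : ∫⁻ y, (∫⁻ x, ‖K x y‖ₑ ∂μ) * ‖g y‖ₑ ∂ν < ∞) :
    Integrable (fun p : X × Y => K p.1 p.2 * g p.2) (μ.prod ν) := by
  have h_meas : AEStronglyMeasurable (fun p : X × Y => K p.1 p.2 * g p.2) (μ.prod ν) :=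
    hK.aestronglyMeasurable.mul hg.comp_snd
  refine ⟨h_meas, ?_⟩
  rw [HasFiniteIntegral, lintegral_prod_symm _ h_meas.enorm]
  convert hKg using 3 with y
  simp_rw [enorm_mul]
  exact lintegral_mul_const _ (by fun_prop)

lemma integrable_prod_kernel_mul_of_forall_lintegral_le [SFinite μ] [SFinite ν] {K : X → Y → ℝ}
    (hK : Measurable (uncurry K)) {D : ℝ≥0∞} (hD : D ≠ ∞)
    (hKD : ∀ᵐ y ∂ν, ∫⁻ x, ‖K x y‖ₑ ∂μ ≤ D) {g : Y → ℝ} (hg : Integrable g ν) :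
    Integrable (fun p : X × Y => K p.1 p.2 * g p.2) (μ.prod ν) := by
  refine integrable_prod_kernel_mul hK hg.1 ?_
  calc ∫⁻ y, (∫⁻ x, ‖K x y‖ₑ ∂μ) * ‖g y‖ₑ ∂ν ≤ ∫⁻ y, D * ‖g y‖ₑ ∂ν := by
        refine lintegral_mono_ae (hKD.mono fun y hy => ?_); gcongr
    _ = D * ∫⁻ y, ‖g y‖ₑ ∂ν := lintegral_const_mul' _ _ hD
    _ < ∞ := ENNReal.mul_lt_top hD.lt_top hg.2

lemma ae_integrable_kernel_mul [SFinite μ] [SFinite ν] {K : X → Y → ℝ}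
    (hK : Measurable (uncurry K)) {D : ℝ≥0∞} (hD : D ≠ ∞)
    (hKD : ∀ᵐ y ∂ν, ∫⁻ x, ‖K x y‖ₑ ∂μ ≤ D) {g : Y → ℝ} (hg : Integrable g ν) :
    ∀ᵐ x ∂μ, Integrable (fun y => K x y * g y) ν :=
  (integrable_prod_kernel_mul_of_forall_lintegral_le hK hD hKD hg).prod_right_ae

lemma ae_integral_kernel_mul_integral [SFinite μ] [SFinite ν] [SFinite κ] {K : X → Y → ℝ}
    (hK : Measurable (uncurry K)) {D : ℝ≥0∞} (hD : D ≠ ∞)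
    (hKD : ∀ᵐ y ∂ν, ∫⁻ x, ‖K x y‖ₑ ∂μ ≤ D) {G : Y → V → ℝ}
    (hG : Integrable (uncurry G) (ν.prod κ)) :
    ∀ᵐ x ∂μ, ∫ y, K x y * ∫ v, G y v ∂κ ∂ν = ∫ v, ∫ y, K x y * G y v ∂ν ∂κ := by
  have hK' : Measurable (uncurry fun x (p : Y × V) => K x p.1) :=
    hK.comp (by fun_prop : Measurable fun q : X × Y × V => (q.1, q.2.1))
  have hKD' : ∀ᵐ p ∂(ν.prod κ), ∫⁻ x, ‖K x p.1‖ₑ ∂μ ≤ D :=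
    Measure.quasiMeasurePreserving_fst.ae hKD
  filter_upwards [ae_integrable_kernel_mul hK' hD hKD' hG] with x hx
  simp_rw [← integral_const_mul]
  exact integral_integral_swap hx

lemma memLp_two_integral_mul [SFinite μ] [SFinite κ] {b : V → ℝ} (hb : Integrable b κ)
    {Ψ : X → V → ℝ} (hΨ : Measurable (uncurry Ψ)) {M : ℝ≥0∞} (hM : M ≠ ∞)
    (hΨM : ∀ᵐ v ∂κ, ∫⁻ x, ‖Ψ x v‖ₑ ^ 2 ∂μ ≤ M) :
    MemLp (fun x => ∫ v, Ψ x v * b v ∂κ) 2 μ := by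
  have h_meas : AEStronglyMeasurable (fun p : X × V => Ψ p.1 p.2 * b p.2) (μ.prod κ) :=
    hΨ.aestronglyMeasurable.mul hb.1.comp_snd
  rw [memLp_two_iff_lintegral_enorm_sq_lt_top h_meas.integral_prod_right']
  have h_sq : Measurable (uncurry fun x v => ‖Ψ x v‖ₑ ^ 2) := hΨ.enorm.pow_const 2
  have cauchy_schwarz (x : X) : ‖∫ v, Ψ x v * b v ∂κ‖ₑ ^ 2 ≤
      (∫⁻ v, ‖b v‖ₑ ∂κ) * ∫⁻ v, ‖Ψ x v‖ₑ ^ 2 * ‖b v‖ₑ ∂κ := by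
    refine (pow_le_pow_left' (enorm_integral_le_lintegral_enorm _) 2).trans ?_
    refine sq_lintegral_le_lintegral_mul_lintegral hb.1.enorm ?_ (.of_forall fun v => ?_)
    · exact h_sq.of_uncurry_left.aemeasurable.mul hb.1.enorm
    · exact le_of_eq (by rw [enorm_mul]; ring)
  calc ∫⁻ x, ‖∫ v, Ψ x v * b v ∂κ‖ₑ ^ 2 ∂μ
      ≤ ∫⁻ x, (∫⁻ v, ‖b v‖ₑ ∂κ) * ∫⁻ v, ‖Ψ x v‖ₑ ^ 2 * ‖b v‖ₑ ∂κ ∂μ := lintegral_mono cauchy_schwarz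
    _ = (∫⁻ v, ‖b v‖ₑ ∂κ) * ∫⁻ v, (∫⁻ x, ‖Ψ x v‖ₑ ^ 2 ∂μ) * ‖b v‖ₑ ∂κ := by
        rw [lintegral_const_mul' _ _ hb.2.ne,
          lintegral_lintegral_swap (h_sq.aemeasurable.mul hb.1.enorm.comp_snd)]
        congr! 3 with v
        exact lintegral_mul_const _ h_sq.of_uncurry_right
    _ ≤ (∫⁻ v, ‖b v‖ₑ ∂κ) * ∫⁻ v, M * ‖b v‖ₑ ∂κ := by
        gcongr 1
        refine lintegral_mono_ae (hΨM.mono fun v hv => ?_)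
        gcongr
    _ = (∫⁻ v, ‖b v‖ₑ ∂κ) * (M * ∫⁻ v, ‖b v‖ₑ ∂κ) := by rw [lintegral_const_mul' _ _ hM]
    _ < ∞ := by
        have := hb.2
        rw [HasFiniteIntegral] at this
        finiteness

lemma lintegral_enorm_le_measure_univ_add_lintegral_enorm_sq {E : Type*} [NormedAddCommGroup E]
    (g : X → E) : ∫⁻ x, ‖g x‖ₑ ∂μ ≤ μ univ + ∫⁻ x, ‖g x‖ₑ ^ 2 ∂μ := by
  have le_one_add_sq (z : ℝ≥0∞) : z ≤ 1 + z ^ 2 := by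
    rcases le_total z 1 with hz | hz
    · exact hz.trans le_self_add
    · exact (le_self_pow hz two_ne_zero).trans le_add_self
  calc ∫⁻ x, ‖g x‖ₑ ∂μ ≤ ∫⁻ x, (1 + ‖g x‖ₑ ^ 2) ∂μ := lintegral_mono fun x => le_one_add_sq _
    _ = μ univ + ∫⁻ x, ‖g x‖ₑ ^ 2 ∂μ := by
        rw [lintegral_add_left measurable_const, lintegral_one]

end IntegralKernel

section Pi

lemma lintegral_fin_prod_eq_prod {n : ℕ} {X : Fin n → Type*} [∀ i, MeasurableSpace (X i)]
    {μ : ∀ i, Measure (X i)} [∀ i, SigmaFinite (μ i)] {f : ∀ i, X i → ℝ≥0∞}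
    (hf : ∀ i, Measurable (f i)) :
    ∫⁻ x, ∏ i, f i (x i) ∂Measure.pi μ = ∏ i, ∫⁻ x, f i x ∂μ i := by
  induction n with
  | zero => simp
  | succ n ih =>
    have h_tail : Measurable fun x : ∀ i : Fin n, X i.succ => ∏ i, f i.succ (x i) :=
      Finset.measurable_prod _ fun i _ => (hf _).comp (measurable_pi_apply i)
    calc ∫⁻ x, ∏ i, f i (x i) ∂Measure.pi μ
        = ∫⁻ x : X 0 × (∀ i : Fin n, X i.succ), f 0 x.1 * ∏ i, f i.succ (x.2 i)
            ∂(μ 0).prod (Measure.pi fun i => μ i.succ) := by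
          rw [← (measurePreserving_piFinSuccAbove μ 0).symm.lintegral_comp_emb
            (MeasurableEquiv.measurableEmbedding _)]
          simp only [Fin.prod_univ_succ]
          rfl
      _ = ∏ i, ∫⁻ x, f i x ∂μ i := by
          rw [lintegral_prod_mul (hf 0).aemeasurable h_tail.aemeasurable, ih fun i => hf i.succ,
            Fin.prod_univ_succ]

variable {ι : Type*} [Fintype ι] {X : ι → Type*} [∀ i, MeasurableSpace (X i)]
  {μ : ∀ i, Measure (X i)} [∀ i, SigmaFinite (μ i)]

lemma lintegral_fintype_prod_eq_prod {f : ∀ i, X i → ℝ≥0∞} (hf : ∀ i, Measurable (f i)) :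
    ∫⁻ x, ∏ i, f i (x i) ∂Measure.pi μ = ∏ i, ∫⁻ x, f i x ∂μ i := by
  let σ := (Fintype.equivFin ι).symm
  rw [← (measurePreserving_piCongrLeft μ σ).lintegral_comp_emb
    (MeasurableEquiv.measurableEmbedding _)]
  simp_rw [← σ.prod_comp, MeasurableEquiv.coe_piCongrLeft, Equiv.piCongrLeft_apply_apply]
  exact lintegral_fin_prod_eq_prod fun i => hf (σ i)

lemma lintegral_enorm_prod_pow {f : ∀ i, X i → ℝ} (hf : ∀ i, Measurable (f i)) (k : ℕ) :
    ∫⁻ x, ‖∏ i, f i (x i)‖ₑ ^ k ∂Measure.pi μ = ∏ i, ∫⁻ x, ‖f i x‖ₑ ^ k ∂μ i := by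
  rw [← lintegral_fintype_prod_eq_prod fun i => (hf i).enorm.pow_const k]
  simp [enorm, nnnorm_prod, Finset.prod_pow]

lemma memLp_two_pi_prod {f : ∀ i, X i → ℝ} (hf : ∀ i, Measurable (f i))
    (hf₂ : ∀ i, MemLp (f i) 2 (μ i)) : MemLp (fun x => ∏ i, f i (x i)) 2 (Measure.pi μ) := by
  have h_meas : Measurable fun x : ∀ i, X i => ∏ i, f i (x i) :=
    Finset.measurable_prod _ fun i _ => (hf i).comp (measurable_pi_apply i)
  rw [memLp_two_iff_lintegral_enorm_sq_lt_top h_meas.aestronglyMeasurable,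
    lintegral_enorm_prod_pow hf]
  exact ENNReal.prod_lt_top fun i _ =>
    (memLp_two_iff_lintegral_enorm_sq_lt_top (hf₂ i).1).1 (hf₂ i)

lemma ae_pi_forall {p : ∀ i, X i → Prop} (hp : ∀ i, ∀ᵐ x ∂μ i, p i x) :
    ∀ᵐ x ∂Measure.pi μ, ∀ i, p i (x i) :=
  ae_all_iff.2 fun i => (Measure.quasiMeasurePreserving_eval μ i).ae (hp i)

end Pi

section Stieltjes

/-- The constant `∫₀^∞ t^(β-1) / (t+1) dt`, equal to `π / sin (π β)` for `0 < β < 1` and to `∞`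
otherwise; it normalises the Stieltjes kernel `1 / (t + x)` on powers. -/
noncomputable def stieltjesConst (β : ℝ) : ℝ≥0∞ :=
  ∫⁻ t in Ioi (0 : ℝ), ENNReal.ofReal (t ^ (β - 1) / (t + 1))

variable {α β u v r s x : ℝ}

lemma stieltjesConst_lt_top (h₀ : 0 < β) (h₁ : β < 1) : stieltjesConst β < ∞ := by
  have h_meas (S : Set ℝ) : AEStronglyMeasurable (fun t : ℝ => t ^ (β - 1) / (t + 1))
      (volume.restrict S) := Measurable.aestronglyMeasurable (by fun_prop)
  have h_near : IntegrableOn (fun t : ℝ => t ^ (β - 1) / (t + 1)) (Ioc 0 1) := by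
    have h_rpow : IntegrableOn (fun t : ℝ => t ^ (β - 1)) (Ioc 0 1) :=
      (intervalIntegrable_iff_integrableOn_Ioc_of_le zero_le_one).1
        (intervalIntegral.intervalIntegrable_rpow' (by linarith))
    refine h_rpow.mono' (h_meas _) ?_
    filter_upwards [ae_restrict_mem measurableSet_Ioc] with t ⟨ht, _⟩
    rw [Real.norm_of_nonneg (by positivity)]
    exact div_le_self (by positivity) (by linarith)
  have h_far : IntegrableOn (fun t : ℝ => t ^ (β - 1) / (t + 1)) (Ioi 1) := by
    refine (integrableOn_Ioi_rpow_of_lt (by linarith : β - 1 - 1 < -1) one_pos).mono' (h_meas _) ?_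
    filter_upwards [ae_restrict_mem measurableSet_Ioi] with t (ht : 1 < t)
    have ht₀ : 0 < t := one_pos.trans ht
    rw [Real.norm_of_nonneg (by positivity), Real.rpow_sub_one ht₀.ne' (β - 1)]
    gcongr
    linarith
  rw [stieltjesConst, ← Ioc_union_Ioi_eq_Ioi (zero_le_one' ℝ)]
  exact (h_near.union h_far).lintegral_lt_top

lemma stieltjesConst_pos : 0 < stieltjesConst β := by
  rw [stieltjesConst, setLIntegral_pos_iff (by fun_prop), inter_eq_self_of_subset_right]
  · simp
  · intro t (ht : 0 < t)
    have : 0 < t ^ (β - 1) / (t + 1) := by positivity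
    simpa using this

lemma stieltjesConst_toReal_pos (h₀ : 0 < β) (h₁ : β < 1) : 0 < (stieltjesConst β).toReal :=
  ENNReal.toReal_pos stieltjesConst_pos.ne' (stieltjesConst_lt_top h₀ h₁).ne

lemma lintegral_Ioi_rpow_div_add (hx : 0 < x) :
    ∫⁻ t in Ioi (0 : ℝ), ENNReal.ofReal (t ^ (β - 1) / (t + x)) =
      ENNReal.ofReal (x ^ (β - 1)) * stieltjesConst β := by
  have h_image : (fun t : ℝ => x * t) '' Ioi 0 = Ioi 0 := by
    simpa using image_mul_left_Ioi hx 0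
  have h_change := lintegral_image_eq_lintegral_abs_deriv_mul (s := Ioi 0)
    (f := fun t => x * t) (f' := fun _ => x) measurableSet_Ioi
    (fun t _ => by simpa using ((hasDerivAt_id t).const_mul x).hasDerivWithinAt)
    (mul_right_injective₀ hx.ne').injOn (fun t => ENNReal.ofReal (t ^ (β - 1) / (t + x)))
  rw [h_image] at h_change
  rw [h_change, stieltjesConst, ← lintegral_const_mul _ (by fun_prop)]
  refine setLIntegral_congr_fun measurableSet_Ioi fun t (ht : 0 < t) => ?_
  rw [← ENNReal.ofReal_mul (by positivity), ← ENNReal.ofReal_mul (by positivity), abs_of_pos hx,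
    Real.mul_rpow hx.le ht.le]
  congr 1
  field_simp

lemma lintegral_Ioi_rpow_sub_div_sub (hrv : r < v) :
    ∫⁻ s in Ioi v, ENNReal.ofReal ((s - v) ^ (β - 1) / (s - r)) =
      ENNReal.ofReal ((v - r) ^ (β - 1)) * stieltjesConst β := by
  rw [← lintegral_Ioi_rpow_div_add (sub_pos.2 hrv), ← lintegral_indicator measurableSet_Ioi,
    ← lintegral_indicator measurableSet_Ioi, ← lintegral_sub_right_eq_self (indicator (Ioi 0) _) v]
  congr! 2 with _
  simp [indicator]

lemma lintegral_Iio_rpow_sub_div_sub (hvs : v < s) :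
    ∫⁻ r in Iio v, ENNReal.ofReal ((v - r) ^ (β - 1) / (s - r)) =
      ENNReal.ofReal ((s - v) ^ (β - 1)) * stieltjesConst β := by
  rw [← lintegral_Ioi_rpow_div_add (sub_pos.2 hvs), ← lintegral_indicator measurableSet_Iio,
    ← lintegral_indicator measurableSet_Ioi, ← lintegral_sub_left_eq_self _ v]
  congr! 2 with _
  simp only [indicator, mem_Iio, mem_Ioi, sub_lt_self_iff, sub_sub_cancel]
  ring_nf

lemma lintegral_Ioi_hilbert_mul_rpow_neg_half (hrv : r < v) :
    ∫⁻ s in Ioi v, ENNReal.ofReal ((v - r) ^ (-α) * (s - v) ^ α * (s - r)⁻¹) *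
        ENNReal.ofReal ((s - v) ^ (-(1 / 2) : ℝ)) =
      stieltjesConst (1 / 2 + α) * ENNReal.ofReal ((v - r) ^ (-(1 / 2) : ℝ)) := by
  have hvr := sub_pos.2 hrv
  calc _ = ∫⁻ s in Ioi v, ENNReal.ofReal ((v - r) ^ (-α)) *
        ENNReal.ofReal ((s - v) ^ (1 / 2 + α - 1) / (s - r)) := by
        refine setLIntegral_congr_fun measurableSet_Ioi fun s (hvs : v < s) => ?_
        have hsv := sub_pos.2 hvs
        have hsr := sub_pos.2 (hrv.trans hvs)
        rw [← ENNReal.ofReal_mul (by positivity), ← ENNReal.ofReal_mul (by positivity),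
          show 1 / 2 + α - 1 = α + -(1 / 2) by ring, Real.rpow_add hsv]
        ring_nf
    _ = stieltjesConst (1 / 2 + α) * ENNReal.ofReal ((v - r) ^ (-(1 / 2) : ℝ)) := by
        rw [lintegral_const_mul _ (by fun_prop), lintegral_Ioi_rpow_sub_div_sub hrv, ← mul_assoc,
          ← ENNReal.ofReal_mul (by positivity), ← Real.rpow_add hvr, mul_comm]
        ring_nf

lemma lintegral_Iio_hilbert_mul_rpow_neg_half (hvs : v < s) :
    ∫⁻ r in Iio v, ENNReal.ofReal ((v - r) ^ (-α) * (s - v) ^ α * (s - r)⁻¹) *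
        ENNReal.ofReal ((v - r) ^ (-(1 / 2) : ℝ)) =
      stieltjesConst (1 / 2 - α) * ENNReal.ofReal ((s - v) ^ (-(1 / 2) : ℝ)) := by
  have hsv := sub_pos.2 hvs
  calc _ = ∫⁻ r in Iio v, ENNReal.ofReal ((s - v) ^ α) *
        ENNReal.ofReal ((v - r) ^ (1 / 2 - α - 1) / (s - r)) := by
        refine setLIntegral_congr_fun measurableSet_Iio fun r (hrv : r < v) => ?_
        have hvr := sub_pos.2 hrv
        have hsr := sub_pos.2 (hrv.trans hvs)
        rw [← ENNReal.ofReal_mul (by positivity), ← ENNReal.ofReal_mul (by positivity),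
          show 1 / 2 - α - 1 = -α + -(1 / 2) by ring, Real.rpow_add hvr]
        ring_nf
    _ = stieltjesConst (1 / 2 - α) * ENNReal.ofReal ((s - v) ^ (-(1 / 2) : ℝ)) := by
        rw [lintegral_const_mul _ (by fun_prop), lintegral_Iio_rpow_sub_div_sub hvs, ← mul_assoc,
          ← ENNReal.ofReal_mul (by positivity), ← Real.rpow_add hsv, mul_comm]
        ring_nf

theorem lintegral_sq_lintegral_hilbert_le (α v : ℝ) {h : ℝ → ℝ≥0∞} (hh : Measurable h) :
    ∫⁻ r in Iio v, (∫⁻ s in Ioi v,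
        ENNReal.ofReal ((v - r) ^ (-α) * (s - v) ^ α * (s - r)⁻¹) * h s) ^ 2 ≤
      stieltjesConst (1 / 2 + α) * stieltjesConst (1 / 2 - α) * ∫⁻ s in Ioi v, h s ^ 2 := by
  refine lintegral_sq_lintegral_mul_le_of_schur (by unfold uncurry; fun_prop)
    (p := fun r => ENNReal.ofReal ((v - r) ^ (-(1 / 2) : ℝ))) (by fun_prop)
    (q := fun s => ENNReal.ofReal ((s - v) ^ (-(1 / 2) : ℝ))) (by fun_prop) ?_
    (.of_forall fun _ => ENNReal.ofReal_ne_top) ?_ ?_ hh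
  · filter_upwards [ae_restrict_mem measurableSet_Ioi] with s (hs : v < s)
    exact (ENNReal.ofReal_pos.2 (Real.rpow_pos_of_pos (sub_pos.2 hs) _)).ne'
  · filter_upwards [ae_restrict_mem measurableSet_Iio] with r hr
    exact (lintegral_Ioi_hilbert_mul_rpow_neg_half hr).le
  · filter_upwards [ae_restrict_mem measurableSet_Ioi] with s hs
    exact (lintegral_Iio_hilbert_mul_rpow_neg_half hs).le

lemma image_sub_div_sub_Ioo (huv : u < v) : (fun r => (r - u) / (v - r)) '' Ioo u v = Ioi 0 := by
  have hvu := sub_pos.2 huv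
  ext w
  simp only [mem_image, mem_Ioi, mem_Ioo]
  constructor
  · rintro ⟨r, ⟨hur, hrv⟩, rfl⟩
    exact div_pos (sub_pos.2 hur) (sub_pos.2 hrv)
  · intro hw
    have h_left : (u + w * v) / (1 + w) - u = w * (v - u) / (1 + w) := by field_simp; ring
    have h_right : v - (u + w * v) / (1 + w) = (v - u) / (1 + w) := by field_simp; ring
    refine ⟨(u + w * v) / (1 + w), ⟨sub_pos.1 ?_, sub_pos.1 ?_⟩, ?_⟩
    · rw [h_left]; positivity
    · rw [h_right]; positivity
    · rw [h_left, h_right]; field_simp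

lemma injOn_sub_div_sub_Ioo (huv : u < v) : InjOn (fun r => (r - u) / (v - r)) (Ioo u v) := by
  intro a ha b hb hab
  have h_cross := (div_eq_div_iff (sub_pos.2 ha.2).ne' (sub_pos.2 hb.2).ne').1 hab
  refine sub_eq_zero.1 ((mul_eq_zero.1 ?_).resolve_left (sub_pos.2 huv).ne')
  linear_combination h_cross

lemma lintegral_Ioi_eq_lintegral_Ioo_comp_sub_div_sub (huv : u < v) (g : ℝ → ℝ≥0∞) :
    ∫⁻ w in Ioi 0, g w =
      ∫⁻ r in Ioo u v, ENNReal.ofReal ((v - u) / (v - r) ^ 2) * g ((r - u) / (v - r)) := by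
  have h_deriv : ∀ r ∈ Ioo u v,
      HasDerivWithinAt (fun r => (r - u) / (v - r)) ((v - u) / (v - r) ^ 2) (Ioo u v) r := by
    intro r hr
    convert! (((hasDerivAt_id r).sub_const u).div ((hasDerivAt_id r).const_sub v)
      (sub_pos.2 hr.2).ne').hasDerivWithinAt (s := Ioo u v) using 1
    simp
  rw [← image_sub_div_sub_Ioo huv, lintegral_image_eq_lintegral_abs_deriv_mul measurableSet_Ioo
    h_deriv (injOn_sub_div_sub_Ioo huv)]
  exact setLIntegral_congr_fun measurableSet_Ioo fun r _ => by rw [abs_of_nonneg (by positivity)]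

theorem lintegral_Ioo_rpow_mul_rpow_mul_inv (huv : u < v) (hvs : v < s) :
    ∫⁻ r in Ioo u v, ENNReal.ofReal ((r - u) ^ (α - 1) * (v - r) ^ (-α) * (s - r)⁻¹) =
      stieltjesConst α * ENNReal.ofReal ((s - v) ^ (-α) * (s - u) ^ (α - 1)) := by
  have hvu := sub_pos.2 huv
  have hsv := sub_pos.2 hvs
  have hsu := sub_pos.2 (huv.trans hvs)
  have h_const : ENNReal.ofReal ((s - v) ^ (-α) * (s - u) ^ (α - 1)) =
      ENNReal.ofReal (s - v)⁻¹ * ENNReal.ofReal (((s - u) / (s - v)) ^ (α - 1)) := by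
    rw [← ENNReal.ofReal_mul (by positivity), Real.div_rpow hsu.le hsv.le, Real.rpow_neg hsv.le,
      Real.rpow_sub_one hsv.ne']
    congr 1
    field_simp
  rw [h_const, mul_comm (stieltjesConst α), mul_assoc,
    ← lintegral_Ioi_rpow_div_add (div_pos hsu hsv),
    lintegral_Ioi_eq_lintegral_Ioo_comp_sub_div_sub huv, ← lintegral_const_mul _ (by fun_prop)]
  refine setLIntegral_congr_fun measurableSet_Ioo fun r hr => ?_
  have hru := sub_pos.2 hr.1
  have hvr := sub_pos.2 hr.2
  have h_denom : (r - u) / (v - r) + (s - u) / (s - v) =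
      (v - u) * (s - r) / ((v - r) * (s - v)) := by
    field_simp
    ring
  rw [← ENNReal.ofReal_mul (by positivity), ← ENNReal.ofReal_mul (by positivity), h_denom,
    Real.div_rpow hru.le hvr.le, Real.rpow_neg hvr.le, Real.rpow_sub_one hvr.ne']
  congr 1
  field_simp

end Stieltjes

section FracKernel

/-- The kernel of the weighted right-sided fractional integral `f ↦ t^α I^α_{T-}(s^(-α) f)`, up to
the factor `1 / Γ(α)`. -/
noncomputable def fracKernel (α t s : ℝ) : ℝ :=
  if t < s then t ^ α * ((s - t) ^ (α - 1) * s ^ (-α)) else 0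

variable {T α t s : ℝ}

lemma measurable_fracKernel : Measurable (uncurry (fracKernel α)) :=
  Measurable.ite (measurableSet_lt measurable_fst measurable_snd) (by fun_prop) measurable_const

lemma fracKernel_nonneg (ht : 0 ≤ t) : 0 ≤ fracKernel α t s := by
  unfold fracKernel
  split_ifs with hts
  · have hst := sub_pos.2 hts
    have hs := ht.trans_lt hts
    positivity
  · rfl

lemma rpow_mul_rpow_neg_le_one (hα : 0 ≤ α) (ht : 0 ≤ t) (hts : t < s) :
    t ^ α * s ^ (-α) ≤ 1 := by
  have hs := ht.trans_lt hts
  rw [Real.rpow_neg hs.le, ← div_eq_mul_inv]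
  exact div_le_one_of_le₀ (by gcongr) (by positivity)

lemma lintegral_Ioo_rpow_sub_one (hα : 0 < α) (hs : 0 ≤ s) :
    ∫⁻ t in Ioo 0 s, ENNReal.ofReal ((s - t) ^ (α - 1)) = ENNReal.ofReal (s ^ α / α) := by
  have h_integrable : IntervalIntegrable (fun t => (s - t) ^ (α - 1)) volume 0 s := by
    simpa using ((intervalIntegral.intervalIntegrable_rpow' (a := 0) (b := s)
      (by linarith : -1 < α - 1)).comp_sub_left s).symm
  have h_nonneg : ∀ᵐ t ∂volume.restrict (Ioc 0 s), 0 ≤ (s - t) ^ (α - 1) := by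
    filter_upwards [ae_restrict_mem measurableSet_Ioc] with t ht
    exact Real.rpow_nonneg (sub_nonneg.2 ht.2) _
  rw [restrict_Ioo_eq_restrict_Ioc, ← ofReal_integral_eq_lintegral_ofReal
    ((intervalIntegrable_iff_integrableOn_Ioc_of_le hs).1 h_integrable) h_nonneg,
    ← intervalIntegral.integral_of_le hs,
    intervalIntegral.integral_comp_sub_left (fun t => t ^ (α - 1)),
    integral_rpow (.inl (by linarith))]
  simp [Real.zero_rpow hα.ne']

lemma lintegral_enorm_fracKernel_le (hα : 0 < α) (hs : s ∈ Icc 0 T) :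
    ∫⁻ t in Icc 0 T, ‖fracKernel α t s‖ₑ ≤ ENNReal.ofReal (T ^ α / α) := by
  have h_le : ∀ t ∈ Icc 0 T, ‖fracKernel α t s‖ₑ ≤
      (Iio s).indicator (fun t => ENNReal.ofReal ((s - t) ^ (α - 1))) t := by
    intro t ht
    rw [Real.enorm_of_nonneg (fracKernel_nonneg ht.1)]
    by_cases hts : t < s
    · rw [indicator_of_mem (mem_Iio.2 hts), fracKernel, if_pos hts, mul_left_comm]
      exact ENNReal.ofReal_le_ofReal (mul_le_of_le_one_right (by positivity)
        (rpow_mul_rpow_neg_le_one hα.le ht.1 hts))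
    · simp [fracKernel, hts]
  calc ∫⁻ t in Icc 0 T, ‖fracKernel α t s‖ₑ
      ≤ ∫⁻ t in Iio s ∩ Icc 0 T, ENNReal.ofReal ((s - t) ^ (α - 1)) := by
        rw [← setLIntegral_indicator measurableSet_Iio]
        exact setLIntegral_mono' measurableSet_Icc h_le
    _ ≤ ∫⁻ t in Ico 0 s, ENNReal.ofReal ((s - t) ^ (α - 1)) :=
        lintegral_mono_set fun t ht => ⟨ht.2.1, ht.1⟩
    _ = ENNReal.ofReal (s ^ α / α) := by
        rw [← restrict_Ioo_eq_restrict_Ico, lintegral_Ioo_rpow_sub_one hα hs.1]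
    _ ≤ ENNReal.ofReal (T ^ α / α) := by
        have hs₀ := hs.1
        have hsT := hs.2
        gcongr

lemma ae_lintegral_enorm_fracKernel_le (hα : 0 < α) :
    ∀ᵐ s ∂volume.restrict (Icc 0 T),
      ∫⁻ t in Icc 0 T, ‖fracKernel α t s‖ₑ ≤ ENNReal.ofReal (T ^ α / α) := by
  filter_upwards [ae_restrict_mem measurableSet_Icc] with s hs
  exact lintegral_enorm_fracKernel_le hα hs

lemma restrict_Icc_restrict_Ioi (ht : 0 ≤ t) :
    (volume.restrict (Icc 0 T)).restrict (Ioi t) = volume.restrict (Ioo t T) := by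
  rw [Measure.restrict_restrict measurableSet_Ioi, restrict_Ioo_eq_restrict_Ioc]
  congr 1
  ext s
  simp only [mem_inter_iff, mem_Ioi, mem_Icc, mem_Ioc]
  exact ⟨fun h => ⟨h.1, h.2.2⟩, fun h => ⟨h.1, (ht.trans_lt h.1).le, h.2⟩⟩

lemma integral_fracKernel_mul (ht : 0 ≤ t) (g : ℝ → ℝ) :
    ∫ s in Icc 0 T, fracKernel α t s * g s =
      t ^ α * ∫ s in Ioo t T, (s - t) ^ (α - 1) * s ^ (-α) * g s := by
  rw [← integral_const_mul, ← restrict_Icc_restrict_Ioi ht, ← integral_indicator measurableSet_Ioi]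
  congr! 2 with _
  simp only [fracKernel, indicator, mem_Ioi, ite_mul, zero_mul, mul_assoc]

lemma integral_pi_prod_fracKernel_mul {ι : Type*} [Fintype ι] {t : ι → ℝ} (ht : ∀ i, 0 ≤ t i)
    (g : (ι → ℝ) → ℝ) :
    ∫ s, (∏ i, fracKernel α (t i) (s i)) * g s
        ∂Measure.pi (fun _ : ι => volume.restrict (Icc 0 T)) =
      (∏ i, t i ^ α) * ∫ s in univ.pi (fun i => Ioo (t i) T),
        (∏ i, (s i - t i) ^ (α - 1) * s i ^ (-α)) * g s ∂Measure.pi fun _ : ι => volume := by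
  have h_restrict : (Measure.pi fun _ : ι => volume.restrict (Icc 0 T)).restrict
      (univ.pi fun i => Ioi (t i)) =
      (Measure.pi fun _ : ι => volume).restrict (univ.pi fun i => Ioo (t i) T) := by
    simp only [Measure.restrict_pi_pi, restrict_Icc_restrict_Ioi (ht _)]
  have h_kernel (s : ι → ℝ) : (∏ i, fracKernel α (t i) (s i)) * g s =
      (univ.pi fun i => Ioi (t i)).indicator (fun s => (∏ i, t i ^ α) *
        ((∏ i, (s i - t i) ^ (α - 1) * s i ^ (-α)) * g s)) s := by
    simp only [fracKernel, Finset.prod_ite_zero, indicator, mem_univ_pi, mem_Ioi, Finset.mem_univ,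
      true_implies, ite_mul, zero_mul, ← mul_assoc, ← Finset.prod_mul_distrib]
  simp_rw [h_kernel]
  rw [integral_indicator (.univ_pi fun _ => measurableSet_Ioi), h_restrict, integral_const_mul]

lemma memLambda_iff {f φ : ℝ → ℝ} : memLambda T α f φ ↔
    MemLp φ 2 (volume.restrict (Icc 0 T)) ∧ ∀ᵐ t ∂volume.restrict (Icc 0 T),
      f t = (Real.Gamma α)⁻¹ * ∫ s in Icc 0 T, fracKernel α t s * φ s := by
  refine and_congr_right fun _ => Filter.eventually_congr ?_
  filter_upwards [ae_restrict_mem measurableSet_Icc] with t ht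
  rw [integral_fracKernel_mul ht.1, fracInt, one_div, mul_left_comm]
  congr! 5 with s
  ring

lemma memLambda.exists_measurable {f φ : ℝ → ℝ} (hf : memLambda T α f φ) :
    ∃ ψ, Measurable ψ ∧ memLambda T α f ψ := by
  obtain ⟨hφ, hfφ⟩ := memLambda_iff.1 hf
  obtain ⟨ψ, hψ, hφψ⟩ := hφ.1
  refine ⟨ψ, hψ.measurable, memLambda_iff.2 ⟨hφ.ae_eq hφψ, ?_⟩⟩
  filter_upwards [hfφ] with t ht
  rw [ht, integral_congr_ae (hφψ.mono fun s hs => congrArg (fracKernel α t s * ·) hs)]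

end FracKernel

section Sweep

/-- The density at `r < v` of the balayage onto `(0, v)` of a unit mass at `s > v`: integrating
`fracKernel α t` against it over `r` gives `fracKernel α t s` for every `t < v`. -/
noncomputable def sweepKernel (α v r s : ℝ) : ℝ :=
  if r < v ∧ v < s then
    (stieltjesConst α).toReal⁻¹ *
      (r ^ α * (v - r) ^ (-α) * ((s - v) ^ α * s ^ (-α)) * (s - r)⁻¹)
  else 0

/-- The representative of the truncation `f · 1_{[0, v)}` when `φ` represents `f`: the mass of `φ`
beyond `v` is swept onto `(0, v)`. -/
noncomputable def truncRep (T α : ℝ) (φ : ℝ → ℝ) (v r : ℝ) : ℝ :=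
  (Iio v).indicator φ r + ∫ s in Icc 0 T, sweepKernel α v r s * φ s

variable {T α t v r s : ℝ} {φ : ℝ → ℝ}

lemma measurable_sweepKernel :
    Measurable fun p : (ℝ × ℝ) × ℝ => sweepKernel α p.1.1 p.1.2 p.2 :=
  .ite ((measurableSet_lt measurable_fst.snd measurable_fst.fst).inter
    (measurableSet_lt measurable_fst.fst measurable_snd)) (by fun_prop) measurable_const

lemma measurable_truncRep (hφ : Measurable φ) : Measurable (uncurry (truncRep T α φ)) := by
  refine .add ?_ ?_
  · exact Measurable.ite (measurableSet_lt measurable_snd measurable_fst)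
      (hφ.comp measurable_snd) measurable_const
  · exact ((measurable_sweepKernel.mul (hφ.comp measurable_snd)).stronglyMeasurable
      |>.integral_prod_right').measurable

lemma fracKernel_mul_sweepKernel (ht : 0 ≤ t) (hvs : v < s) :
    fracKernel α t r * sweepKernel α v r s = (Ioo t v).indicator (fun r =>
      (stieltjesConst α).toReal⁻¹ * (t ^ α * (s - v) ^ α * s ^ (-α)) *
        ((r - t) ^ (α - 1) * (v - r) ^ (-α) * (s - r)⁻¹)) r := by
  by_cases hr : r ∈ Ioo t v
  · have h_cancel : r ^ (-α) * r ^ α = 1 := by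
      have hr₀ := ht.trans_lt hr.1
      rw [← Real.rpow_add hr₀, neg_add_cancel, Real.rpow_zero]
    rw [indicator_of_mem hr, fracKernel, if_pos hr.1, sweepKernel, if_pos ⟨hr.2, hvs⟩]
    linear_combination (stieltjesConst α).toReal⁻¹ * (t ^ α * (s - v) ^ α * s ^ (-α)) *
      ((r - t) ^ (α - 1) * (v - r) ^ (-α) * (s - r)⁻¹) * h_cancel
  · rw [indicator_of_notMem hr]
    rcases not_and_or.1 hr with hr | hr
    · simp [fracKernel, hr]
    · simp [sweepKernel, hr]

lemma fracKernel_mul_sweepKernel_nonneg (ht : 0 ≤ t) (hvs : v < s) :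
    0 ≤ fracKernel α t r * sweepKernel α v r s := by
  rw [fracKernel_mul_sweepKernel ht hvs]
  refine indicator_nonneg (fun r hr => ?_) r
  have htr := sub_pos.2 hr.1
  have hrv := sub_pos.2 hr.2
  have hrs := sub_pos.2 (hr.2.trans hvs)
  have hs := ht.trans_lt (hr.1.trans (hr.2.trans hvs))
  positivity

theorem lintegral_fracKernel_mul_sweepKernel (hα₀ : 0 < α) (hα₁ : α < 1) (ht : 0 ≤ t)
    (htv : t < v) (hvT : v ≤ T) (hvs : v < s) :
    ∫⁻ r in Icc 0 T, ENNReal.ofReal (fracKernel α t r * sweepKernel α v r s) =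
      ENNReal.ofReal (fracKernel α t s) := by
  have hsv := sub_pos.2 hvs
  have hs := ht.trans_lt (htv.trans hvs)
  have hC := stieltjesConst_toReal_pos hα₀ hα₁
  have h_inter : Ioo t v ∩ Icc 0 T = Ioo t v :=
    inter_eq_left.2 fun r hr => ⟨ht.trans hr.1.le, hr.2.le.trans hvT⟩
  have h_coeff : 0 ≤ (stieltjesConst α).toReal⁻¹ * (t ^ α * (s - v) ^ α * s ^ (-α)) := by
    positivity
  calc ∫⁻ r in Icc 0 T, ENNReal.ofReal (fracKernel α t r * sweepKernel α v r s)
      = ∫⁻ r in Ioo t v, ENNReal.ofReal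
          ((stieltjesConst α).toReal⁻¹ * (t ^ α * (s - v) ^ α * s ^ (-α)) *
            ((r - t) ^ (α - 1) * (v - r) ^ (-α) * (s - r)⁻¹)) := by
        simp_rw [fracKernel_mul_sweepKernel ht hvs]
        rw [← h_inter, ← setLIntegral_indicator measurableSet_Ioo, h_inter]
        congr! 2 with r
        by_cases hr : r ∈ Ioo t v <;> simp [hr]
    _ = ENNReal.ofReal ((stieltjesConst α).toReal⁻¹ * (t ^ α * (s - v) ^ α * s ^ (-α))) *
          (ENNReal.ofReal (stieltjesConst α).toReal *
            ENNReal.ofReal ((s - v) ^ (-α) * (s - t) ^ (α - 1))) := by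
        simp_rw [ENNReal.ofReal_mul h_coeff]
        rw [lintegral_const_mul _ (by fun_prop), lintegral_Ioo_rpow_mul_rpow_mul_inv htv hvs,
          ENNReal.ofReal_toReal (stieltjesConst_lt_top hα₀ hα₁).ne]
    _ = ENNReal.ofReal (fracKernel α t s) := by
        rw [← ENNReal.ofReal_mul hC.le, ← ENNReal.ofReal_mul h_coeff, fracKernel,
          if_pos (htv.trans hvs), Real.rpow_neg hsv.le]
        congr 1
        field_simp

lemma integral_fracKernel_mul_sweepKernel (hα₀ : 0 < α) (hα₁ : α < 1) (ht : 0 ≤ t)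
    (htv : t < v) (hvT : v ≤ T) (hvs : v < s) :
    ∫ r in Icc 0 T, fracKernel α t r * sweepKernel α v r s = fracKernel α t s := by
  have h_meas : Measurable fun r => fracKernel α t r * sweepKernel α v r s :=
    measurable_fracKernel.of_uncurry_left.mul
      (measurable_sweepKernel.comp (by fun_prop : Measurable fun r => ((v, r), s)))
  rw [integral_eq_lintegral_of_nonneg_ae
    (.of_forall fun r => fracKernel_mul_sweepKernel_nonneg ht hvs) h_meas.aestronglyMeasurable,
    lintegral_fracKernel_mul_sweepKernel hα₀ hα₁ ht htv hvT hvs,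
    ENNReal.toReal_ofReal (fracKernel_nonneg ht)]

lemma integrable_prod_fracKernel_mul_sweepKernel_mul (hα₀ : 0 < α) (hα₁ : α < 1) (ht : 0 ≤ t)
    (htv : t < v) (hvT : v ≤ T) (hφ : AEStronglyMeasurable φ (volume.restrict (Icc 0 T)))
    (hφt : IntegrableOn (fun s => fracKernel α t s * φ s) (Icc 0 T)) :
    Integrable (fun p : ℝ × ℝ => fracKernel α t p.1 * sweepKernel α v p.1 p.2 * φ p.2)
      ((volume.restrict (Icc 0 T)).prod (volume.restrict (Icc 0 T))) := by
  have h_meas : Measurable (uncurry fun r s => fracKernel α t r * sweepKernel α v r s) :=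
    (measurable_fracKernel.of_uncurry_left.comp measurable_fst).mul
      (measurable_sweepKernel.comp (by fun_prop : Measurable fun p : ℝ × ℝ => ((v, p.1), p.2)))
  refine integrable_prod_kernel_mul h_meas hφ (lt_of_le_of_lt ?_ hφt.2)
  refine lintegral_mono fun s => ?_
  rw [enorm_mul]
  gcongr
  by_cases hvs : v < s
  · simp_rw [Real.enorm_of_nonneg (fracKernel_mul_sweepKernel_nonneg ht hvs),
      Real.enorm_of_nonneg (fracKernel_nonneg ht)]
    exact (lintegral_fracKernel_mul_sweepKernel hα₀ hα₁ ht htv hvT hvs).le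
  · simp [sweepKernel, hvs]

lemma integral_fracKernel_mul_integral_sweepKernel_mul (hα₀ : 0 < α) (hα₁ : α < 1) (ht : 0 ≤ t)
    (htv : t < v) (hvT : v ≤ T) (hφ : AEStronglyMeasurable φ (volume.restrict (Icc 0 T)))
    (hφt : IntegrableOn (fun s => fracKernel α t s * φ s) (Icc 0 T)) :
    ∫ r in Icc 0 T, fracKernel α t r * ∫ s in Icc 0 T, sweepKernel α v r s * φ s =
      ∫ s in Icc 0 T, (Iio v)ᶜ.indicator (fun s => fracKernel α t s * φ s) s := by
  simp_rw [← integral_const_mul, ← mul_assoc]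
  rw [integral_integral_swap
    (integrable_prod_fracKernel_mul_sweepKernel_mul hα₀ hα₁ ht htv hvT hφ hφt)]
  refine integral_congr_ae ?_
  filter_upwards [ae_restrict_of_ae (Measure.ae_ne volume v)] with s hsv
  rw [integral_mul_const]
  rcases hsv.lt_or_gt with hsv | hvs
  · simp [sweepKernel, hsv, hsv.not_gt]
  · rw [integral_fracKernel_mul_sweepKernel hα₀ hα₁ ht htv hvT hvs,
      indicator_of_mem (by simpa using hvs.le)]

theorem integral_fracKernel_mul_truncRep (hα₀ : 0 < α) (hα₁ : α < 1) (ht : 0 ≤ t) (hvT : v ≤ T)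
    (hφ : AEStronglyMeasurable φ (volume.restrict (Icc 0 T)))
    (hφt : IntegrableOn (fun s => fracKernel α t s * φ s) (Icc 0 T)) :
    ∫ s in Icc 0 T, fracKernel α t s * truncRep T α φ v s =
      (Ioi t).indicator (fun _ => ∫ s in Icc 0 T, fracKernel α t s * φ s) v := by
  by_cases htv : t < v
  · have h_swept : Integrable
        (fun r => fracKernel α t r * ∫ s in Icc 0 T, sweepKernel α v r s * φ s)
        (volume.restrict (Icc 0 T)) := by
      simpa only [← integral_const_mul, ← mul_assoc] using
        (integrable_prod_fracKernel_mul_sweepKernel_mul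
          hα₀ hα₁ ht htv hvT hφ hφt).integral_prod_left
    simp_rw [truncRep, mul_add, ← indicator_mul_right]
    rw [integral_add (hφt.indicator measurableSet_Iio) h_swept,
      integral_fracKernel_mul_integral_sweepKernel_mul hα₀ hα₁ ht htv hvT hφ hφt,
      ← integral_add (hφt.indicator measurableSet_Iio) (hφt.indicator measurableSet_Iio.compl),
      indicator_of_mem (mem_Ioi.2 htv)]
    simp only [indicator_self_add_compl_apply]
  · rw [indicator_of_notMem (by simpa using htv)]
    refine integral_eq_zero_of_ae (.of_forall fun s => ?_)
    by_cases hts : t < s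
    · have hsv : ¬ s < v := fun hsv => htv (hts.trans hsv)
      simp [truncRep, sweepKernel, hsv]
    · simp [fracKernel, hts]

lemma enorm_sweepKernel_le (hα : 0 ≤ α) (hr : 0 ≤ r) (hrv : r < v) (hvs : v < s) :
    ‖sweepKernel α v r s‖ₑ ≤ ENNReal.ofReal (stieltjesConst α).toReal⁻¹ *
      ENNReal.ofReal ((v - r) ^ (-α) * (s - v) ^ α * (s - r)⁻¹) := by
  have hsr := sub_pos.2 (hrv.trans hvs)
  have hs := hr.trans_lt (hrv.trans hvs)
  rw [sweepKernel, if_pos ⟨hrv, hvs⟩, Real.enorm_of_nonneg (by positivity),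
    ← ENNReal.ofReal_mul (by positivity)]
  gcongr ENNReal.ofReal (_ * ?_)
  calc r ^ α * (v - r) ^ (-α) * ((s - v) ^ α * s ^ (-α)) * (s - r)⁻¹
      = r ^ α * s ^ (-α) * ((v - r) ^ (-α) * (s - v) ^ α * (s - r)⁻¹) := by ring
    _ ≤ (v - r) ^ (-α) * (s - v) ^ α * (s - r)⁻¹ :=
      mul_le_of_le_one_left (by positivity) (rpow_mul_rpow_neg_le_one hα hr (hrv.trans hvs))

lemma enorm_integral_sweepKernel_mul_le (hα : 0 ≤ α) (hr : 0 ≤ r) :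
    ‖∫ s in Icc 0 T, sweepKernel α v r s * φ s‖ₑ ≤
      (Iio v).indicator (fun r => ENNReal.ofReal (stieltjesConst α).toReal⁻¹ *
        ∫⁻ s in Ioi v, ENNReal.ofReal ((v - r) ^ (-α) * (s - v) ^ α * (s - r)⁻¹) *
          (Icc 0 T).indicator (fun s => ‖φ s‖ₑ) s) r := by
  by_cases hrv : r < v
  · rw [indicator_of_mem (mem_Iio.2 hrv), ← lintegral_const_mul' _ _ ENNReal.ofReal_ne_top,
      ← integral_indicator measurableSet_Icc, ← lintegral_indicator measurableSet_Ioi]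
    refine (enorm_integral_le_lintegral_enorm _).trans (lintegral_mono fun s => ?_)
    by_cases hvs : v < s
    · rw [indicator_of_mem (mem_Ioi.2 hvs), enorm_indicator_eq_indicator_enorm]
      by_cases hs : s ∈ Icc 0 T
      · rw [indicator_of_mem hs, indicator_of_mem hs, enorm_mul, ← mul_assoc]
        gcongr
        exact enorm_sweepKernel_le hα hr hrv hvs
      · simp [hs]
    · simp [sweepKernel, hvs]
  · simp [sweepKernel, hrv]

lemma lintegral_enorm_sq_integral_sweepKernel_mul_le (hα : 0 ≤ α) (hφ : Measurable φ) :
    ∫⁻ r in Icc 0 T, ‖∫ s in Icc 0 T, sweepKernel α v r s * φ s‖ₑ ^ 2 ≤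
      ENNReal.ofReal (stieltjesConst α).toReal⁻¹ ^ 2 *
        (stieltjesConst (1 / 2 + α) * stieltjesConst (1 / 2 - α) *
          ∫⁻ s in Icc 0 T, ‖φ s‖ₑ ^ 2) := by
  set h : ℝ → ℝ≥0∞ := (Icc 0 T).indicator fun s => ‖φ s‖ₑ with h_def
  have h_sq : ∫⁻ s in Ioi v, h s ^ 2 ≤ ∫⁻ s in Icc 0 T, ‖φ s‖ₑ ^ 2 := by
    rw [← lintegral_indicator measurableSet_Icc]
    refine (setLIntegral_le_lintegral _ _).trans (lintegral_mono fun s => ?_)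
    by_cases hs : s ∈ Icc 0 T <;> simp [h_def, hs]
  calc ∫⁻ r in Icc 0 T, ‖∫ s in Icc 0 T, sweepKernel α v r s * φ s‖ₑ ^ 2
      ≤ ∫⁻ r in Icc 0 T, (Iio v).indicator (fun r =>
          ENNReal.ofReal (stieltjesConst α).toReal⁻¹ ^ 2 * (∫⁻ s in Ioi v,
            ENNReal.ofReal ((v - r) ^ (-α) * (s - v) ^ α * (s - r)⁻¹) * h s) ^ 2) r := by
        refine setLIntegral_mono' measurableSet_Icc fun r hr => ?_
        refine (pow_le_pow_left' (enorm_integral_sweepKernel_mul_le hα hr.1) 2).trans_eq ?_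
        by_cases hrv : r < v <;> simp [hrv, mul_pow, h_def]
    _ ≤ ∫⁻ r in Iio v, ENNReal.ofReal (stieltjesConst α).toReal⁻¹ ^ 2 * (∫⁻ s in Ioi v,
            ENNReal.ofReal ((v - r) ^ (-α) * (s - v) ^ α * (s - r)⁻¹) * h s) ^ 2 := by
        rw [← lintegral_indicator measurableSet_Iio]
        exact setLIntegral_le_lintegral _ _
    _ ≤ _ := by
        rw [lintegral_const_mul' _ _ (by finiteness)]
        gcongr
        refine (lintegral_sq_lintegral_hilbert_le α v
          (hφ.enorm.indicator measurableSet_Icc)).trans ?_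
        gcongr

theorem exists_forall_lintegral_enorm_truncRep_sq_le (hα : α ∈ Ioo 0 (1 / 2)) (hφ : Measurable φ)
    (hφ₂ : MemLp φ 2 (volume.restrict (Icc 0 T))) :
    ∃ M ≠ ∞, ∀ v, ∫⁻ r in Icc 0 T, ‖truncRep T α φ v r‖ₑ ^ 2 ≤ M := by
  have hφ_top := (memLp_two_iff_lintegral_enorm_sq_lt_top hφ₂.1).1 hφ₂
  have hC₁ := stieltjesConst_lt_top (β := 1 / 2 + α) (by linarith [hα.1]) (by linarith [hα.2])
  have hC₂ := stieltjesConst_lt_top (β := 1 / 2 - α) (by linarith [hα.2]) (by linarith [hα.1])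
  have add_sq_le (a b : ℝ≥0∞) : (a + b) ^ 2 ≤ 2 * (a ^ 2 + b ^ 2) := by
    have := ENNReal.rpow_add_le_mul_rpow_add_rpow a b (p := 2) one_le_two
    norm_num at this
    exact_mod_cast this
  refine ⟨2 * ((∫⁻ r in Icc 0 T, ‖φ r‖ₑ ^ 2) + ENNReal.ofReal (stieltjesConst α).toReal⁻¹ ^ 2 *
    (stieltjesConst (1 / 2 + α) * stieltjesConst (1 / 2 - α) * ∫⁻ s in Icc 0 T, ‖φ s‖ₑ ^ 2)),
    by finiteness, fun v => ?_⟩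
  calc ∫⁻ r in Icc 0 T, ‖truncRep T α φ v r‖ₑ ^ 2
      ≤ ∫⁻ r in Icc 0 T, 2 * (‖φ r‖ₑ ^ 2 +
          ‖∫ s in Icc 0 T, sweepKernel α v r s * φ s‖ₑ ^ 2) := by
        refine lintegral_mono fun r => ?_
        refine (pow_le_pow_left' (enorm_add_le _ _) 2).trans ((add_sq_le _ _).trans ?_)
        gcongr
        exact enorm_indicator_le_enorm_self _ _
    _ = 2 * ((∫⁻ r in Icc 0 T, ‖φ r‖ₑ ^ 2) +
          ∫⁻ r in Icc 0 T, ‖∫ s in Icc 0 T, sweepKernel α v r s * φ s‖ₑ ^ 2) := by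
        rw [lintegral_const_mul' _ _ (by finiteness), lintegral_add_left (by fun_prop)]
    _ ≤ _ := by
        gcongr
        exact lintegral_enorm_sq_integral_sweepKernel_mul_le hα.1.le hφ

end Sweep

section AbsolutelyContinuous

variable {T m : ℝ} {e : ℝ → ℝ}

lemma absolutelyContinuousOnInterval_of_dist_le_mul {X Y : Type*} [PseudoMetricSpace X]
    [PseudoMetricSpace Y] {f : ℝ → X} {g : ℝ → Y} {a b K : ℝ}
    (hf : AbsolutelyContinuousOnInterval f a b)
    (hgf : ∀ x ∈ uIcc a b, ∀ y ∈ uIcc a b, dist (g x) (g y) ≤ K * dist (f x) (f y)) :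
    AbsolutelyContinuousOnInterval g a b := by
  refine squeeze_zero' (.of_forall fun E => Finset.sum_nonneg fun i _ => dist_nonneg) ?_
    (by simpa only [mul_zero] using Filter.Tendsto.const_mul K hf)
  rw [Filter.eventually_inf_principal]
  refine .of_forall fun E hE => ?_
  rw [Finset.mul_sum]
  exact Finset.sum_le_sum fun i hi => hgf _ (hE.1 i hi).1 _ (hE.1 i hi).2

lemma absolutelyContinuousOnInterval_congr {X : Type*} [PseudoMetricSpace X] {f g : ℝ → X}
    {a b : ℝ} (hf : AbsolutelyContinuousOnInterval f a b) (hfg : EqOn f g (uIcc a b)) :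
    AbsolutelyContinuousOnInterval g a b :=
  absolutelyContinuousOnInterval_of_dist_le_mul hf (K := 1) fun x hx y hy => by
    rw [one_mul, hfg hx, hfg hy]

lemma absolutelyContinuousOnInterval_comp_of_contDiff {E F : Type*} [NormedAddCommGroup E]
    [NormedSpace ℝ E] [ProperSpace E] [NormedAddCommGroup F] [NormedSpace ℝ F] {g : E → F}
    {f : ℝ → E} {a b : ℝ} (hg : ContDiff ℝ 1 g) (hf : AbsolutelyContinuousOnInterval f a b) :
    AbsolutelyContinuousOnInterval (g ∘ f) a b := by
  obtain ⟨C, hC⟩ := hf.exists_bound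
  obtain ⟨K, hK⟩ := hg.contDiffOn.exists_lipschitzOnWith (by decide)
    (convex_closedBall (0 : E) C) (isCompact_closedBall 0 C)
  have h_mem (x) (hx : x ∈ uIcc a b) : f x ∈ Metric.closedBall 0 C :=
    mem_closedBall_zero_iff.2 (hC x hx)
  exact absolutelyContinuousOnInterval_of_dist_le_mul hf fun x hx y hy =>
    hK.dist_le_mul _ (h_mem x hx) _ (h_mem y hy)

lemma absolutelyContinuousOnInterval_exp_integral {a : ℝ → ℝ} (hT : 0 ≤ T)
    (ha : IntegrableOn a (Icc 0 T)) :
    AbsolutelyContinuousOnInterval (fun t => Real.exp (∫ s in Ioc (0 : ℝ) t, a s)) 0 T := by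
  have h_interval : IntervalIntegrable a volume 0 T :=
    (intervalIntegrable_iff_integrableOn_Icc_of_le hT).2 ha
  have h_primitive := h_interval.absolutelyContinuousOnInterval_intervalIntegral left_mem_uIcc
  refine absolutelyContinuousOnInterval_congr
    (absolutelyContinuousOnInterval_comp_of_contDiff Real.contDiff_exp h_primitive)
    fun t ht => ?_
  rw [uIcc_of_le hT] at ht
  rw [comp_apply, intervalIntegral.integral_of_le ht.1]

lemma integral_indicator_Ioi_mul_deriv (he : AbsolutelyContinuousOnInterval e 0 T)
    (hm : m ∈ Icc 0 T) (c : ℝ) :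
    ∫ v in Icc 0 T, (Ioi m).indicator (fun _ => c) v * deriv e v = c * (e T - e m) := by
  have he_m : AbsolutelyContinuousOnInterval e m T :=
    he.mono (uIcc_subset_uIcc_right (Icc_subset_uIcc hm))
  rw [← he_m.integral_deriv_eq_sub, intervalIntegral.integral_of_le hm.2,
    ← integral_const_mul, ← restrict_Ioo_eq_restrict_Ioc, ← restrict_Icc_restrict_Ioi hm.1,
    ← integral_indicator measurableSet_Ioi]
  congr! 2 with _
  simp only [indicator, ite_mul, zero_mul]

lemma prod_indicator_Ioi {ι β R : Type*} [Fintype ι] [Nonempty ι] [LinearOrder β]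
    [CommMonoidWithZero R] (t : ι → β) (c : ι → R) (v : β) :
    ∏ i, (Ioi (t i)).indicator (fun _ => c i) v =
      (Ioi (Finset.univ.sup' Finset.univ_nonempty t)).indicator (fun _ => ∏ i, c i) v := by
  simp only [indicator, mem_Ioi, Finset.prod_ite_zero, Finset.sup'_lt_iff]

end AbsolutelyContinuous

section Tensor

variable {ι : Type*} [Fintype ι] {T α : ℝ} {φ : ι → ℝ → ℝ} {e : ℝ → ℝ} {t : ι → ℝ} {v : ℝ}

/-- The representative of `(t i)ᵢ ↦ (∏ i, f i (t i)) * e (maxᵢ t i)` when each `φ i` represents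
`f i`. -/
noncomputable def tensorRep (T α : ℝ) (φ : ι → ℝ → ℝ) (e : ℝ → ℝ) (s : ι → ℝ) : ℝ :=
  (∏ i, φ i (s i)) * e T - ∫ v in Icc 0 T, (∏ i, truncRep T α (φ i) v (s i)) * deriv e v

lemma measurable_prod_fracKernel :
    Measurable (uncurry fun t s : ι → ℝ => ∏ i, fracKernel α (t i) (s i)) :=
  Finset.measurable_prod _ fun i _ => measurable_fracKernel.comp
    (by fun_prop : Measurable fun p : (ι → ℝ) × (ι → ℝ) => (p.1 i, p.2 i))

lemma ae_lintegral_enorm_prod_fracKernel_le (hα : 0 < α) :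
    ∀ᵐ s ∂Measure.pi fun _ : ι => volume.restrict (Icc 0 T),
      ∫⁻ t, ‖∏ i, fracKernel α (t i) (s i)‖ₑ ∂Measure.pi (fun _ : ι => volume.restrict (Icc 0 T)) ≤
        ENNReal.ofReal (T ^ α / α) ^ Fintype.card ι := by
  filter_upwards [ae_pi_forall fun _ : ι => ae_lintegral_enorm_fracKernel_le (T := T) hα] with s hs
  have h_meas (i : ι) : Measurable fun t => fracKernel α t (s i) :=
    measurable_fracKernel.of_uncurry_right
  have h_prod := lintegral_enorm_prod_pow (μ := fun _ : ι => volume.restrict (Icc 0 T)) h_meas 1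
  simp only [pow_one] at h_prod
  rw [h_prod]
  exact Finset.prod_le_pow_card _ _ _ fun i _ => hs i

lemma measurable_prod_truncRep (hφ : ∀ i, Measurable (φ i)) :
    Measurable (uncurry fun (s : ι → ℝ) v => ∏ i, truncRep T α (φ i) v (s i)) :=
  Finset.measurable_prod _ fun i _ => (measurable_truncRep (hφ i)).comp
    (by fun_prop : Measurable fun p : (ι → ℝ) × ℝ => (p.2, p.1 i))

lemma exists_forall_lintegral_enorm_prod_truncRep_sq_le (hα : α ∈ Ioo 0 (1 / 2))
    (hφ : ∀ i, Measurable (φ i)) (hφ₂ : ∀ i, MemLp (φ i) 2 (volume.restrict (Icc 0 T))) :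
    ∃ M ≠ ∞, ∀ v, ∫⁻ s, ‖∏ i, truncRep T α (φ i) v (s i)‖ₑ ^ 2
      ∂Measure.pi (fun _ : ι => volume.restrict (Icc 0 T)) ≤ M := by
  choose M hM hφM using fun i => exists_forall_lintegral_enorm_truncRep_sq_le hα (hφ i) (hφ₂ i)
  refine ⟨∏ i, M i, ENNReal.prod_ne_top fun i _ => hM i, fun v => ?_⟩
  rw [lintegral_enorm_prod_pow (μ := fun _ : ι => volume.restrict (Icc 0 T))
    fun i => (measurable_truncRep (hφ i)).of_uncurry_left]
  exact Finset.prod_le_prod' fun i _ => hφM i v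

lemma integrableOn_deriv (he : AbsolutelyContinuousOnInterval e 0 T) :
    IntegrableOn (deriv e) (Icc 0 T) :=
  integrableOn_Icc_iff_integrableOn_Ioc (by finiteness) |>.2 he.intervalIntegrable_deriv.1

lemma memLp_two_integral_prod_truncRep_mul_deriv (hα : α ∈ Ioo 0 (1 / 2))
    (hφ : ∀ i, Measurable (φ i)) (hφ₂ : ∀ i, MemLp (φ i) 2 (volume.restrict (Icc 0 T)))
    (he : AbsolutelyContinuousOnInterval e 0 T) :
    MemLp (fun s => ∫ v in Icc 0 T, (∏ i, truncRep T α (φ i) v (s i)) * deriv e v) 2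
      (Measure.pi fun _ : ι => volume.restrict (Icc 0 T)) := by
  obtain ⟨M, hM, hφM⟩ := exists_forall_lintegral_enorm_prod_truncRep_sq_le hα hφ hφ₂
  exact memLp_two_integral_mul (integrableOn_deriv he) (measurable_prod_truncRep hφ) hM
    (.of_forall hφM)

lemma memLp_two_tensorRep (hα : α ∈ Ioo 0 (1 / 2)) (hφ : ∀ i, Measurable (φ i))
    (hφ₂ : ∀ i, MemLp (φ i) 2 (volume.restrict (Icc 0 T)))
    (he : AbsolutelyContinuousOnInterval e 0 T) :
    MemLp (tensorRep T α φ e) 2 (Measure.pi fun _ : ι => volume.restrict (Icc 0 T)) :=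
  ((memLp_two_pi_prod hφ hφ₂).mul_const (e T)).sub
    (memLp_two_integral_prod_truncRep_mul_deriv hα hφ hφ₂ he)

lemma integrable_prod_truncRep_mul_deriv (hα : α ∈ Ioo 0 (1 / 2)) (hφ : ∀ i, Measurable (φ i))
    (hφ₂ : ∀ i, MemLp (φ i) 2 (volume.restrict (Icc 0 T)))
    (he : AbsolutelyContinuousOnInterval e 0 T) :
    Integrable (uncurry fun (s : ι → ℝ) v => (∏ i, truncRep T α (φ i) v (s i)) * deriv e v)
      ((Measure.pi fun _ : ι => volume.restrict (Icc 0 T)).prod (volume.restrict (Icc 0 T))) := by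
  obtain ⟨M, hM, hφM⟩ := exists_forall_lintegral_enorm_prod_truncRep_sq_le hα hφ hφ₂
  have h_cube := measure_ne_top (Measure.pi fun _ : ι => volume.restrict (Icc 0 T)) univ
  refine integrable_prod_kernel_mul_of_forall_lintegral_le (measurable_prod_truncRep hφ)
    (ENNReal.add_ne_top.2 ⟨h_cube, hM⟩) (.of_forall fun v => ?_)
    (integrableOn_deriv he)
  exact (lintegral_enorm_le_measure_univ_add_lintegral_enorm_sq _).trans (by gcongr; exact hφM v)

lemma integral_prod_fracKernel_mul_prod (g : ι → ℝ → ℝ) :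
    ∫ s, (∏ i, fracKernel α (t i) (s i)) * ∏ i, g i (s i)
        ∂Measure.pi (fun _ : ι => volume.restrict (Icc 0 T)) =
      ∏ i, ∫ s in Icc 0 T, fracKernel α (t i) s * g i s := by
  simp_rw [← Finset.prod_mul_distrib]
  exact integral_fintype_prod_eq_prod fun i s => fracKernel α (t i) s * g i s

lemma integral_prod_fracKernel_mul_prod_truncRep [Nonempty ι] (hα₀ : 0 < α) (hα₁ : α < 1)
    (ht : ∀ i, 0 ≤ t i) (hvT : v ≤ T)
    (hφ : ∀ i, AEStronglyMeasurable (φ i) (volume.restrict (Icc 0 T)))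
    (hφt : ∀ i, IntegrableOn (fun s => fracKernel α (t i) s * φ i s) (Icc 0 T)) :
    ∫ s, (∏ i, fracKernel α (t i) (s i)) * ∏ i, truncRep T α (φ i) v (s i)
        ∂Measure.pi (fun _ : ι => volume.restrict (Icc 0 T)) =
      (Ioi (Finset.univ.sup' Finset.univ_nonempty t)).indicator
        (fun _ => ∏ i, ∫ s in Icc 0 T, fracKernel α (t i) s * φ i s) v := by
  simp_rw [integral_prod_fracKernel_mul_prod, ← prod_indicator_Ioi,
    integral_fracKernel_mul_truncRep hα₀ hα₁ (ht _) hvT (hφ _) (hφt _)]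

lemma ae_integral_prod_fracKernel_mul_integral_prod_truncRep_mul_deriv [Nonempty ι]
    (hα : α ∈ Ioo 0 (1 / 2)) (hφ : ∀ i, Measurable (φ i))
    (hφ₂ : ∀ i, MemLp (φ i) 2 (volume.restrict (Icc 0 T)))
    (he : AbsolutelyContinuousOnInterval e 0 T) :
    ∀ᵐ t ∂Measure.pi fun _ : ι => volume.restrict (Icc 0 T),
      ∫ s, (∏ i, fracKernel α (t i) (s i)) *
          (∫ v in Icc 0 T, (∏ i, truncRep T α (φ i) v (s i)) * deriv e v)
          ∂Measure.pi (fun _ : ι => volume.restrict (Icc 0 T)) =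
        (∏ i, ∫ s in Icc 0 T, fracKernel α (t i) s * φ i s) *
          (e T - e (Finset.univ.sup' Finset.univ_nonempty t)) := by
  have hα₁ : α < 1 := hα.2.trans (by norm_num)
  filter_upwards [
    ae_pi_forall fun _ : ι => ae_restrict_mem measurableSet_Icc,
    ae_pi_forall fun i => ae_integrable_kernel_mul measurable_fracKernel ENNReal.ofReal_ne_top
      (ae_lintegral_enorm_fracKernel_le hα.1) ((hφ₂ i).integrable one_le_two),
    ae_integral_kernel_mul_integral measurable_prod_fracKernel
      (ENNReal.pow_ne_top ENNReal.ofReal_ne_top) (ae_lintegral_enorm_prod_fracKernel_le hα.1)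
      (integrable_prod_truncRep_mul_deriv hα hφ hφ₂ he)] with t ht hφt h_fubini
  have h_sup : Finset.univ.sup' Finset.univ_nonempty t ∈ Icc 0 T := by
    obtain ⟨i, -, hi⟩ := Finset.exists_mem_eq_sup' Finset.univ_nonempty t
    exact hi ▸ ht i
  rw [h_fubini, ← integral_indicator_Ioi_mul_deriv he h_sup]
  refine setIntegral_congr_fun measurableSet_Icc fun v hv => ?_
  simp_rw [← mul_assoc, integral_mul_const]
  rw [integral_prod_fracKernel_mul_prod_truncRep hα.1 hα₁ (fun i => (ht i).1) hv.2
    (fun i => (hφ₂ i).1) hφt]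

theorem ae_integral_prod_fracKernel_mul_tensorRep [Nonempty ι] (hα : α ∈ Ioo 0 (1 / 2))
    (hφ : ∀ i, Measurable (φ i)) (hφ₂ : ∀ i, MemLp (φ i) 2 (volume.restrict (Icc 0 T)))
    (he : AbsolutelyContinuousOnInterval e 0 T) :
    ∀ᵐ t ∂Measure.pi fun _ : ι => volume.restrict (Icc 0 T),
      ∫ s, (∏ i, fracKernel α (t i) (s i)) * tensorRep T α φ e s
          ∂Measure.pi (fun _ : ι => volume.restrict (Icc 0 T)) =
        (∏ i, ∫ s in Icc 0 T, fracKernel α (t i) s * φ i s) *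
          e (Finset.univ.sup' Finset.univ_nonempty t) := by
  have integrable_of_memLp {g : (ι → ℝ) → ℝ}
      (hg : MemLp g 2 (Measure.pi fun _ : ι => volume.restrict (Icc 0 T))) :=
    ae_integrable_kernel_mul measurable_prod_fracKernel (ENNReal.pow_ne_top ENNReal.ofReal_ne_top)
      (ae_lintegral_enorm_prod_fracKernel_le hα.1) (hg.integrable one_le_two)
  filter_upwards [integrable_of_memLp ((memLp_two_pi_prod hφ hφ₂).mul_const (e T)),
    integrable_of_memLp (memLp_two_integral_prod_truncRep_mul_deriv hα hφ hφ₂ he),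
    ae_integral_prod_fracKernel_mul_integral_prod_truncRep_mul_deriv hα hφ hφ₂ he]
    with t h_int₁ h_int₂ h_trunc
  simp_rw [tensorRep, mul_sub]
  rw [integral_sub h_int₁ h_int₂, h_trunc]
  simp_rw [← mul_assoc, integral_mul_const, integral_prod_fracKernel_mul_prod]
  ring

end Tensor

theorem tensor_memLambda_general {ι : Type*} [Fintype ι] [Nonempty ι] {T α : ℝ}
    (hα : α ∈ Ioo 0 (1 / 2)) {f φ : ι → ℝ → ℝ} (hf : ∀ i, memLambda T α (f i) (φ i))
    {e : ℝ → ℝ} (he : AbsolutelyContinuousOnInterval e 0 T) :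
    ∃ Φ : (ι → ℝ) → ℝ,
      MemLp Φ 2 (Measure.pi fun _ : ι => volume.restrict (Icc 0 T)) ∧
      ∀ᵐ t ∂Measure.pi fun _ : ι => volume.restrict (Icc 0 T),
        (∏ i, f i (t i)) * e (Finset.univ.sup' Finset.univ_nonempty t) =
          (∏ i, t i ^ α) * ((Real.Gamma α)⁻¹ ^ Fintype.card ι *
            ∫ s in univ.pi fun i => Ioo (t i) T,
              (∏ i, (s i - t i) ^ (α - 1) * s i ^ (-α)) * Φ s ∂Measure.pi fun _ => volume) := by
  choose ψ hψ hfψ using fun i => (hf i).exists_measurable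
  have hψ₂ (i) : MemLp (ψ i) 2 (volume.restrict (Icc 0 T)) := (hfψ i).1
  refine ⟨tensorRep T α ψ e, memLp_two_tensorRep hα hψ hψ₂ he, ?_⟩
  filter_upwards [ae_pi_forall fun _ : ι => ae_restrict_mem measurableSet_Icc,
    ae_pi_forall fun i => (memLambda_iff.1 (hfψ i)).2,
    ae_integral_prod_fracKernel_mul_tensorRep hα hψ hψ₂ he] with t ht hft h_tensor
  rw [mul_left_comm, ← integral_pi_prod_fracKernel_mul fun i => (ht i).1, h_tensor, ← mul_assoc,
    ← Finset.card_univ, ← Finset.prod_const, ← Finset.prod_mul_distrib]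
  simp_rw [hft]

/-- Lemma 4.1.1 (qualitative part): for `f ∈ Λ^α_T`, `a ∈ L²([0,T])` and
`e(t) = exp(∫_0^t a)`, the function `(t_1,…,t_n) ↦ (∏ f(t_i)) e(t_1 ∨ ⋯ ∨ t_n)` belongs to
the `n`-fold tensor space of `Λ^α_T`: it equals `(∏ t_i^α) Γ(α)^{-n}` times the
coordinatewise right-sided fractional integral of `(∏ s_i^{-α}) Φ` for some
`Φ ∈ L²([0,T]^n)`. -/
theorem tensor_memLambda (T α : ℝ) (hT : 0 < T) (hα : α ∈ Set.Ioo (0 : ℝ) (1 / 2))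
    (f φf : ℝ → ℝ) (hf : memLambda T α f φf)
    (a : ℝ → ℝ) (ha : MemLp a 2 (volume.restrict (Set.Icc 0 T)))
    (e : ℝ → ℝ) (he : ∀ t, e t = Real.exp (∫ s in Set.Ioc 0 t, a s))
    (n : ℕ) (hn : 0 < n) :
    ∃ Φ : (Fin n → ℝ) → ℝ,
      MemLp Φ 2 (Measure.pi fun _ : Fin n => volume.restrict (Set.Icc 0 T)) ∧
      ∀ᵐ t ∂(Measure.pi fun _ : Fin n => volume.restrict (Set.Icc 0 T)),
        (∏ i, f (t i)) *
            e (Finset.univ.sup' (Finset.univ_nonempty_iff.mpr (Fin.pos_iff_nonempty.mp hn)) t) =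
          (∏ i, t i ^ α) * ((Real.Gamma α)⁻¹ ^ n *
            ∫ s in Set.univ.pi (fun i => Set.Ioo (t i) T),
              (∏ i, (s i - t i) ^ (α - 1) * s i ^ (-α)) * Φ s
              ∂(Measure.pi fun _ : Fin n => volume)) := by
  have : Nonempty (Fin n) := Fin.pos_iff_nonempty.1 hn
  have h_int : IntegrableOn a (Icc 0 T) := ha.integrable one_le_two
  have he_ac := absolutelyContinuousOnInterval_exp_integral hT.le h_int
  rw [← funext he] at he_ac
  simpa only [Fintype.card_fin] using tensor_memLambda_general hα (fun _ : Fin n => hf) he_ac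
end
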